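/- arXiv:1607.03084 — 7 statements merged into one kernel-verified Lean document; each statement's English description precedes it below -/
import Mathlib

section
/- Let n ≥ 1, T ≥ 10 with T ≥ n, let ε = 1/(1600e), and let p be a (1/e)-approximately log-concave probability measure supported on a convex body 𝒦 ⊂ ℝⁿ of diameter at most T, with mean μ(p) and covariance Cov(p). Let r[p] be the Gaussian measure N(μ(p), (ε²/(n·log T))·Cov(p)). Then for every convex, nonnegative, T-Lipschitz function g : ℝⁿ → [0,∞) with g(μ(p)) ≤ 2, one has ∫ g dr[p] ≤ ∫ g dp + 1/T². -/
open MeasureTheory ProbabilityTheory Real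

noncomputable section

/-- A nonnegative function `g` is log-concave if it satisfies the pointwise
multiplicative concavity inequality (equivalently, `g = exp` of a concave
function, with the value `0 = exp (-∞)` allowed). -/
def IsLogConcave {E : Type*} [AddCommMonoid E] [SMul ℝ E] (g : E → ℝ) : Prop :=
  (∀ x, 0 ≤ g x) ∧
    ∀ x y : E, ∀ a b : ℝ, 0 ≤ a → 0 ≤ b → a + b = 1 →
      g x ^ a * g y ^ b ≤ g (a • x + b • y)

/-- A density `p` is `ε`-approximately log-concave if there is a log-concave
function `g` with `ε • g ≤ p ≤ (1/ε) • g` pointwise. -/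
def ApproxLogConcave {E : Type*} [AddCommMonoid E] [SMul ℝ E] (ε : ℝ) (p : E → ℝ) : Prop :=
  ∃ g : E → ℝ, IsLogConcave g ∧ ∀ x, ε * g x ≤ p x ∧ p x ≤ (1 / ε) * g x

/-- Mean (barycenter) of the probability density `p` on `ℝⁿ`. -/
def densMean (n : ℕ) (p : EuclideanSpace ℝ (Fin n) → ℝ) : EuclideanSpace ℝ (Fin n) :=
  ∫ x, p x • x

/-- Covariance matrix of the probability density `p` on `ℝⁿ`. -/
def densCov (n : ℕ) (p : EuclideanSpace ℝ (Fin n) → ℝ) : Matrix (Fin n) (Fin n) ℝ :=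
  Matrix.of fun i j => ∫ x, p x * ((x i - densMean n p i) * (x j - densMean n p j))

/-- The (Mahalanobis-type) norm `‖x‖_A = √(xᵀ A x)` associated with a matrix `A`. -/
def mahal (n : ℕ) (A : Matrix (Fin n) (Fin n) ℝ) (x : EuclideanSpace ℝ (Fin n)) : ℝ :=
  Real.sqrt (∑ i, ∑ j, x i * A i j * x j)

/-- Density of the Gaussian measure `N(μ, S)` on `ℝⁿ`. -/
def gaussPdf (n : ℕ) (μ : EuclideanSpace ℝ (Fin n)) (S : Matrix (Fin n) (Fin n) ℝ)
    (x : EuclideanSpace ℝ (Fin n)) : ℝ :=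
  (2 * π) ^ (-(n : ℝ) / 2) * S.det ^ (-(1 : ℝ) / 2) *
    Real.exp (-(1 / 2) * ∑ i, ∑ j, (x i - μ i) * S⁻¹ i j * (x j - μ j))

open scoped ENNReal Pointwise

/-- The one-dimensional Brunn-Minkowski inequality, with the sumset contained in `C`. -/
lemma volume_add_volume_le_of_add_mem {A B C : Set ℝ} (hA : MeasurableSet A)
    (hB : MeasurableSet B) (hA' : A.Nonempty) (hB' : B.Nonempty)
    (hC : ∀ x ∈ A, ∀ y ∈ B, x + y ∈ C) : volume A + volume B ≤ volume C := by
  have compact_case : ∀ K L : Set ℝ, IsCompact K → IsCompact L → K.Nonempty → L.Nonempty →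
      (∀ x ∈ K, ∀ y ∈ L, x + y ∈ C) → volume K + volume L ≤ volume C := by
    intro K L hK hL hK' hL' hKL
    obtain ⟨k, hk, hkmax⟩ := hK.exists_isGreatest hK'
    obtain ⟨l, hl, hlmin⟩ := hL.exists_isLeast hL'
    have hdisj : AEDisjoint volume ((fun x => x + l) '' K) ((fun y => k + y) '' L) := by
      refine measure_mono_null (t := {k + l}) ?_ (by simp)
      rintro _ ⟨⟨x, hx, rfl⟩, ⟨y, hy, hxy⟩⟩
      have h1 := hkmax hx
      have h2 := hlmin hy
      simp only [Set.mem_singleton_iff] at *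
      linarith
    have hmeas : MeasurableSet ((fun y => k + y) '' L) :=
      (hL.image (by fun_prop)).measurableSet
    calc volume K + volume L
        = volume ((fun x => x + l) '' K) + volume ((fun y => k + y) '' L) := by simp
      _ = volume ((fun x => x + l) '' K ∪ (fun y => k + y) '' L) :=
          (measure_union₀ hmeas.nullMeasurableSet hdisj).symm
      _ ≤ volume C := by
          refine measure_mono ?_
          rintro _ (⟨x, hx, rfl⟩ | ⟨y, hy, rfl⟩)
          · exact hKL x hx l hl
          · exact hKL k hk y hy
  obtain ⟨a₀, ha₀⟩ := hA'
  obtain ⟨b₀, hb₀⟩ := hB'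
  rw [hA.measure_eq_iSup_isCompact, hB.measure_eq_iSup_isCompact]
  simp_rw [iSup_and']
  refine ENNReal.biSup_add_biSup_le' ⟨∅, by simp⟩ ⟨∅, by simp⟩ fun K hK L hL => ?_
  calc volume K + volume L ≤ volume (insert a₀ K) + volume (insert b₀ L) := by
        gcongr <;> exact Set.subset_insert _ _
    _ ≤ volume C := by
        refine compact_case _ _ (hK.2.insert _) (hL.2.insert _) (by simp) (by simp) ?_
        intro x hx y hy
        exact hC x (Set.insert_subset ha₀ hK.1 hx) y (Set.insert_subset hb₀ hL.1 hy)

lemma lintegral_eq_lintegral_Ioo_volume_lt {f : ℝ → ℝ≥0∞} (hf : Measurable f)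
    (hf1 : ∀ x, f x ≤ 1) :
    ∫⁻ x, f x = ∫⁻ t in Set.Ioo (0 : ℝ) 1, volume {x | ENNReal.ofReal t < f x} := by
  have htop : ∀ x, f x ≠ ∞ := fun x => ne_top_of_le_ne_top ENNReal.one_ne_top (hf1 x)
  have hset : ∀ t ∈ Set.Ioi (0 : ℝ),
      {x | t < (f x).toReal} = {x | ENNReal.ofReal t < f x} := by
    intro t ht
    ext x
    exact (ENNReal.ofReal_lt_iff_lt_toReal (le_of_lt ht) (htop x)).symm
  calc ∫⁻ x, f x = ∫⁻ x, ENNReal.ofReal (f x).toReal := by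
        simp_rw [ENNReal.ofReal_toReal (htop _)]
    _ = ∫⁻ t in Set.Ioi (0 : ℝ), volume {x | t < (f x).toReal} :=
        lintegral_eq_lintegral_meas_lt volume (.of_forall fun x => ENNReal.toReal_nonneg)
          hf.ennreal_toReal.aemeasurable
    _ = ∫⁻ t in Set.Ioi (0 : ℝ), volume {x | ENNReal.ofReal t < f x} :=
        setLIntegral_congr_fun measurableSet_Ioi fun t ht => by rw [hset t ht]
    _ = ∫⁻ t in Set.Ioo (0 : ℝ) 1, volume {x | ENNReal.ofReal t < f x} := by
        rw [← Set.Ioo_union_Ici_eq_Ioi zero_lt_one, lintegral_union measurableSet_Ici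
          (Set.disjoint_left.mpr fun t ht ht' => not_lt.mpr ht' ht.2)]
        have hzero : ∫⁻ t in Set.Ici (1 : ℝ), volume {x | ENNReal.ofReal t < f x} = 0 := by
          rw [setLIntegral_congr_fun (g := fun _ => 0) measurableSet_Ici, lintegral_zero]
          intro t ht
          have : {x | ENNReal.ofReal t < f x} = ∅ := by
            ext x
            simpa using (hf1 x).trans (by simpa using ht)
          simp [this]
        rw [hzero, add_zero]

lemma rpow_mul_rpow_le_add {a b : ℝ} (ha : 0 < a) (hb : 0 < b) (hab : a + b = 1)
    (u v : ℝ≥0∞) : u ^ a * v ^ b ≤ ENNReal.ofReal a * u + ENNReal.ofReal b * v := by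
  have hpq : a⁻¹.HolderConjugate b⁻¹ :=
    Real.holderConjugate_iff.mpr ⟨(one_lt_inv₀ ha).mpr (by linarith), by simpa using hab⟩
  have h := ENNReal.young_inequality (u ^ a) (v ^ b) hpq
  rw [ENNReal.rpow_rpow_inv ha.ne', ENNReal.rpow_rpow_inv hb.ne', ENNReal.ofReal_inv_of_pos ha,
    ENNReal.ofReal_inv_of_pos hb, div_eq_mul_inv, div_eq_mul_inv, inv_inv, inv_inv] at h
  rwa [mul_comm u, mul_comm v] at h

lemma prekopa_leindler_of_le_one {a b : ℝ} (ha : 0 < a) (hb : 0 < b) (hab : a + b = 1)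
    {f g h : ℝ → ℝ≥0∞} (hf : Measurable f) (hg : Measurable g) (hh : Measurable h)
    (hf1 : ⨆ x, f x = 1) (hg1 : ⨆ x, g x = 1)
    (hfg : ∀ x y, f x ^ a * g y ^ b ≤ h (a * x + b * y)) :
    (∫⁻ x, f x) ^ a * (∫⁻ x, g x) ^ b ≤ ∫⁻ x, h x := by
  have hmin : Measurable fun x => min (h x) 1 := hh.min measurable_const
  calc (∫⁻ x, f x) ^ a * (∫⁻ x, g x) ^ b
      ≤ ENNReal.ofReal a * (∫⁻ x, f x) + ENNReal.ofReal b * ∫⁻ x, g x :=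
        rpow_mul_rpow_le_add ha hb hab _ _
    _ ≤ ∫⁻ t in Set.Ioo (0 : ℝ) 1, volume {x | ENNReal.ofReal t < min (h x) 1} := by
        rw [lintegral_eq_lintegral_Ioo_volume_lt hf (fun x => hf1 ▸ le_iSup f x),
          lintegral_eq_lintegral_Ioo_volume_lt hg (fun x => hg1 ▸ le_iSup g x)]
        refine (add_le_add (lintegral_const_mul_le _ _) (lintegral_const_mul_le _ _)).trans
          ((le_lintegral_add _ _).trans ?_)
        refine setLIntegral_mono' measurableSet_Ioo fun t ht => ?_
        have htlt : ENNReal.ofReal t < 1 := by simpa using ht.2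
        have hscale : ∀ (c : ℝ) (s : Set ℝ), 0 < c →
            ENNReal.ofReal c * volume s = volume (c • s) := by
          intro c s hc
          simp [Measure.addHaar_smul, abs_of_pos hc]
        rw [hscale a _ ha, hscale b _ hb]
        refine volume_add_volume_le_of_add_mem ((measurableSet_lt measurable_const hf).const_smul₀ a)
          ((measurableSet_lt measurable_const hg).const_smul₀ b) ?_ ?_ ?_
        · exact Set.Nonempty.smul_set (show ∃ x, _ < f x from lt_iSup_iff.mp (htlt.trans_eq hf1.symm))
        · exact Set.Nonempty.smul_set (show ∃ x, _ < g x from lt_iSup_iff.mp (htlt.trans_eq hg1.symm))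
        · rintro _ ⟨x, hx, rfl⟩ _ ⟨y, hy, rfl⟩
          refine lt_min (lt_of_lt_of_le ?_ (hfg x y)) htlt
          have hpos : ENNReal.ofReal t ≠ 0 := by simpa using ht.1
          calc ENNReal.ofReal t = ENNReal.ofReal t ^ a * ENNReal.ofReal t ^ b := by
                rw [← ENNReal.rpow_add _ _ hpos ENNReal.ofReal_ne_top, hab, ENNReal.rpow_one]
            _ < f x ^ a * g y ^ b :=
                ENNReal.mul_lt_mul (ENNReal.rpow_lt_rpow hx ha) (ENNReal.rpow_lt_rpow hy hb)
    _ = ∫⁻ x, min (h x) 1 :=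
        (lintegral_eq_lintegral_Ioo_volume_lt hmin fun x => min_le_right _ _).symm
    _ ≤ ∫⁻ x, h x := lintegral_mono fun x => min_le_left _ _

/-- The one-dimensional Prékopa-Leindler inequality. -/
lemma prekopa_leindler {a b : ℝ} (ha : 0 < a) (hb : 0 < b) (hab : a + b = 1)
    {f g h : ℝ → ℝ≥0∞} (hf : Measurable f) (hg : Measurable g) (hh : Measurable h)
    (hfg : ∀ x y, f x ^ a * g y ^ b ≤ h (a * x + b * y)) :
    (∫⁻ x, f x) ^ a * (∫⁻ x, g x) ^ b ≤ ∫⁻ x, h x := by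
  have bounded_case : ∀ f g : ℝ → ℝ≥0∞, Measurable f → Measurable g →
      ⨆ x, f x ≠ ∞ → ⨆ x, g x ≠ ∞ → (∀ x y, f x ^ a * g y ^ b ≤ h (a * x + b * y)) →
      (∫⁻ x, f x) ^ a * (∫⁻ x, g x) ^ b ≤ ∫⁻ x, h x := by
    intro f g hf hg hftop hgtop hfg
    set M := ⨆ x, f x with hM
    set N := ⨆ x, g x with hN
    rcases eq_or_ne M 0 with hM0 | hM0
    · have : ∀ x, f x = 0 := by simpa using (iSup_eq_bot.mp (hM.symm.trans hM0))
      simp [this, ha]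
    rcases eq_or_ne N 0 with hN0 | hN0
    · have : ∀ x, g x = 0 := by simpa using (iSup_eq_bot.mp (hN.symm.trans hN0))
      simp [this, hb]
    have hc0 : M ^ a * N ^ b ≠ 0 := by
      simp [hM0, hN0, hftop, hgtop]
    have hctop : M ^ a * N ^ b ≠ ∞ :=
      ENNReal.mul_ne_top (ENNReal.rpow_ne_top_of_nonneg ha.le hftop)
        (ENNReal.rpow_ne_top_of_nonneg hb.le hgtop)
    have key := prekopa_leindler_of_le_one (f := fun x => M⁻¹ * f x) (g := fun x => N⁻¹ * g x)
      (h := fun x => (M ^ a * N ^ b)⁻¹ * h x) ha hb hab (hf.const_mul _) (hg.const_mul _)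
      (hh.const_mul _) (by rw [← ENNReal.mul_iSup, ENNReal.inv_mul_cancel hM0 hftop])
      (by rw [← ENNReal.mul_iSup, ENNReal.inv_mul_cancel hN0 hgtop]) ?_
    · rw [lintegral_const_mul _ hf, lintegral_const_mul _ hg, lintegral_const_mul _ hh,
        ENNReal.mul_rpow_of_nonneg _ _ ha.le, ENNReal.mul_rpow_of_nonneg _ _ hb.le,
        mul_mul_mul_comm, ENNReal.inv_rpow, ENNReal.inv_rpow,
        ← ENNReal.mul_inv (by simp [hM0, hftop]) (by simp [hN0, hgtop])] at key
      exact (ENNReal.mul_le_mul_iff_right (ENNReal.inv_ne_zero.mpr hctop)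
        (ENNReal.inv_ne_top.mpr hc0)).mp key
    · intro x y
      rw [ENNReal.mul_rpow_of_nonneg _ _ ha.le, ENNReal.mul_rpow_of_nonneg _ _ hb.le,
        mul_mul_mul_comm, ENNReal.inv_rpow, ENNReal.inv_rpow,
        ← ENNReal.mul_inv (by simp [hM0, hftop]) (by simp [hN0, hgtop])]
      gcongr
      exact hfg x y
  have htrunc : ∀ f : ℝ → ℝ≥0∞, Measurable f →
      ∫⁻ x, f x = ⨆ k : ℕ, ∫⁻ x, min (f x) k := by
    intro f hf
    rw [← lintegral_iSup (fun k => hf.min measurable_const)]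
    · refine lintegral_congr fun x => ?_
      rw [← inf_iSup_eq, ENNReal.iSup_natCast, inf_top_eq]
    · intro i j hij x
      exact min_le_min_left _ (by exact_mod_cast hij)
  have hrpow : ∀ (c : ℝ), 0 < c → ∀ u : ℕ → ℝ≥0∞, (⨆ k, u k) ^ c = ⨆ k, u k ^ c :=
    fun c hc u => (ENNReal.orderIsoRpow c hc).map_iSup u
  rw [htrunc f hf, htrunc g hg, hrpow a ha, hrpow b hb, ENNReal.iSup_mul]
  refine iSup_le fun k => ?_
  rw [ENNReal.mul_iSup]
  refine iSup_le fun l => ?_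
  have hbound : ∀ (u : ℝ → ℝ≥0∞) (k : ℕ), ⨆ x, min (u x) k ≠ ∞ := fun u k =>
    ne_top_of_le_ne_top (ENNReal.natCast_ne_top k) (iSup_le fun x => min_le_right _ _)
  refine bounded_case _ _ (hf.min measurable_const) (hg.min measurable_const) (hbound f k)
    (hbound g l) fun x y => le_trans ?_ (hfg x y)
  gcongr
  · exact min_le_left _ _
  · exact min_le_left _ _

/-- Log-concavity for functions with values in `[0, ∞]`. -/
def ENNLogConcave {E : Type*} [AddCommMonoid E] [SMul ℝ E] (f : E → ℝ≥0∞) : Prop :=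
  ∀ x y : E, ∀ a b : ℝ, 0 < a → 0 < b → a + b = 1 → f x ^ a * f y ^ b ≤ f (a • x + b • y)

lemma ENNLogConcave.lmarginal {ι : Type*} [DecidableEq ι] {f : (ι → ℝ) → ℝ≥0∞}
    (hf : Measurable f) (hlc : ENNLogConcave f) (s : Finset ι) :
    ENNLogConcave (lmarginal (fun _ => volume) s f) := by
  induction s using Finset.induction with
  | empty => simpa using hlc
  | insert i s his ih =>
    intro x y a b ha hb hab
    have hm : ∀ z : ι → ℝ,
        Measurable fun t => MeasureTheory.lmarginal (fun _ => volume) s f (Function.update z i t) :=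
      fun z => (hf.lmarginal _).comp (measurable_update z)
    simp only [lmarginal_insert _ hf his]
    refine prekopa_leindler ha hb hab (hm x) (hm y) (hm _) fun t u => ?_
    refine (ih _ _ a b ha hb hab).trans_eq (congrArg _ ?_)
    ext j
    rcases eq_or_ne j i with rfl | hj
    · simp
    · simp [hj]

lemma ENNLogConcave.exists_marginal {n : ℕ} {H : EuclideanSpace ℝ (Fin n) → ℝ≥0∞}
    (hH : Measurable H) (hlc : ENNLogConcave H) (i₀ : Fin n) {w : EuclideanSpace ℝ (Fin n)}
    (hw : ‖w‖ = 1) (m : EuclideanSpace ℝ (Fin n)) :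
    ∃ F : ℝ → ℝ≥0∞, Measurable F ∧ ENNLogConcave F ∧
      ∀ φ : ℝ → ℝ≥0∞, Measurable φ →
        ∫⁻ y, φ (inner ℝ w (y - m)) * H y = ∫⁻ s, φ s * F s := by
  obtain ⟨B, hB⟩ := Orthonormal.exists_orthonormalBasis_extension_of_card_eq (𝕜 := ℝ)
    (E := EuclideanSpace ℝ (Fin n)) (ι := Fin n) (by simp) (v := fun _ => w) (s := {i₀})
    ⟨fun i => by simpa using hw, fun i j hij => (hij (Subsingleton.elim i j)).elim⟩
  have hBw : B i₀ = w := hB i₀ rfl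
  let Φ : (Fin n → ℝ) → EuclideanSpace ℝ (Fin n) := fun c => m + B.repr.symm (WithLp.toLp 2 c)
  have hΦ : MeasurePreserving Φ :=
    (measurePreserving_add_left volume m).comp
      (B.measurePreserving_repr_symm.comp (PiLp.volume_preserving_toLp (Fin n)))
  have hcoord : ∀ c, inner ℝ w (Φ c - m) = c i₀ := by
    intro c
    simp only [Φ, add_sub_cancel_left]
    rw [← hBw, ← B.repr_apply_apply]
    simp
  have hΦaff : ∀ (x y : Fin n → ℝ) (a b : ℝ), a + b = 1 →
      Φ (a • x + b • y) = a • Φ x + b • Φ y := by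
    intro x y a b hab
    have : m = a • m + b • m := by rw [← add_smul, hab, one_smul]
    simp only [Φ, WithLp.toLp_add, WithLp.toLp_smul, map_add, map_smul, smul_add]
    nth_rewrite 1 [this]
    abel
  have hHΦ : Measurable (H ∘ Φ) := hH.comp hΦ.measurable
  have hlcΦ : ENNLogConcave (H ∘ Φ) := by
    intro x y a b ha hb hab
    simpa [hΦaff x y a b hab] using hlc (Φ x) (Φ y) a b ha hb hab
  let G := MeasureTheory.lmarginal (fun _ => volume) (Finset.univ.erase i₀) (H ∘ Φ)
  have hG : Measurable G := hHΦ.lmarginal _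
  have hGlc : ENNLogConcave G := hlcΦ.lmarginal hHΦ _
  refine ⟨fun s => G (Function.update 0 i₀ s), hG.comp (measurable_update _), ?_, ?_⟩
  · intro x y a b ha hb hab
    refine (hGlc _ _ a b ha hb hab).trans_eq (congrArg _ ?_)
    ext j
    rcases eq_or_ne j i₀ with rfl | hj
    · simp
    · simp [hj]
  · intro φ hφ
    have hmeas : Measurable fun c : Fin n → ℝ => φ (c i₀) * H (Φ c) :=
      (hφ.comp (measurable_pi_apply i₀)).mul hHΦ
    calc ∫⁻ y, φ (inner ℝ w (y - m)) * H y
        = ∫⁻ c, φ (inner ℝ w (Φ c - m)) * H (Φ c) :=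
          (hΦ.lintegral_comp (f := fun y => φ (inner ℝ w (y - m)) * H y)
            ((hφ.comp (by fun_prop)).mul hH)).symm
      _ = ∫⁻ c : Fin n → ℝ, φ (c i₀) * H (Φ c) := by simp_rw [hcoord]
      _ = ∫⁻ s, φ s * G (Function.update 0 i₀ s) := by
          rw [volume_pi, lintegral_eq_lmarginal_univ 0, lmarginal_erase _ hmeas (Finset.mem_univ i₀)]
          refine lintegral_congr fun s => ?_
          have hval : ∀ y, Function.updateFinset (Function.update (0 : Fin n → ℝ) i₀ s)
              (Finset.univ.erase i₀) y i₀ = s := by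
            intro y
            simp [Function.updateFinset]
          simp only [MeasureTheory.lmarginal, hval, G]
          exact lintegral_const_mul _ (hHΦ.comp measurable_updateFinset)

lemma ENNLogConcave.le_exp_decay {F : ℝ → ℝ≥0∞} (hF : ENNLogConcave F) {τ α β x₀ x₁ x : ℝ}
    (hα : 0 < α) (hβ : 0 < β) (hβα : β ≤ α * Real.exp (-1)) (hx₀ : x₀ ∈ Set.Icc (-τ) τ)
    (hx₁ : x₁ ∈ Set.Ioc τ (3 * τ)) (hx : 3 * τ < x) (h₀ : ENNReal.ofReal α ≤ F x₀)
    (h₁ : F x₁ ≤ ENNReal.ofReal β) :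
    F x ≤ ENNReal.ofReal (β * Real.exp (-((x - 3 * τ) / (4 * τ)))) := by
  obtain ⟨h01, h02⟩ := hx₀
  obtain ⟨h11, h12⟩ := hx₁
  have hτ : 0 < τ := by linarith
  have hd : 0 < x - x₀ := by linarith
  set a := (x - x₁) / (x - x₀) with ha_def
  set b := (x₁ - x₀) / (x - x₀) with hb_def
  have ha : 0 < a := div_pos (by linarith) hd
  have hb : 0 < b := div_pos (by linarith) hd
  have hab : a + b = 1 := by rw [ha_def, hb_def]; field_simp; ring
  have hcomb : a • x₀ + b • x = x₁ := by
    rw [ha_def, hb_def, smul_eq_mul, smul_eq_mul]; field_simp; ring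
  have hle : ENNReal.ofReal α ^ a * F x ^ b ≤ ENNReal.ofReal β := by
    have h := hF x₀ x a b ha hb hab
    rw [hcomb] at h
    refine le_trans ?_ (h.trans h₁)
    gcongr
  rcases eq_or_ne (F x) 0 with h0 | h0
  · simp [h0]
  have htop : F x ≠ ∞ := by
    intro htop
    rw [htop, ENNReal.top_rpow_of_pos hb, ENNReal.mul_top] at hle
    · simp at hle
    · simp [hα]
  have hy : 0 < (F x).toReal := ENNReal.toReal_pos h0 htop
  have hreal : α ^ a * (F x).toReal ^ b ≤ β := by
    have h := ENNReal.toReal_mono ENNReal.ofReal_ne_top hle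
    rwa [ENNReal.toReal_mul, ← ENNReal.toReal_rpow, ← ENNReal.toReal_rpow,
      ENNReal.toReal_ofReal hα.le, ENNReal.toReal_ofReal hβ.le] at h
  have hlog : a * Real.log α + b * Real.log (F x).toReal ≤ Real.log β := by
    have h := Real.log_le_log (by positivity) hreal
    rwa [Real.log_mul (by positivity) (by positivity), Real.log_rpow hα, Real.log_rpow hy] at h
  have hlog' : Real.log β ≤ Real.log α - 1 := by
    have h := Real.log_le_log hβ hβα
    rwa [Real.log_mul hα.ne' (by positivity), Real.log_exp] at h
  have hab' : a / b = (x - x₁) / (x₁ - x₀) := by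
    have : x₁ - x₀ ≠ 0 := by linarith
    rw [ha_def, hb_def]; field_simp
  have hratio : (x - 3 * τ) / (4 * τ) ≤ a / b := by
    rw [hab', div_le_div_iff₀ (by linarith) (by linarith)]
    exact mul_le_mul (by linarith) (by linarith) (by linarith) (by linarith)
  have hfinal : Real.log (F x).toReal ≤ Real.log β - a / b := by
    have h : b * Real.log (F x).toReal ≤ b * Real.log β - a := by
      have : a * (Real.log β + 1) ≤ a * Real.log α :=
        mul_le_mul_of_nonneg_left (by linarith) ha.le
      have hb1 : b = 1 - a := by linarith
      rw [hb1] at hlog ⊢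
      linarith
    have h2 : b * (Real.log β - a / b) = b * Real.log β - a := by field_simp
    exact le_of_mul_le_mul_left (h.trans_eq h2.symm) hb
  rw [ENNReal.le_ofReal_iff_toReal_le htop (by positivity)]
  calc (F x).toReal = Real.exp (Real.log (F x).toReal) := (Real.exp_log hy).symm
    _ ≤ Real.exp (Real.log β + -((x - 3 * τ) / (4 * τ))) := Real.exp_le_exp.mpr (by linarith)
    _ = β * Real.exp (-((x - 3 * τ) / (4 * τ))) := by rw [Real.exp_add, Real.exp_log hβ]

lemma lintegral_Ioi_sq_mul_exp_le {τ β : ℝ} (hτ : 0 < τ) (hβ : 0 < β) :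
    ∫⁻ x in Set.Ioi (3 * τ),
        ENNReal.ofReal (x ^ 2) * ENNReal.ofReal (β * Real.exp (-((x - 3 * τ) / (4 * τ))))
      ≤ ENNReal.ofReal (1024 * β * τ ^ 3) := by
  have hneg : -(1 / (8 * τ)) < 0 := by simpa using hτ
  have h_int : IntegrableOn
      (fun x => 128 * τ ^ 2 * β * Real.exp (3 / 8) * Real.exp (-(1 / (8 * τ)) * x))
      (Set.Ioi (3 * τ)) := (integrableOn_exp_mul_Ioi hneg _).const_mul _
  have hval : ∫ x in Set.Ioi (3 * τ),
      128 * τ ^ 2 * β * Real.exp (3 / 8) * Real.exp (-(1 / (8 * τ)) * x)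
        = 1024 * β * τ ^ 3 := by
    rw [integral_const_mul, integral_exp_mul_Ioi hneg,
      show -(1 / (8 * τ)) * (3 * τ) = -(3 / 8) by field_simp, Real.exp_neg]
    field_simp
    ring
  rw [← hval, ofReal_integral_eq_lintegral_ofReal h_int (.of_forall fun x => by positivity)]
  refine setLIntegral_mono' measurableSet_Ioi fun x hx => ?_
  rw [← ENNReal.ofReal_mul (sq_nonneg x)]
  refine ENNReal.ofReal_le_ofReal ?_
  set s := (x - 3 * τ) / τ with hs_def
  have hs : 0 ≤ s := div_nonneg (by have : 3 * τ < x := hx; linarith) hτ.le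
  have hxs : x = τ * (3 + s) := by rw [hs_def]; field_simp; ring
  have hquad : (3 + s) ^ 2 ≤ 128 * Real.exp (s / 8) := by
    have := Real.quadratic_le_exp_of_nonneg (x := s / 8) (by positivity)
    nlinarith
  have he1 : Real.exp (-((x - 3 * τ) / (4 * τ))) = Real.exp (-(s / 8)) * Real.exp (-(s / 8)) := by
    rw [← Real.exp_add]; congr 1; rw [hs_def]; field_simp; ring
  have he2 : Real.exp (3 / 8) * Real.exp (-(1 / (8 * τ)) * x) = Real.exp (-(s / 8)) := by
    rw [← Real.exp_add]; congr 1; rw [hs_def]; field_simp; ring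
  have he3 : Real.exp (s / 8) * Real.exp (-(s / 8)) = 1 := by
    rw [← Real.exp_add]; simp
  calc x ^ 2 * (β * Real.exp (-((x - 3 * τ) / (4 * τ))))
      = (τ ^ 2 * β * (Real.exp (-(s / 8)) * Real.exp (-(s / 8)))) * (3 + s) ^ 2 := by
        rw [he1, hxs]; ring
    _ ≤ (τ ^ 2 * β * (Real.exp (-(s / 8)) * Real.exp (-(s / 8)))) * (128 * Real.exp (s / 8)) := by
        gcongr
    _ = 128 * τ ^ 2 * β * Real.exp (-(s / 8)) * (Real.exp (s / 8) * Real.exp (-(s / 8))) := by ring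
    _ = 128 * τ ^ 2 * β * Real.exp (3 / 8) * Real.exp (-(1 / (8 * τ)) * x) := by
        rw [he3, ← he2]; ring

lemma ENNLogConcave.lintegral_tail_sq_le {F : ℝ → ℝ≥0∞} (hF : ENNLogConcave F)
    (hFm : Measurable F) (hfin : ∫⁻ x, F x ≠ ∞) {τ α β : ℝ} (hτ : 0 < τ) (hα : 0 < α)
    (hβ : 0 < β) (hβα : β ≤ α * Real.exp (-1))
    (hA : ENNReal.ofReal (α * (2 * τ)) ≤ ∫⁻ x in Set.Icc (-τ) τ, F x)
    (hB : ∫⁻ x in Set.Ioc τ (3 * τ), F x ≤ ENNReal.ofReal (β * (2 * τ))) :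
    ∫⁻ x in Set.Ioi (3 * τ), ENNReal.ofReal (x ^ 2) * F x
      ≤ ENNReal.ofReal (1024 * β * τ ^ 3) := by
  have hvA : volume (Set.Icc (-τ) τ) = ENNReal.ofReal (2 * τ) := by
    rw [Real.volume_Icc]; congr 1; ring
  have hvB : volume (Set.Ioc τ (3 * τ)) = ENNReal.ofReal (2 * τ) := by
    rw [Real.volume_Ioc]; congr 1; ring
  have hv0 : ENNReal.ofReal (2 * τ) ≠ 0 := by simpa using hτ
  obtain ⟨x₀, hx₀, h₀⟩ := exists_setLAverage_le (μ := volume) (s := Set.Icc (-τ) τ) (f := F)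
    (hvA ▸ hv0) measurableSet_Icc.nullMeasurableSet
    (ne_top_of_le_ne_top hfin (setLIntegral_le_lintegral _ _))
  obtain ⟨x₁, hx₁, h₁⟩ := exists_le_setLAverage (μ := volume) (s := Set.Ioc τ (3 * τ)) (f := F)
    (hvB ▸ hv0) (by simp) hFm.aemeasurable
  rw [setLAverage_eq, hvA] at h₀
  rw [setLAverage_eq, hvB] at h₁
  have h₀' : ENNReal.ofReal α ≤ F x₀ := by
    refine le_trans ?_ h₀
    rw [ENNReal.le_div_iff_mul_le (.inl hv0) (.inl ENNReal.ofReal_ne_top),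
      ← ENNReal.ofReal_mul hα.le]
    exact hA
  have h₁' : F x₁ ≤ ENNReal.ofReal β := by
    refine h₁.trans ?_
    rw [ENNReal.div_le_iff_le_mul (.inl hv0) (.inl ENNReal.ofReal_ne_top),
      ← ENNReal.ofReal_mul hβ.le]
    exact hB
  refine le_trans ?_ (lintegral_Ioi_sq_mul_exp_le hτ hβ)
  refine setLIntegral_mono' measurableSet_Ioi fun x hx => ?_
  gcongr
  exact hF.le_exp_decay hα hβ hβα hx₀ hx₁ hx h₀' h₁'

lemma ENNLogConcave.lintegral_Ioi_sq_le {Q : Measure ℝ} [IsProbabilityMeasure Q] {F : ℝ → ℝ≥0∞}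
    (hF : ENNLogConcave F) (hFm : Measurable F)
    (hQF : ∀ φ : ℝ → ℝ≥0∞, Measurable φ →
      ∫⁻ s, φ s ∂Q ≤ ENNReal.ofReal (Real.exp 1) * ∫⁻ s, φ s * F s)
    (hFQ : ∀ φ : ℝ → ℝ≥0∞, Measurable φ →
      ∫⁻ s, φ s * F s ≤ ENNReal.ofReal (Real.exp 1) * ∫⁻ s, φ s ∂Q)
    {m : ℝ} (hm : 0 < m) (hQm : ∫⁻ s, ENNReal.ofReal |s| ∂Q ≤ ENNReal.ofReal m) :
    ∫⁻ s in Set.Ioi (66 * m), ENNReal.ofReal (s ^ 2) ∂Q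
      ≤ ENNReal.ofReal (11264 * Real.exp 1 ^ 2 * m ^ 2) := by
  have hQF' : ∀ S : Set ℝ, MeasurableSet S → ∀ φ : ℝ → ℝ≥0∞, Measurable φ →
      ∫⁻ s in S, φ s ∂Q ≤ ENNReal.ofReal (Real.exp 1) * ∫⁻ s in S, φ s * F s := by
    intro S hS φ hφ
    have h := hQF (S.indicator φ) (hφ.indicator hS)
    simp_rw [← Set.indicator_mul_left] at h
    rwa [lintegral_indicator hS, lintegral_indicator hS] at h
  have hFQ' : ∀ S : Set ℝ, MeasurableSet S →
      ∫⁻ s in S, F s ≤ ENNReal.ofReal (Real.exp 1) * Q S := by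
    intro S hS
    have h := hFQ (S.indicator 1) (measurable_one.indicator hS)
    simp_rw [← Set.indicator_mul_left] at h
    rwa [lintegral_indicator hS, lintegral_indicator hS, setLIntegral_congr_fun (g := F) hS
      (fun x _ => by simp), Pi.one_def, setLIntegral_one] at h
  have he : 0 < Real.exp 1 := Real.exp_pos 1
  set τ := 22 * m with hτ_def
  have hτ : 0 < τ := by positivity
  have hmarkov : Q {s | τ ≤ |s|} ≤ ENNReal.ofReal (1 / 22) := by
    have h := mul_meas_ge_le_lintegral (μ := Q) (f := fun s => ENNReal.ofReal |s|)
      (by fun_prop) (ENNReal.ofReal τ)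
    have hset : {s : ℝ | ENNReal.ofReal τ ≤ ENNReal.ofReal |s|} = {s | τ ≤ |s|} := by
      ext s
      simp
    rw [hset] at h
    have h2 : ENNReal.ofReal τ * Q {s | τ ≤ |s|} ≤ ENNReal.ofReal τ * ENNReal.ofReal (1 / 22) := by
      rw [← ENNReal.ofReal_mul hτ.le, show τ * (1 / 22) = m by rw [hτ_def]; ring]
      exact h.trans hQm
    exact (ENNReal.mul_le_mul_iff_right (by simpa using hτ) ENNReal.ofReal_ne_top).mp h2
  have hcompl : Q (Set.Icc (-τ) τ)ᶜ ≤ ENNReal.ofReal (1 / 22) := by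
    refine (measure_mono fun s hs => ?_).trans hmarkov
    by_contra h
    exact hs (abs_le.mp (not_le.mp h).le)
  have hAQ : ENNReal.ofReal (21 / 22) ≤ Q (Set.Icc (-τ) τ) := by
    have h := prob_add_prob_compl (μ := Q) (measurableSet_Icc (a := -τ) (b := τ))
    have h2 : (1 : ℝ≥0∞) ≤ Q (Set.Icc (-τ) τ) + ENNReal.ofReal (1 / 22) := by
      rw [← h]; gcongr
    rw [show (21 / 22 : ℝ) = 1 - 1 / 22 by norm_num, ENNReal.ofReal_sub _ (by norm_num),
      ENNReal.ofReal_one]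
    exact tsub_le_iff_right.mpr h2
  have hA : ENNReal.ofReal (21 / (44 * Real.exp 1 * τ) * (2 * τ)) ≤
      ∫⁻ x in Set.Icc (-τ) τ, F x := by
    have h := hQF' (Set.Icc (-τ) τ) measurableSet_Icc 1 measurable_one
    simp only [Pi.one_apply, one_mul, lintegral_one, Measure.restrict_apply_univ] at h
    have h2 : ENNReal.ofReal (Real.exp 1) *
        ENNReal.ofReal (21 / (44 * Real.exp 1 * τ) * (2 * τ)) ≤
        ENNReal.ofReal (Real.exp 1) * ∫⁻ x in Set.Icc (-τ) τ, F x := by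
      rw [← ENNReal.ofReal_mul he.le, show Real.exp 1 * (21 / (44 * Real.exp 1 * τ) * (2 * τ))
        = 21 / 22 by field_simp; norm_num]
      exact hAQ.trans h
    exact (ENNReal.mul_le_mul_iff_right (by simpa using he) ENNReal.ofReal_ne_top).mp h2
  have hB : ∫⁻ x in Set.Ioc τ (3 * τ), F x ≤ ENNReal.ofReal (Real.exp 1 / (44 * τ) * (2 * τ)) := by
    refine (hFQ' _ measurableSet_Ioc).trans ?_
    rw [show Real.exp 1 / (44 * τ) * (2 * τ) = Real.exp 1 * (1 / 22) by field_simp; norm_num,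
      ENNReal.ofReal_mul he.le]
    gcongr
    refine (measure_mono fun s hs => ?_).trans hmarkov
    exact hs.1.le.trans (le_abs_self s)
  have hfin : ∫⁻ x, F x ≠ ∞ := by
    have h := hFQ' Set.univ MeasurableSet.univ
    rw [setLIntegral_univ, measure_univ, mul_one] at h
    exact ne_top_of_le_ne_top ENNReal.ofReal_ne_top h
  have hβα : Real.exp 1 / (44 * τ) ≤ 21 / (44 * Real.exp 1 * τ) * Real.exp (-1) := by
    have h3 : Real.exp 1 ^ 3 ≤ 21 :=
      (pow_le_pow_left₀ he.le Real.exp_one_lt_d9.le 3).trans (by norm_num)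
    rw [Real.exp_neg, div_mul_eq_mul_div, div_le_div_iff₀ (by positivity) (by positivity)]
    field_simp
    linarith
  have htail := hF.lintegral_tail_sq_le hFm hfin hτ (by positivity) (by positivity) hβα hA hB
  rw [show 66 * m = 3 * τ by rw [hτ_def]; ring]
  calc ∫⁻ s in Set.Ioi (3 * τ), ENNReal.ofReal (s ^ 2) ∂Q
      ≤ ENNReal.ofReal (Real.exp 1) *
          ∫⁻ s in Set.Ioi (3 * τ), ENNReal.ofReal (s ^ 2) * F s :=
        hQF' _ measurableSet_Ioi _ (by fun_prop)
    _ ≤ ENNReal.ofReal (Real.exp 1) *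
          ENNReal.ofReal (1024 * (Real.exp 1 / (44 * τ)) * τ ^ 3) := by gcongr
    _ = ENNReal.ofReal (11264 * Real.exp 1 ^ 2 * m ^ 2) := by
        rw [← ENNReal.ofReal_mul he.le, hτ_def]
        congr 1
        field_simp
        norm_num

/-- Reverse Hölder inequality between the first and the second moment of a probability measure
on `ℝ` that is comparable to a log-concave one. -/
lemma ENNLogConcave.second_moment_le {Q : Measure ℝ} [IsProbabilityMeasure Q] {F : ℝ → ℝ≥0∞}
    (hF : ENNLogConcave F) (hFm : Measurable F)
    (hQF : ∀ φ : ℝ → ℝ≥0∞, Measurable φ →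
      ∫⁻ s, φ s ∂Q ≤ ENNReal.ofReal (Real.exp 1) * ∫⁻ s, φ s * F s)
    (hFQ : ∀ φ : ℝ → ℝ≥0∞, Measurable φ →
      ∫⁻ s, φ s * F s ≤ ENNReal.ofReal (Real.exp 1) * ∫⁻ s, φ s ∂Q)
    {m : ℝ} (hm : 0 < m) (hQm : ∫⁻ s, ENNReal.ofReal |s| ∂Q ≤ ENNReal.ofReal m) :
    ∫⁻ s, ENNReal.ofReal (s ^ 2) ∂Q ≤ ENNReal.ofReal (25600 * Real.exp 1 ^ 2 * m ^ 2) := by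
  have hright := hF.lintegral_Ioi_sq_le hFm hQF hFQ hm hQm
  have hleft : ∫⁻ s in Set.Iio (-(66 * m)), ENNReal.ofReal (s ^ 2) ∂Q
      ≤ ENNReal.ofReal (11264 * Real.exp 1 ^ 2 * m ^ 2) := by
    have : IsProbabilityMeasure (Q.map Neg.neg) :=
      Measure.isProbabilityMeasure_map measurable_neg.aemeasurable
    have hF' : ENNLogConcave fun x => F (-x) := by
      intro x y a b ha hb hab
      have h := hF (-x) (-y) a b ha hb hab
      rwa [smul_neg, smul_neg, ← neg_add] at h
    have hneg : ∀ φ : ℝ → ℝ≥0∞, ∫⁻ s, φ s * F (-s) = ∫⁻ s, φ (-s) * F s := by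
      intro φ
      rw [← lintegral_neg_eq_self (μ := volume)]
      simp
    have h := hF'.lintegral_Ioi_sq_le (Q := Q.map Neg.neg) (hFm.comp measurable_neg)
      (fun φ hφ => by
        rw [lintegral_map hφ measurable_neg, hneg]
        exact hQF _ (hφ.comp measurable_neg))
      (fun φ hφ => by
        rw [lintegral_map hφ measurable_neg, hneg]
        exact hFQ _ (hφ.comp measurable_neg))
      hm (by
        rw [lintegral_map (by fun_prop) measurable_neg]
        simpa using hQm)
    rw [setLIntegral_map measurableSet_Ioi (by fun_prop) measurable_neg] at h
    simpa using h
  have hmid : ∫⁻ s, ENNReal.ofReal (66 * m) * ENNReal.ofReal |s| ∂Q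
      ≤ ENNReal.ofReal (66 * m * m) := by
    rw [lintegral_const_mul _ (by fun_prop), ENNReal.ofReal_mul (p := 66 * m) (by positivity)]
    gcongr
  have hpt : ∀ s : ℝ, ENNReal.ofReal (s ^ 2) ≤ ENNReal.ofReal (66 * m) * ENNReal.ofReal |s| +
      ((Set.Ioi (66 * m)).indicator (fun s => ENNReal.ofReal (s ^ 2)) s +
        (Set.Iio (-(66 * m))).indicator (fun s => ENNReal.ofReal (s ^ 2)) s) := by
    intro s
    by_cases h1 : 66 * m < s
    · rw [Set.indicator_of_mem (Set.mem_Ioi.mpr h1)]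
      exact le_add_left le_self_add
    by_cases h2 : s < -(66 * m)
    · rw [Set.indicator_of_mem (s := Set.Iio _) (Set.mem_Iio.mpr h2)]
      exact le_add_left le_add_self
    · refine le_add_right ?_
      rw [← ENNReal.ofReal_mul (by positivity)]
      refine ENNReal.ofReal_le_ofReal ?_
      have : |s| ≤ 66 * m := abs_le.mpr ⟨not_lt.mp h2, not_lt.mp h1⟩
      calc s ^ 2 = |s| * |s| := by rw [← sq, sq_abs]
        _ ≤ 66 * m * |s| := by gcongr
  calc ∫⁻ s, ENNReal.ofReal (s ^ 2) ∂Q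
      ≤ ∫⁻ s, (ENNReal.ofReal (66 * m) * ENNReal.ofReal |s| +
        ((Set.Ioi (66 * m)).indicator (fun s => ENNReal.ofReal (s ^ 2)) s +
        (Set.Iio (-(66 * m))).indicator (fun s => ENNReal.ofReal (s ^ 2)) s)) ∂Q :=
        lintegral_mono hpt
    _ ≤ ENNReal.ofReal (66 * m * m) + (ENNReal.ofReal (11264 * Real.exp 1 ^ 2 * m ^ 2) +
          ENNReal.ofReal (11264 * Real.exp 1 ^ 2 * m ^ 2)) := by
        rw [lintegral_add_left (by fun_prop), lintegral_add_left
          (Measurable.indicator (by fun_prop) measurableSet_Ioi),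
          lintegral_indicator measurableSet_Ioi, lintegral_indicator measurableSet_Iio]
        gcongr
    _ ≤ ENNReal.ofReal (25600 * Real.exp 1 ^ 2 * m ^ 2) := by
        rw [← ENNReal.ofReal_add (by positivity) (by positivity),
          ← ENNReal.ofReal_add (by positivity) (by positivity)]
        refine ENNReal.ofReal_le_ofReal ?_
        have : 1 ≤ Real.exp 1 ^ 2 := one_le_pow₀ (Real.one_le_exp zero_le_one)
        nlinarith [mul_le_mul_of_nonneg_left this (sq_nonneg m)]

/-- A log-concave function agrees almost everywhere with a Borel measurable one below it. -/
lemma IsLogConcave.exists_measurable {n : ℕ} {f : EuclideanSpace ℝ (Fin n) → ℝ}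
    (hf : IsLogConcave f) :
    ∃ H : EuclideanSpace ℝ (Fin n) → ℝ≥0∞, Measurable H ∧ ENNLogConcave H ∧
      (∀ x, H x ≤ ENNReal.ofReal (f x)) ∧ ∀ᵐ x, ENNReal.ofReal (f x) = H x := by
  obtain ⟨hf0, hflc⟩ := hf
  set D : Set (EuclideanSpace ℝ (Fin n)) := {x | 0 < f x} with hD
  have hconc : ConcaveOn ℝ D fun x => Real.log (f x) := by
    refine ⟨fun x hx y hy a b ha hb hab => ?_, fun x hx y hy a b ha hb hab => ?_⟩
    · exact lt_of_lt_of_le (mul_pos (Real.rpow_pos_of_pos hx a) (Real.rpow_pos_of_pos hy b))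
        (hflc x y a b ha hb hab)
    · have hx' : 0 < f x := hx
      have hy' : 0 < f y := hy
      have h := Real.log_le_log (by positivity) (hflc x y a b ha hb hab)
      rwa [Real.log_mul (by positivity) (by positivity), Real.log_rpow hx',
        Real.log_rpow hy'] at h
  have hcont : ContinuousOn f (interior D) := by
    refine (Real.continuous_exp.comp_continuousOn hconc.continuousOn_interior).congr fun x hx => ?_
    exact (Real.exp_log (show 0 < f x from (interior_subset hx : x ∈ D))).symm
  have hopen : IsOpen (interior D) := isOpen_interior
  refine ⟨(interior D).indicator fun x => ENNReal.ofReal (f x), ?_, ?_, ?_, ?_⟩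
  · have hc : ContinuousOn (fun x => ENNReal.ofReal (f x)) (interior D) :=
      ENNReal.continuous_ofReal.comp_continuousOn hcont
    refine measurable_of_restrict_of_restrict_compl hopen.measurableSet ?_ ?_
    · convert hc.domRestrict.measurable using 1
      exact funext fun x => Set.indicator_of_mem x.2 _
    · convert (measurable_const : Measurable fun _ : ↥(interior D)ᶜ => (0 : ℝ≥0∞)) using 1
      exact funext fun x => Set.indicator_of_notMem x.2 _
  · intro x y a b ha hb hab
    by_cases hx : x ∈ interior D
    · by_cases hy : y ∈ interior D
      · have hxy : a • x + b • y ∈ interior D := hconc.1.interior hx hy ha.le hb.le hab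
        rw [Set.indicator_of_mem hx, Set.indicator_of_mem hy, Set.indicator_of_mem hxy,
          ENNReal.ofReal_rpow_of_nonneg (hf0 x) ha.le, ENNReal.ofReal_rpow_of_nonneg (hf0 y) hb.le,
          ← ENNReal.ofReal_mul (Real.rpow_nonneg (hf0 x) a)]
        exact ENNReal.ofReal_le_ofReal (hflc x y a b ha.le hb.le hab)
      · simp [Set.indicator_of_notMem hy, hb]
    · simp [Set.indicator_of_notMem hx, ha]
  · exact fun x => Set.indicator_le_self _ _ x
  · have hnull : ∀ᵐ x, x ∉ frontier D := by
      rw [ae_iff]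
      simpa using hconc.1.addHaar_frontier volume
    filter_upwards [hnull] with x hx
    by_cases hxi : x ∈ interior D
    · rw [Set.indicator_of_mem hxi]
    · rw [Set.indicator_of_notMem hxi]
      have hxD : x ∉ D := fun h => hx ⟨subset_closure h, hxi⟩
      exact ENNReal.ofReal_of_nonpos (not_lt.mp hxD)

/-- Probability densities with compact support. -/
structure IsCompactDensity {n : ℕ} (K : Set (EuclideanSpace ℝ (Fin n)))
    (p : EuclideanSpace ℝ (Fin n) → ℝ) : Prop where
  isCompact : IsCompact K
  nonneg : ∀ x, 0 ≤ p x
  integral_eq_one : ∫ x, p x = 1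
  eq_zero : ∀ x, x ∉ K → p x = 0

namespace IsCompactDensity

variable {n : ℕ} {K : Set (EuclideanSpace ℝ (Fin n))} {p : EuclideanSpace ℝ (Fin n) → ℝ}

lemma integrable (h : IsCompactDensity K p) : Integrable p := by
  by_contra hp
  have := h.integral_eq_one
  rw [integral_undef hp] at this
  exact zero_ne_one this

lemma integrable_smul {F : Type*} [NormedAddCommGroup F] [NormedSpace ℝ F]
    [SecondCountableTopology F]
    (h : IsCompactDensity K p) {φ : EuclideanSpace ℝ (Fin n) → F} (hφ : Continuous φ) :
    Integrable fun x => p x • φ x := by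
  obtain ⟨C, hC⟩ := h.isCompact.exists_bound_of_continuousOn hφ.continuousOn
  refine (h.integrable.mul_const C).mono'
    (h.integrable.aestronglyMeasurable.smul hφ.aestronglyMeasurable) (.of_forall fun x => ?_)
  rw [norm_smul, Real.norm_of_nonneg (h.nonneg x)]
  by_cases hx : x ∈ K
  · exact mul_le_mul_of_nonneg_left (hC x hx) (h.nonneg x)
  · simp [h.eq_zero x hx]

lemma integrable_mul (h : IsCompactDensity K p) {φ : EuclideanSpace ℝ (Fin n) → ℝ}
    (hφ : Continuous φ) : Integrable fun x => φ x * p x := by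
  simpa only [smul_eq_mul, mul_comm] using h.integrable_smul hφ

lemma lintegral_withDensity (h : IsCompactDensity K p) {φ : EuclideanSpace ℝ (Fin n) → ℝ}
    (hφ : Continuous φ) (hφ0 : ∀ x, 0 ≤ φ x) :
    ∫⁻ x, ENNReal.ofReal (φ x) ∂(volume.withDensity fun x => ENNReal.ofReal (p x))
      = ENNReal.ofReal (∫ x, φ x * p x) := by
  rw [lintegral_withDensity_eq_lintegral_mul₀ h.integrable.aemeasurable.ennreal_ofReal
    (hφ.measurable.ennreal_ofReal.aemeasurable), ofReal_integral_eq_lintegral_ofReal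
      (h.integrable_mul hφ) (.of_forall fun x => mul_nonneg (hφ0 x) (h.nonneg x))]
  refine lintegral_congr fun x => ?_
  rw [Pi.mul_apply, mul_comm, ENNReal.ofReal_mul (hφ0 x)]

lemma inner_sq_le_of_norm_eq_one (h : IsCompactDensity K p)
    (hlc : ApproxLogConcave (1 / Real.exp 1) p) {w : EuclideanSpace ℝ (Fin n)} (hw : ‖w‖ = 1)
    (m : EuclideanSpace ℝ (Fin n)) :
    ∫ y, inner ℝ w (y - m) ^ 2 * p y ≤
      25600 * Real.exp 1 ^ 2 * (∫ y, |inner ℝ w (y - m)| * p y) ^ 2 := by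
  obtain ⟨f, hf, hfp⟩ := hlc
  obtain ⟨H, hHm, hHlc, hHf, hfH⟩ := hf.exists_measurable
  have he : 0 < Real.exp 1 := Real.exp_pos 1
  obtain ⟨i₀⟩ : Nonempty (Fin n) := by
    by_contra hn
    have : IsEmpty (Fin n) := not_nonempty_iff.mp hn
    have : w = 0 := Subsingleton.elim _ _
    simp [this] at hw
  obtain ⟨F, hFm, hFlc, hF⟩ := hHlc.exists_marginal hHm i₀ hw m
  have hpm : AEMeasurable (fun x => ENNReal.ofReal (p x)) :=
    h.integrable.aemeasurable.ennreal_ofReal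
  set P := volume.withDensity fun x => ENNReal.ofReal (p x) with hP
  have hX : Measurable fun y : EuclideanSpace ℝ (Fin n) => inner ℝ w (y - m) := by fun_prop
  have : IsProbabilityMeasure P := by
    refine ⟨?_⟩
    have := h.lintegral_withDensity (φ := fun _ => 1) continuous_const (fun _ => zero_le_one)
    simpa [h.integral_eq_one, ← hP] using this
  have : IsProbabilityMeasure (P.map fun y => inner ℝ w (y - m)) :=
    Measure.isProbabilityMeasure_map hX.aemeasurable
  have hmap : ∀ φ : ℝ → ℝ≥0∞, Measurable φ →
      ∫⁻ s, φ s ∂(P.map fun y => inner ℝ w (y - m)) =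
        ∫⁻ y, φ (inner ℝ w (y - m)) * ENNReal.ofReal (p y) := by
    intro φ hφ
    have hφX : AEMeasurable fun y => φ (inner ℝ w (y - m)) := (hφ.comp hX).aemeasurable
    rw [lintegral_map hφ hX, hP, lintegral_withDensity_eq_lintegral_mul₀ hpm hφX]
    exact lintegral_congr fun y => mul_comm _ _
  have hpH : ∀ᵐ y, ENNReal.ofReal (p y) ≤ ENNReal.ofReal (Real.exp 1) * H y := by
    filter_upwards [hfH] with y hy
    rw [← hy, ← ENNReal.ofReal_mul he.le]
    refine ENNReal.ofReal_le_ofReal ?_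
    simpa using (hfp y).2
  have hHp : ∀ y, H y ≤ ENNReal.ofReal (Real.exp 1) * ENNReal.ofReal (p y) := by
    intro y
    refine (hHf y).trans ?_
    rw [← ENNReal.ofReal_mul he.le]
    refine ENNReal.ofReal_le_ofReal ?_
    have := (hfp y).1
    rwa [one_div, inv_mul_le_iff₀ he] at this
  have hQF : ∀ φ : ℝ → ℝ≥0∞, Measurable φ →
      ∫⁻ s, φ s ∂(P.map fun y => inner ℝ w (y - m)) ≤
        ENNReal.ofReal (Real.exp 1) * ∫⁻ s, φ s * F s := by
    intro φ hφ
    have hφH : Measurable fun y => φ (inner ℝ w (y - m)) * H y := (hφ.comp hX).mul hHm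
    rw [hmap φ hφ, ← hF φ hφ, ← lintegral_const_mul _ hφH]
    refine lintegral_mono_ae ?_
    filter_upwards [hpH] with y hy
    rw [mul_left_comm]
    gcongr
  have hFQ : ∀ φ : ℝ → ℝ≥0∞, Measurable φ →
      ∫⁻ s, φ s * F s ≤
        ENNReal.ofReal (Real.exp 1) * ∫⁻ s, φ s ∂(P.map fun y => inner ℝ w (y - m)) := by
    intro φ hφ
    have hφp : AEMeasurable fun y => φ (inner ℝ w (y - m)) * ENNReal.ofReal (p y) :=
      (hφ.comp hX).aemeasurable.mul hpm
    rw [hmap φ hφ, ← hF φ hφ, ← lintegral_const_mul'' _ hφp]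
    refine lintegral_mono fun y => ?_
    rw [mul_left_comm]
    gcongr
    exact hHp y
  have hm0 : 0 ≤ ∫ y, |inner ℝ w (y - m)| * p y :=
    integral_nonneg fun y => mul_nonneg (abs_nonneg _) (h.nonneg y)
  have hmain : ∀ δ : ℝ, 0 < δ → ∫ y, inner ℝ w (y - m) ^ 2 * p y ≤
      25600 * Real.exp 1 ^ 2 * ((∫ y, |inner ℝ w (y - m)| * p y) + δ) ^ 2 := by
    intro δ hδ
    have key := hFlc.second_moment_le hFm hQF hFQ (add_pos_of_nonneg_of_pos hm0 hδ) (by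
      rw [lintegral_map (by fun_prop) hX, h.lintegral_withDensity (by fun_prop)
        (fun y => abs_nonneg _)]
      exact ENNReal.ofReal_le_ofReal (by linarith))
    rw [lintegral_map (by fun_prop) hX, h.lintegral_withDensity (by fun_prop)
      (fun y => sq_nonneg _)] at key
    exact (ENNReal.ofReal_le_ofReal_iff (by positivity)).mp key
  have hlim : Filter.Tendsto (fun δ : ℝ => 25600 * Real.exp 1 ^ 2 *
      ((∫ y, |inner ℝ w (y - m)| * p y) + δ) ^ 2) (nhdsWithin 0 (Set.Ioi 0))
      (nhds (25600 * Real.exp 1 ^ 2 * ((∫ y, |inner ℝ w (y - m)| * p y) + 0) ^ 2)) :=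
    (Continuous.tendsto (by fun_prop) 0).mono_left nhdsWithin_le_nhds
  rw [add_zero] at hlim
  exact ge_of_tendsto hlim (Filter.eventually_of_mem self_mem_nhdsWithin hmain)

/-- Reverse Hölder inequality for linear functionals under an approximately log-concave density. -/
lemma inner_sq_le (h : IsCompactDensity K p) (hlc : ApproxLogConcave (1 / Real.exp 1) p)
    (w m : EuclideanSpace ℝ (Fin n)) :
    ∫ y, inner ℝ w (y - m) ^ 2 * p y ≤
      25600 * Real.exp 1 ^ 2 * (∫ y, |inner ℝ w (y - m)| * p y) ^ 2 := by
  rcases eq_or_ne w 0 with rfl | hw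
  · simp
  have hw' : ‖w‖ ≠ 0 := norm_ne_zero_iff.mpr hw
  have hunit := h.inner_sq_le_of_norm_eq_one hlc (w := ‖w‖⁻¹ • w)
    (by rw [norm_smul, norm_inv, norm_norm, inv_mul_cancel₀ hw']) m
  have h1 : ∀ y, inner ℝ w (y - m) = ‖w‖ * inner ℝ (‖w‖⁻¹ • w) (y - m) := by
    intro y
    rw [real_inner_smul_left, mul_inv_cancel_left₀ hw']
  simp_rw [h1, abs_mul, mul_pow, abs_norm, mul_assoc ‖w‖, mul_assoc (‖w‖ ^ 2), integral_const_mul]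
  rw [mul_pow, mul_left_comm]
  gcongr

end IsCompactDensity

open scoped Matrix MatrixOrder Matrix.Norms.L2Operator in
lemma Matrix.PosDef.exists_inv_eq_transpose_mul_self {n : ℕ} {S : Matrix (Fin n) (Fin n) ℝ}
    (hS : S.PosDef) : ∃ A : Matrix (Fin n) (Fin n) ℝ, IsUnit A.det ∧ S⁻¹ = Aᵀ * A := by
  obtain ⟨A, hA, h⟩ := CStarAlgebra.isStrictlyPositive_iff_eq_star_mul_self.mp
    hS.inv.isStrictlyPositive
  exact ⟨A, (Matrix.isUnit_iff_isUnit_det A).mp hA, by simpa [Matrix.star_eq_conjTranspose] using h⟩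

/-- The quadratic form of a matrix on Euclidean space. -/
def quadForm {n : ℕ} (M : Matrix (Fin n) (Fin n) ℝ) (d : EuclideanSpace ℝ (Fin n)) : ℝ :=
  ∑ i, ∑ j, d i * M i j * d j

section Gaussian

variable {n : ℕ} {S : Matrix (Fin n) (Fin n) ℝ} {μ : EuclideanSpace ℝ (Fin n)}

lemma quadForm_eq_dotProduct (M : Matrix (Fin n) (Fin n) ℝ) (d : EuclideanSpace ℝ (Fin n)) :
    quadForm M d = d.ofLp ⬝ᵥ M.mulVec d.ofLp := by
  simp only [quadForm, dotProduct, Matrix.mulVec, Finset.mul_sum, mul_assoc]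

@[fun_prop]
lemma continuous_quadForm (M : Matrix (Fin n) (Fin n) ℝ) : Continuous (quadForm M) := by
  unfold quadForm
  fun_prop

lemma quadForm_neg (M : Matrix (Fin n) (Fin n) ℝ) (d : EuclideanSpace ℝ (Fin n)) :
    quadForm M (-d) = quadForm M d := by
  simp [quadForm]

lemma quadForm_smul_matrix (c : ℝ) (M : Matrix (Fin n) (Fin n) ℝ) (d : EuclideanSpace ℝ (Fin n)) :
    quadForm (c • M) d = c * quadForm M d := by
  simp [quadForm_eq_dotProduct, Matrix.smul_mulVec]

open scoped Matrix in
lemma quadForm_transpose_mul_self (A : Matrix (Fin n) (Fin n) ℝ) (d : EuclideanSpace ℝ (Fin n)) :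
    quadForm (Aᵀ * A) d = ‖Matrix.toLpLin 2 2 A d‖ ^ 2 := by
  rw [quadForm_eq_dotProduct, ← Matrix.mulVec_mulVec, Matrix.dotProduct_mulVec,
    Matrix.vecMul_transpose, EuclideanSpace.real_norm_sq_eq]
  simp [dotProduct, sq, Matrix.toLpLin_apply]

lemma Matrix.PosDef.quadForm_inv_nonneg (hS : S.PosDef) (d : EuclideanSpace ℝ (Fin n)) :
    0 ≤ quadForm S⁻¹ d := by
  obtain ⟨A, -, hA⟩ := hS.exists_inv_eq_transpose_mul_self
  rw [hA, quadForm_transpose_mul_self]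
  positivity

open scoped Matrix in
lemma Matrix.PosDef.inner_sq_le_quadForm_mul (hS : S.PosDef) (w d : EuclideanSpace ℝ (Fin n)) :
    inner ℝ w d ^ 2 ≤ quadForm S w * quadForm S⁻¹ d := by
  obtain ⟨A, hAu, hA⟩ := hS.exists_inv_eq_transpose_mul_self
  have hSu : IsUnit S.det := (Matrix.isUnit_iff_isUnit_det S).mp hS.isUnit
  have hSA : S = A⁻¹ * A⁻¹ᵀ := by
    rw [← Matrix.nonsing_inv_nonsing_inv S hSu, hA, Matrix.mul_inv_rev, Matrix.transpose_nonsing_inv]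
  have hSA' : quadForm S w = ‖Matrix.toLpLin 2 2 A⁻¹ᵀ w‖ ^ 2 := by
    rw [← quadForm_transpose_mul_self, Matrix.transpose_transpose, ← hSA]
  have hinner : inner ℝ w d =
      inner ℝ (Matrix.toLpLin 2 2 A⁻¹ᵀ w) (Matrix.toLpLin 2 2 A d) := by
    simp only [EuclideanSpace.inner_eq_star_dotProduct, Matrix.toLpLin_apply, star_trivial]
    rw [Matrix.mulVec_transpose, dotProduct_comm (A.mulVec d.ofLp), ← Matrix.dotProduct_mulVec,
      Matrix.mulVec_mulVec, Matrix.nonsing_inv_mul A hAu, Matrix.one_mulVec, dotProduct_comm]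
  rw [hSA', hA, quadForm_transpose_mul_self, hinner, ← mul_pow, ← sq_abs]
  gcongr
  exact abs_real_inner_le_norm _ _

lemma Matrix.PosDef.integral_exp_neg_mul_quadForm (hS : S.PosDef) {b : ℝ} (hb : 0 < b) :
    ∫ x : EuclideanSpace ℝ (Fin n), Real.exp (-b * quadForm S⁻¹ (x - μ)) =
      S.det ^ (1 / 2 : ℝ) * (π / b) ^ ((n : ℝ) / 2) := by
  obtain ⟨A, hAu, hA⟩ := hS.exists_inv_eq_transpose_mul_self
  have hdet : LinearMap.det (Matrix.toLpLin 2 2 A) = A.det := LinearMap.det_toLpLin 2 A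
  have hdet0 : A.det ≠ 0 := hAu.ne_zero
  have hS0 : 0 < S.det := hS.det_pos
  have hdetS : S.det ^ (1 / 2 : ℝ) = |A.det⁻¹| := by
    have : S.det⁻¹ = A.det ^ 2 := by
      have := congrArg Matrix.det hA
      rw [Matrix.det_nonsing_inv, Ring.inverse_eq_inv', Matrix.det_mul, Matrix.det_transpose] at this
      rw [this, sq]
    rw [← Real.sqrt_eq_rpow, ← inv_inv S.det, this, ← inv_pow, Real.sqrt_sq_eq_abs]
  rw [integral_sub_right_eq_self (fun x => Real.exp (-b * quadForm S⁻¹ x)) μ]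
  simp_rw [hA, quadForm_transpose_mul_self]
  have hcont : Continuous (Matrix.toLpLin 2 2 A : EuclideanSpace ℝ (Fin n) →ₗ[ℝ] _) :=
    LinearMap.continuous_of_finiteDimensional _
  rw [← integral_map (f := fun y : EuclideanSpace ℝ (Fin n) => Real.exp (-b * ‖y‖ ^ 2))
    hcont.aemeasurable (by fun_prop),
    Measure.map_linearMap_addHaar_eq_smul_addHaar _ (by rwa [hdet]), integral_smul_measure,
    GaussianFourier.integral_rexp_neg_mul_sq_norm hb, hdet, hdetS]
  simp

lemma gaussPdf_eq (x : EuclideanSpace ℝ (Fin n)) :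
    gaussPdf n μ S x = (2 * π) ^ (-(n : ℝ) / 2) * S.det ^ (-(1 : ℝ) / 2) *
      Real.exp (-(1 / 2) * quadForm S⁻¹ (x - μ)) := rfl

lemma Matrix.PosDef.gaussPdf_nonneg (hS : S.PosDef) (x : EuclideanSpace ℝ (Fin n)) :
    0 ≤ gaussPdf n μ S x := by
  have := hS.det_pos
  rw [gaussPdf_eq]
  positivity

@[fun_prop]
lemma continuous_gaussPdf : Continuous (gaussPdf n μ S) := by
  simp_rw [funext (gaussPdf_eq (μ := μ) (S := S))]
  fun_prop

lemma Matrix.PosDef.integral_gaussPdf_mul_exp (hS : S.PosDef) {b : ℝ} (hb : 0 < b) :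
    ∫ x, gaussPdf n μ S x * Real.exp ((1 / 2 - b) * quadForm S⁻¹ (x - μ)) =
      (2 * b) ^ (-(n : ℝ) / 2) := by
  have hdet := hS.det_pos
  have h : ∀ x, gaussPdf n μ S x * Real.exp ((1 / 2 - b) * quadForm S⁻¹ (x - μ)) =
      (2 * π) ^ (-(n : ℝ) / 2) * S.det ^ (-(1 : ℝ) / 2) *
        Real.exp (-b * quadForm S⁻¹ (x - μ)) := by
    intro x
    rw [gaussPdf_eq, mul_assoc, ← Real.exp_add]
    ring_nf
  simp_rw [h, integral_const_mul, hS.integral_exp_neg_mul_quadForm hb]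
  have h1 : S.det ^ (-(1 : ℝ) / 2) * S.det ^ (1 / 2 : ℝ) = 1 := by
    rw [← Real.rpow_add hdet]
    norm_num
  have h2 : (2 * π) ^ (-(n : ℝ) / 2) * (π / b) ^ ((n : ℝ) / 2) = (2 * b) ^ (-(n : ℝ) / 2) := by
    have : 2 * b = 2 * π / (π / b) := by field_simp
    rw [this, Real.div_rpow (y := π / b) (by positivity) (by positivity), neg_div,
      Real.rpow_neg (x := π / b) (by positivity), div_inv_eq_mul]
  rw [mul_assoc, ← mul_assoc (S.det ^ _), h1, one_mul, h2]

lemma Matrix.PosDef.integrable_gaussPdf_mul_exp (hS : S.PosDef) {b : ℝ} (hb : 0 < b) :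
    Integrable fun x => gaussPdf n μ S x * Real.exp ((1 / 2 - b) * quadForm S⁻¹ (x - μ)) := by
  by_contra h
  have := hS.integral_gaussPdf_mul_exp (μ := μ) hb
  rw [integral_undef h] at this
  exact (Real.rpow_pos_of_pos (by positivity) _).ne this

lemma Matrix.PosDef.integrable_gaussPdf (hS : S.PosDef) : Integrable (gaussPdf n μ S) := by
  simpa using hS.integrable_gaussPdf_mul_exp (μ := μ) (b := 1 / 2) (by norm_num)

lemma Matrix.PosDef.integral_gaussPdf (hS : S.PosDef) : ∫ x, gaussPdf n μ S x = 1 := by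
  simpa using hS.integral_gaussPdf_mul_exp (μ := μ) (b := 1 / 2) (by norm_num)

lemma Matrix.PosDef.integrable_gaussPdf_mul_inner (hS : S.PosDef) (v : EuclideanSpace ℝ (Fin n)) :
    Integrable fun x => gaussPdf n μ S x * inner ℝ v (x - μ) := by
  refine ((hS.integrable_gaussPdf_mul_exp (μ := μ) (b := 1 / 8) (by norm_num)).const_mul
    (quadForm S v + 8 / 3)).mono' (by fun_prop) (.of_forall fun x => ?_)
  have hv : 0 ≤ quadForm S v := by
    have := hS.posSemidef.dotProduct_mulVec_nonneg v.ofLp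
    simpa [quadForm_eq_dotProduct] using this
  have hq := hS.quadForm_inv_nonneg (x - μ)
  have hle := hS.inner_sq_le_quadForm_mul v (x - μ)
  rw [norm_mul, Real.norm_of_nonneg (hS.gaussPdf_nonneg x), Real.norm_eq_abs, mul_left_comm]
  refine mul_le_mul_of_nonneg_left ?_ (hS.gaussPdf_nonneg x)
  have hexp := Real.add_one_le_exp ((1 / 2 - 1 / 8) * quadForm S⁻¹ (x - μ))
  calc |inner ℝ v (x - μ)| ≤ quadForm S v + quadForm S⁻¹ (x - μ) := by
        refine abs_le_of_sq_le_sq ?_ (by positivity)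
        nlinarith
    _ ≤ (quadForm S v + 8 / 3) * (1 + (1 / 2 - 1 / 8) * quadForm S⁻¹ (x - μ)) := by nlinarith
    _ ≤ _ := by
        gcongr
        linarith

lemma integral_gaussPdf_mul_inner (v : EuclideanSpace ℝ (Fin n)) :
    ∫ x, gaussPdf n μ S x * inner ℝ v (x - μ) = 0 := by
  have h := integral_sub_left_eq_self (fun x => gaussPdf n μ S x * inner ℝ v (x - μ)) volume
    ((2 : ℝ) • μ)
  have h1 : ∀ x : EuclideanSpace ℝ (Fin n), (2 : ℝ) • μ - x - μ = -(x - μ) := by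
    intro x
    module
  simp_rw [gaussPdf_eq, h1, quadForm_neg, inner_neg_right, mul_neg, integral_neg] at h
  simp_rw [gaussPdf_eq]
  linarith

end Gaussian

/-- A continuous convex function has a subgradient at every point. -/
lemma ConvexOn.exists_subgradient {E : Type*} [NormedAddCommGroup E] [InnerProductSpace ℝ E]
    [CompleteSpace E] {g : E → ℝ} (hg : ConvexOn ℝ Set.univ g) (hc : Continuous g) (x : E) :
    ∃ w : E, ∀ y, g x + inner ℝ w (y - x) ≤ g y := by
  have hopen : IsOpen {q : E × ℝ | q.1 ∈ Set.univ ∧ g q.1 < q.2} := by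
    simpa using isOpen_lt (hc.comp continuous_fst) continuous_snd
  obtain ⟨f, hf⟩ := geometric_hahn_banach_open_point hg.convex_strict_epigraph hopen
    (x := (x, g x)) (by simp)
  have hsplit : ∀ y s, f (y, s) = f (y, 0) + s * f (0, 1) := by
    intro y s
    rw [← smul_eq_mul, ← map_smul, ← map_add]
    simp
  set c := -f (0, 1) with hcdef
  have hcpos : 0 < c := by
    have := hf (x, g x + 1) (by simp)
    rw [hsplit x, hsplit x (g x)] at this
    linarith
  refine ⟨c⁻¹ • (InnerProductSpace.toDual ℝ E).symm (f.comp (.inl ℝ E ℝ)), fun y => ?_⟩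
  have hinner : inner ℝ (c⁻¹ • (InnerProductSpace.toDual ℝ E).symm (f.comp (.inl ℝ E ℝ))) (y - x) =
      c⁻¹ * (f (y, 0) - f (x, 0)) := by
    rw [real_inner_smul_left, InnerProductSpace.toDual_symm_apply, map_sub]
    simp
  rw [hinner]
  refine le_of_forall_pos_lt_add fun δ hδ => ?_
  have := hf (y, g y + δ) (by simpa using hδ)
  rw [hsplit y, hsplit x (g x)] at this
  have h2 : c⁻¹ * (f (y, 0) - f (x, 0)) < g y + δ - g x := by
    rw [inv_mul_lt_iff₀ hcpos]
    linarith
  linarith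

namespace IsCompactDensity

variable {n : ℕ} {K : Set (EuclideanSpace ℝ (Fin n))} {p : EuclideanSpace ℝ (Fin n) → ℝ}

lemma integral_inner_sub_densMean (h : IsCompactDensity K p) (u : EuclideanSpace ℝ (Fin n)) :
    ∫ y, inner ℝ u (y - densMean n p) * p y = 0 := by
  have h1 : ∫ y, inner ℝ u y * p y = inner ℝ u (densMean n p) := by
    rw [densMean, ← integral_inner (h.integrable_smul continuous_id')]
    simp_rw [real_inner_smul_right, mul_comm]
  simp_rw [inner_sub_right, sub_mul]
  rw [integral_sub (h.integrable_mul (by fun_prop)) (h.integrable_mul (by fun_prop)), h1,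
    integral_const_mul, h.integral_eq_one, mul_one, sub_self]

lemma quadForm_densCov (h : IsCompactDensity K p) (u : EuclideanSpace ℝ (Fin n)) :
    quadForm (densCov n p) u = ∫ y, inner ℝ u (y - densMean n p) ^ 2 * p y := by
  set m := densMean n p with hm
  have hexp : ∀ y : EuclideanSpace ℝ (Fin n), inner ℝ u (y - m) ^ 2 * p y =
      ∑ i, ∑ j, u i * (p y * ((y i - m i) * (y j - m j))) * u j := by
    intro y
    rw [PiLp.inner_apply, sq, Finset.sum_mul_sum, Finset.sum_mul]
    refine Finset.sum_congr rfl fun i _ => ?_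
    rw [Finset.sum_mul]
    refine Finset.sum_congr rfl fun j _ => ?_
    simp
    ring
  have h_int : ∀ i j, Integrable fun y : EuclideanSpace ℝ (Fin n) =>
      p y * ((y i - m i) * (y j - m j)) :=
    fun i j => h.integrable_smul (φ := fun y => (y i - m i) * (y j - m j)) (by fun_prop)
  simp_rw [hexp]
  rw [integral_finsetSum _ fun i _ => integrable_finsetSum _ fun j _ =>
    ((h_int i j).const_mul _).mul_const _]
  refine Finset.sum_congr rfl fun i _ => ?_
  rw [integral_finsetSum _ fun j _ => ((h_int i j).const_mul _).mul_const _]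
  refine Finset.sum_congr rfl fun j _ => ?_
  rw [integral_mul_const, integral_const_mul, densCov, Matrix.of_apply, ← hm]

lemma posDef_densCov (h : IsCompactDensity K p) : (densCov n p).PosDef := by
  refine .of_dotProduct_mulVec_pos ?_ fun v hv => ?_
  · ext i j
    simp only [densCov, Matrix.conjTranspose_apply, Matrix.of_apply, star_trivial]
    simp_rw [mul_comm (_ - densMean n p j)]
  · set u : EuclideanSpace ℝ (Fin n) := WithLp.toLp 2 v with hu
    have hu0 : u ≠ 0 := by simpa [hu] using hv
    have hq : star v ⬝ᵥ (densCov n p).mulVec v = quadForm (densCov n p) u := by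
      simp [quadForm_eq_dotProduct, hu]
    rw [hq, h.quadForm_densCov]
    set m := densMean n p
    have hnn : 0 ≤ fun y => inner ℝ u (y - m) ^ 2 * p y :=
      fun y => mul_nonneg (sq_nonneg _) (h.nonneg y)
    refine lt_of_le_of_ne (integral_nonneg hnn) fun h0 => ?_
    have hae := (integral_eq_zero_iff_of_nonneg hnn (h.integrable_mul (by fun_prop))).mp h0.symm
    have hnull : ∀ᵐ y : EuclideanSpace ℝ (Fin n), inner ℝ u (y - m) ≠ 0 := by
      have hker : LinearMap.ker (innerₛₗ ℝ u) ≠ ⊤ := by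
        intro htop
        have : u ∈ LinearMap.ker (innerₛₗ ℝ u) := htop ▸ Submodule.mem_top
        exact hu0 (by simpa using this)
      have h2 := Measure.addHaar_affineSubspace volume
        (AffineSubspace.mk' m (LinearMap.ker (innerₛₗ ℝ u)))
        (fun htop => hker (by
          have := congrArg AffineSubspace.direction htop
          simpa using this))
      rw [ae_iff]
      convert h2 using 2
      ext y
      simp [AffineSubspace.mem_mk']
    have hp0 : p =ᵐ[volume] 0 := by
      filter_upwards [hae, hnull] with y hy hy'
      simpa [hy'] using hy
    have := h.integral_eq_one
    rw [integral_congr_ae hp0] at this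
    simp at this

lemma norm_sub_densMean_le (h : IsCompactDensity K p) {y : EuclideanSpace ℝ (Fin n)} (hy : y ∈ K) :
    ‖y - densMean n p‖ ≤ Metric.diam K := by
  have h1 : y - densMean n p = ∫ z, p z • (y - z) := by
    simp_rw [smul_sub]
    rw [integral_sub (h.integrable_smul continuous_const) (h.integrable_smul continuous_id'),
      integral_smul_const, h.integral_eq_one, one_smul, densMean]
  rw [h1]
  calc ‖∫ z, p z • (y - z)‖ ≤ ∫ z, p z * Metric.diam K := by
        refine norm_integral_le_of_norm_le (h.integrable.mul_const _) (.of_forall fun z => ?_)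
        rw [norm_smul, Real.norm_of_nonneg (h.nonneg z)]
        by_cases hz : z ∈ K
        · refine mul_le_mul_of_nonneg_left ?_ (h.nonneg z)
          rw [← dist_eq_norm]
          exact Metric.dist_le_diam_of_mem h.isCompact.isBounded hy hz
        · simp [h.eq_zero z hz]
    _ = Metric.diam K := by rw [integral_mul_const, h.integral_eq_one, one_mul]

lemma quadForm_densCov_le (h : IsCompactDensity K p) (u : EuclideanSpace ℝ (Fin n)) :
    quadForm (densCov n p) u ≤ ‖u‖ ^ 2 * Metric.diam K ^ 2 := by
  rw [h.quadForm_densCov]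
  calc ∫ y, inner ℝ u (y - densMean n p) ^ 2 * p y
      ≤ ∫ y, (‖u‖ ^ 2 * Metric.diam K ^ 2) * p y := by
        refine integral_mono (h.integrable_mul (by fun_prop)) (h.integrable.const_mul _)
          fun y => ?_
        by_cases hy : y ∈ K
        · refine mul_le_mul_of_nonneg_right ?_ (h.nonneg y)
          rw [← mul_pow, ← sq_abs]
          gcongr
          exact (abs_real_inner_le_norm _ _).trans
            (mul_le_mul_of_nonneg_left (h.norm_sub_densMean_le hy) (norm_nonneg u))
        · simp [h.eq_zero y hy]
    _ = _ := by rw [integral_const_mul, h.integral_eq_one, mul_one]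

variable {g : EuclideanSpace ℝ (Fin n) → ℝ} {v : EuclideanSpace ℝ (Fin n)}

lemma integral_add_inner_mul (h : IsCompactDensity K p) (c : ℝ) (u : EuclideanSpace ℝ (Fin n)) :
    ∫ y, (c + inner ℝ u (y - densMean n p)) * p y = c := by
  simp_rw [add_mul]
  rw [integral_add (h.integrable.const_mul c) (h.integrable_mul (by fun_prop)),
    integral_const_mul, h.integral_eq_one, h.integral_inner_sub_densMean, mul_one, add_zero]

lemma apply_densMean_le (h : IsCompactDensity K p) (hc : Continuous g)
    (hv : ∀ y, g (densMean n p) + inner ℝ v (y - densMean n p) ≤ g y) :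
    g (densMean n p) ≤ ∫ y, g y * p y := by
  rw [← h.integral_add_inner_mul (g (densMean n p)) v]
  exact integral_mono (h.integrable_mul (by fun_prop)) (h.integrable_mul hc)
    fun y => mul_le_mul_of_nonneg_right (hv y) (h.nonneg y)

/-- Near the mean, in the metric of the covariance, a convex function exceeds its linearization
at the mean by at most the mean excess. -/
lemma le_inner_add_integral (h : IsCompactDensity K p)
    (hlc : ApproxLogConcave (1 / Real.exp 1) p) (hg : ConvexOn ℝ Set.univ g) (hc : Continuous g)
    (hv : ∀ y, g (densMean n p) + inner ℝ v (y - densMean n p) ≤ g y)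
    {x : EuclideanSpace ℝ (Fin n)}
    (hx : 4 * (25600 * Real.exp 1 ^ 2) * quadForm (densCov n p)⁻¹ (x - densMean n p) ≤ 1) :
    g x ≤ inner ℝ v (x - densMean n p) + ∫ y, g y * p y := by
  obtain ⟨w, hw⟩ := hg.exists_subgradient hc x
  set m := densMean n p with hm
  set t : ℝ := inner ℝ (w - v) (x - m) with ht
  set I : ℝ := ∫ y, |inner ℝ (w - v) (y - m)| * p y with hI
  have hI0 : 0 ≤ I := integral_nonneg fun y => mul_nonneg (abs_nonneg _) (h.nonneg y)
  have htI : t ≤ I / 2 := by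
    refine le_of_sq_le_sq ?_ (by positivity)
    calc t ^ 2 ≤ quadForm (densCov n p) (w - v) * quadForm (densCov n p)⁻¹ (x - m) :=
          h.posDef_densCov.inner_sq_le_quadForm_mul _ _
      _ ≤ (25600 * Real.exp 1 ^ 2 * I ^ 2) * quadForm (densCov n p)⁻¹ (x - m) := by
          refine mul_le_mul_of_nonneg_right ?_ (h.posDef_densCov.quadForm_inv_nonneg _)
          rw [h.quadForm_densCov]
          exact h.inner_sq_le hlc _ _
      _ = (4 * (25600 * Real.exp 1 ^ 2) * quadForm (densCov n p)⁻¹ (x - m)) * (I ^ 2 / 4) := by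
          ring
      _ ≤ 1 * (I ^ 2 / 4) := by gcongr
      _ = (I / 2) ^ 2 := by ring
  have hpt : ∀ y, (g x - inner ℝ v (x - m) - t + inner ℝ (v + (2⁻¹ : ℝ) • (w - v)) (y - m)) +
      2⁻¹ * |inner ℝ (w - v) (y - m)| ≤ g y := by
    intro y
    have hwy : g x - inner ℝ v (x - m) - t + inner ℝ v (y - m) + inner ℝ (w - v) (y - m) ≤ g y := by
      have h1 := hw y
      have h2 : inner ℝ w (y - x) = -inner ℝ v (x - m) - t + inner ℝ v (y - m) +
          inner ℝ (w - v) (y - m) := by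
        simp only [ht, inner_sub_left, inner_sub_right]
        ring
      linarith
    have hvy : g x - inner ℝ v (x - m) - t + inner ℝ v (y - m) ≤ g y := by
      have h1 := hw m
      have h2 : inner ℝ w (m - x) = -inner ℝ v (x - m) - t := by
        simp only [ht, inner_sub_left, inner_sub_right]
        ring
      linarith [hv y]
    rw [inner_add_left, real_inner_smul_left]
    rcases abs_cases (inner ℝ (w - v) (y - m)) with ⟨h1, -⟩ | ⟨h1, -⟩ <;> rw [h1] <;> linarith
  have h_int : (g x - inner ℝ v (x - m) - t) + 2⁻¹ * I ≤ ∫ y, g y * p y := by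
    rw [← h.integral_add_inner_mul (g x - inner ℝ v (x - m) - t) (v + (2⁻¹ : ℝ) • (w - v)), hI,
      ← integral_const_mul, ← integral_add (h.integrable_mul (by fun_prop))
        ((h.integrable_mul (by fun_prop)).const_mul _)]
    refine integral_mono ((h.integrable_mul (by fun_prop)).add
      ((h.integrable_mul (by fun_prop)).const_mul _)) (h.integrable_mul hc) fun y => ?_
    have := mul_le_mul_of_nonneg_right (hpt y) (h.nonneg y)
    simp only [add_mul _ _ (p y), mul_assoc] at this ⊢
    linarith
  linarith

lemma norm_sub_densMean_sq_le (h : IsCompactDensity K p) (x : EuclideanSpace ℝ (Fin n)) :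
    ‖x - densMean n p‖ ^ 2 ≤
      Metric.diam K ^ 2 * quadForm (densCov n p)⁻¹ (x - densMean n p) := by
  set d := x - densMean n p
  have hq := h.posDef_densCov.quadForm_inv_nonneg d
  rcases (sq_nonneg ‖d‖).eq_or_lt with h0 | h0
  · rw [← h0]
    positivity
  have h1 := h.posDef_densCov.inner_sq_le_quadForm_mul d d
  rw [real_inner_self_eq_norm_sq] at h1
  have h2 := mul_le_mul_of_nonneg_right (h.quadForm_densCov_le d) hq
  refine le_of_mul_le_mul_left ?_ h0
  calc ‖d‖ ^ 2 * ‖d‖ ^ 2 = (‖d‖ ^ 2) ^ 2 := by ring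
    _ ≤ _ := h1.trans h2
    _ = _ := by ring

end IsCompactDensity

/-- A Lipschitz function exceeds its linearization at a point at most linearly. -/
lemma LipschitzWith.le_add_inner_add_norm {E : Type*} [NormedAddCommGroup E]
    [InnerProductSpace ℝ E] {g : E → ℝ} {L : NNReal} (hg : LipschitzWith L g) {m v : E}
    (hv : ∀ y, g m + inner ℝ v (y - m) ≤ g y) (x : E) :
    g x ≤ g m + inner ℝ v (x - m) + 2 * L * ‖x - m‖ := by
  have h1 := hg.dist_le_mul x m
  have h2 := hg.dist_le_mul (m - (x - m)) m
  have h3 := hv (m - (x - m))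
  have h4 : m - (x - m) - m = -(x - m) := by abel
  rw [dist_eq_norm, dist_eq_norm, Real.norm_eq_abs] at h1 h2
  rw [h4, norm_neg] at h2
  rw [h4, inner_neg_right] at h3
  linarith [le_abs_self (g x - g m), le_abs_self (g (m - (x - m)) - g m)]

/-- **Inequality (14).** The Gaussian approximation `r[p] = N(μ(p), (ε²/(n log T)) Cov(p))`
of `p` is approximately convexly dominated by `p`. -/
theorem gaussian_approximation_convex_domination
    (n : ℕ) (hn : 1 ≤ n) (T : ℝ) (hT : 10 ≤ T) (hTn : (n : ℝ) ≤ T)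
    (ε : ℝ) (hε : ε = 1 / (1600 * Real.exp 1))
    (K : Set (EuclideanSpace ℝ (Fin n))) (hKcompact : IsCompact K) (hKconv : Convex ℝ K)
    (hKint : (interior K).Nonempty) (hKdiam : Metric.diam K ≤ T)
    (p : EuclideanSpace ℝ (Fin n) → ℝ) (hp0 : ∀ x, 0 ≤ p x)
    (hp1 : ∫ x, p x = 1) (hpsupp : ∀ x, x ∉ K → p x = 0)
    (hplc : ApproxLogConcave (1 / Real.exp 1) p)
    (g : EuclideanSpace ℝ (Fin n) → ℝ)
    (hg0 : ∀ x, 0 ≤ g x) (hgconv : ConvexOn ℝ Set.univ g)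
    (hgLip : LipschitzWith T.toNNReal g)
    (hgμ : g (densMean n p) ≤ 2) :
    ∫ x, gaussPdf n (densMean n p) ((ε ^ 2 / (n * Real.log T)) • densCov n p) x * g x
      ≤ (∫ x, g x * p x) + 1 / T ^ 2 := by
  have h : IsCompactDensity K p := ⟨hKcompact, hp0, hp1, hpsupp⟩
  have hc : Continuous g := hgLip.continuous
  have hT0 : 0 < T := by linarith
  have he1 : 1 ≤ Real.exp 1 := Real.one_le_exp zero_le_one
  have hn' : (1 : ℝ) ≤ n := by exact_mod_cast hn
  have hlog : 1 ≤ Real.log T := by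
    rw [Real.le_log_iff_exp_le hT0]
    linarith [Real.exp_one_lt_three]
  set L : ℝ := n * Real.log T with hL
  have hL1 : 1 ≤ L := by nlinarith
  set s : ℝ := ε ^ 2 / L with hs
  have hεe : ε * Real.exp 1 = 1 / 1600 := by
    rw [hε]
    field_simp
  have hε0 : 0 < ε := by
    rw [hε]
    positivity
  have hs0 : 0 < s := by positivity
  have hsL : s * L = ε ^ 2 := div_mul_cancel₀ _ (by positivity)
  have hs16 : s ≤ 1 / 16 := by
    have : ε ≤ 1 / 1600 := by nlinarith
    nlinarith
  set m := densMean n p with hm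
  set S := s • densCov n p with hS
  have hSpos : S.PosDef := h.posDef_densCov.smul hs0
  have hquad : ∀ x, quadForm (densCov n p)⁻¹ (x - m) = s * quadForm S⁻¹ (x - m) := by
    intro x
    have : S⁻¹ = s⁻¹ • (densCov n p)⁻¹ := by
      have hu := (Matrix.isUnit_iff_isUnit_det _).mp h.posDef_densCov.isUnit
      exact Matrix.inv_smul' (densCov n p) (Units.mk0 s hs0.ne') hu
    rw [this, quadForm_smul_matrix, mul_inv_cancel_left₀ hs0.ne']
  obtain ⟨v, hv⟩ := hgconv.exists_subgradient hc m
  set G : ℝ := ∫ x, g x * p x with hG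
  have hGm : g m ≤ G := h.apply_densMean_le hc hv
  have hpt : ∀ x, g x ≤ G + inner ℝ v (x - m) +
      T ^ 2 * Real.exp (-(5 * L)) * Real.exp ((1 / 2 - 1 / 8) * quadForm S⁻¹ (x - m)) := by
    intro x
    set q := quadForm S⁻¹ (x - m) with hq
    have hq0 : 0 ≤ q := hSpos.quadForm_inv_nonneg _
    by_cases hx : q ≤ 25 * L
    · have hnear := h.le_inner_add_integral hplc hgconv hc hv (x := x) (by
        rw [hquad x]
        have h1 : s * q ≤ 25 * ε ^ 2 := by
          rw [← hsL]
          nlinarith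
        calc 4 * (25600 * Real.exp 1 ^ 2) * (s * q)
            ≤ 4 * (25600 * Real.exp 1 ^ 2) * (25 * ε ^ 2) := by gcongr
          _ = 2560000 * (ε * Real.exp 1) ^ 2 := by ring
          _ ≤ 1 := by
            rw [hεe]
            norm_num)
      have : 0 ≤ T ^ 2 * Real.exp (-(5 * L)) * Real.exp ((1 / 2 - 1 / 8) * q) := by positivity
      linarith
    · have hfar := hgLip.le_add_inner_add_norm hv x
      rw [Real.coe_toNNReal T hT0.le] at hfar
      have hnorm : 2 * ‖x - m‖ ≤ T * Real.exp (q / 8) := by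
        refine le_of_sq_le_sq ?_ (by positivity)
        have h1 := h.norm_sub_densMean_sq_le x
        have h2 : Metric.diam K ^ 2 ≤ T ^ 2 := by
          gcongr
        have h3 := Real.add_one_le_exp (q / 4)
        rw [← hm, hquad x, ← hq] at h1
        calc (2 * ‖x - m‖) ^ 2 = 4 * ‖x - m‖ ^ 2 := by ring
          _ ≤ 4 * (T ^ 2 * (1 / 16 * q)) := by
              refine mul_le_mul_of_nonneg_left (h1.trans ?_) (by norm_num)
              gcongr
          _ = T ^ 2 * (q / 4) := by ring
          _ ≤ T ^ 2 * Real.exp (q / 4) := by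
              gcongr
              linarith
          _ = (T * Real.exp (q / 8)) ^ 2 := by
              rw [mul_pow, ← Real.exp_nat_mul]
              congr 2
              push_cast
              ring
      have hexp : Real.exp (q / 8) ≤ Real.exp (-(5 * L)) * Real.exp ((1 / 2 - 1 / 8) * q) := by
        rw [← Real.exp_add]
        refine Real.exp_le_exp.mpr ?_
        linarith
      have h5 : 2 * T * ‖x - m‖ ≤
          T ^ 2 * Real.exp (-(5 * L)) * Real.exp ((1 / 2 - 1 / 8) * q) := by
        calc 2 * T * ‖x - m‖ = T * (2 * ‖x - m‖) := by ring
          _ ≤ T * (T * Real.exp (q / 8)) := by gcongr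
          _ = T ^ 2 * Real.exp (q / 8) := by ring
          _ ≤ T ^ 2 * (Real.exp (-(5 * L)) * Real.exp ((1 / 2 - 1 / 8) * q)) := by gcongr
          _ = _ := by ring
      linarith
  have hi1 := (hSpos.integrable_gaussPdf (μ := m)).mul_const G
  have hi2 := hSpos.integrable_gaussPdf_mul_inner (μ := m) v
  have hi12 : Integrable fun x =>
      gaussPdf n m S x * G + gaussPdf n m S x * inner ℝ v (x - m) := hi1.add hi2
  have hi3 := (hSpos.integrable_gaussPdf_mul_exp (μ := m) (b := 1 / 8) (by norm_num)).const_mul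
    (T ^ 2 * Real.exp (-(5 * L)))
  have hpow : T ^ 2 * Real.exp (-(5 * L)) * (2 * (1 / 8 : ℝ)) ^ (-(n : ℝ) / 2) ≤ 1 / T ^ 2 := by
    have h1 : (2 * (1 / 8 : ℝ)) ^ (-(n : ℝ) / 2) = 2 ^ n := by
      have : (2 * (1 / 8) : ℝ) = 2 ^ (-2 : ℝ) := by norm_num
      rw [this, ← Real.rpow_mul zero_le_two, ← Real.rpow_natCast]
      congr 1
      ring
    have h2 : Real.exp (-(5 * L)) = (T ^ (5 * n))⁻¹ := by
      rw [Real.exp_neg, ← Real.exp_log (pow_pos hT0 (5 * n)), Real.log_pow, hL]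
      push_cast
      ring_nf
    have h3 : (2 : ℝ) ^ n ≤ T ^ n := by
      gcongr
      linarith
    have h4 : T ^ 4 ≤ T ^ (4 * n) := pow_le_pow_right₀ (by linarith) (by omega)
    rw [h1, h2, le_div_iff₀ (by positivity)]
    calc T ^ 2 * (T ^ (5 * n))⁻¹ * 2 ^ n * T ^ 2 = (T ^ (5 * n))⁻¹ * (T ^ 4 * 2 ^ n) := by ring
      _ ≤ (T ^ (5 * n))⁻¹ * (T ^ (4 * n) * T ^ n) := by gcongr
      _ = 1 := by
          rw [← pow_add, show 4 * n + n = 5 * n by ring]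
          exact inv_mul_cancel₀ (by positivity)
  calc ∫ x, gaussPdf n m S x * g x
      ≤ ∫ x, (gaussPdf n m S x * G + gaussPdf n m S x * inner ℝ v (x - m) +
          T ^ 2 * Real.exp (-(5 * L)) *
            (gaussPdf n m S x * Real.exp ((1 / 2 - 1 / 8) * quadForm S⁻¹ (x - m)))) := by
        refine integral_mono_of_nonneg
          (.of_forall fun x => mul_nonneg (hSpos.gaussPdf_nonneg x) (hg0 x))
          (hi12.add hi3) (.of_forall fun x => ?_)
        refine (mul_le_mul_of_nonneg_left (hpt x) (hSpos.gaussPdf_nonneg x)).trans_eq ?_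
        ring
    _ = G + T ^ 2 * Real.exp (-(5 * L)) * (2 * (1 / 8 : ℝ)) ^ (-(n : ℝ) / 2) := by
        rw [integral_add hi12 hi3, integral_add hi1 hi2, integral_mul_const,
          hSpos.integral_gaussPdf, integral_gaussPdf_mul_inner, integral_const_mul,
          hSpos.integral_gaussPdf_mul_exp (by norm_num), one_mul, add_zero]
    _ ≤ G + 1 / T ^ 2 := by gcongr
end
end

section
/- Let 𝒦 ⊂ ℝⁿ be a convex body and let 𝓔 be an ellipsoid centered at the origin (the image of the unit Euclidean ball under an invertible linear map). If Vol(𝒦 ∩ 𝓔) ≥ (1/2)·Vol(𝒦), then 𝒦 ⊂ 10n·𝓔. -/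
open MeasureTheory ProbabilityTheory Real
open scoped Pointwise

noncomputable section

/-- Moving a point `y` of the unit ball towards a point `x` of norm greater than `2 / t`, by a
proportion at least `t`, takes it out of the unit ball. -/
lemma one_lt_norm_homothety {F : Type*} [NormedAddCommGroup F] [NormedSpace ℝ F] {x y : F}
    {q t : ℝ} (hq : 0 ≤ q) (hqt : q ≤ 1 - t) (ht : 0 < t) (hx : 2 < t * ‖x‖) (hy : ‖y‖ ≤ 1) :
    1 < ‖AffineMap.homothety x q y‖ := by
  have h1 : (1 - q) • x = AffineMap.homothety x q y - q • y := by
    simp only [AffineMap.homothety_apply, vsub_eq_sub, vadd_eq_add]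
    module
  have h2 : ‖(1 - q) • x‖ ≤ ‖AffineMap.homothety x q y‖ + ‖q • y‖ := h1 ▸ norm_sub_le _ _
  rw [norm_smul, norm_smul, Real.norm_of_nonneg hq, Real.norm_of_nonneg (by linarith)] at h2
  have h3 : t * ‖x‖ ≤ (1 - q) * ‖x‖ := by gcongr; linarith
  have h4 : q * ‖y‖ ≤ q * 1 := by gcongr
  linarith

/-- A homothety centred at a point of a convex set, of ratio in `[0, 1]`, preserves the set. -/
lemma Convex.image_homothety_subset {F : Type*} [AddCommGroup F] [Module ℝ F] {K S : Set F}
    (hK : Convex ℝ K) {x : F} (hx : x ∈ K) (hS : S ⊆ K) {q : ℝ} (hq0 : 0 ≤ q) (hq1 : q ≤ 1) :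
    AffineMap.homothety x q '' S ⊆ K := by
  rintro _ ⟨y, hy, rfl⟩
  rw [AffineMap.homothety_eq_lineMap]
  exact hK.lineMap_mem hx (hS hy) ⟨hq0, hq1⟩

/-- If `S ⊆ K` and its images under homotheties of ratios `q` and `q ^ 2` centred at a point of
the convex set `K` are disjoint from `S`, then the volumes of these three subsets of `K` add up to
at most the volume of `K`. -/
lemma Convex.volume_add_homothety_le {n : ℕ} {K S : Set (EuclideanSpace ℝ (Fin n))}
    (hK : Convex ℝ K) (hS : S ⊆ K) (hSc : IsCompact S) {x : EuclideanSpace ℝ (Fin n)}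
    (hx : x ∈ K) {q : ℝ} (hq0 : 0 < q) (hq1 : q ≤ 1)
    (hd : Disjoint S (AffineMap.homothety x q '' S))
    (hd2 : Disjoint S (AffineMap.homothety x (q ^ 2) '' S)) :
    ENNReal.ofReal (1 + q ^ n + (q ^ n) ^ 2) * volume S ≤ volume K := by
  have hcont (r : ℝ) : IsCompact (AffineMap.homothety x r '' S) :=
    hSc.image (AffineMap.homothety_continuous x r)
  have hd3 : Disjoint (AffineMap.homothety x q '' S) (AffineMap.homothety x (q ^ 2) '' S) := by
    have hinj : Function.Injective (AffineMap.homothety x q) := by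
      intro a b hab
      simpa [AffineMap.homothety_apply, hq0.ne'] using hab
    have : AffineMap.homothety x (q ^ 2) '' S =
        AffineMap.homothety x q '' (AffineMap.homothety x q '' S) := by
      rw [Set.image_image, pow_two]
      simp only [AffineMap.homothety_mul_apply]
    rw [this]
    exact (Set.disjoint_image_iff hinj).2 hd
  have hvol (r : ℝ) (hr : 0 ≤ r) :
      volume (AffineMap.homothety x r '' S) = ENNReal.ofReal (r ^ n) * volume S := by
    rw [Measure.addHaar_image_homothety, finrank_euclideanSpace_fin, abs_of_nonneg (by positivity)]
  calc ENNReal.ofReal (1 + q ^ n + (q ^ n) ^ 2) * volume S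
      = volume S + volume (AffineMap.homothety x q '' S)
        + volume (AffineMap.homothety x (q ^ 2) '' S) := by
        rw [hvol q hq0.le, hvol _ (by positivity), ENNReal.ofReal_add (by positivity)
          (by positivity), ENNReal.ofReal_add (by positivity) (by positivity), add_mul, add_mul,
          ENNReal.ofReal_one, one_mul, pow_right_comm]
    _ = volume (S ∪ AffineMap.homothety x q '' S ∪ AffineMap.homothety x (q ^ 2) '' S) := by
        rw [measure_union (Set.disjoint_union_left.2 ⟨hd2, hd3⟩) (hcont _).measurableSet,
          measure_union hd (hcont _).measurableSet]
    _ ≤ volume K := measure_mono (Set.union_subset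
        (Set.union_subset hS (hK.image_homothety_subset hx hS hq0.le hq1))
        (hK.image_homothety_subset hx hS (by positivity) (pow_le_one₀ hq0.le hq1)))

/-- **Lemma 5.5.** If a convex body `𝒦` has at least half of its volume inside an
origin-centered ellipsoid `𝓔`, then `𝒦 ⊆ 10n·𝓔`. -/
theorem convex_body_in_dilated_ellipsoid
    (n : ℕ) (K : Set (EuclideanSpace ℝ (Fin n)))
    (hKcompact : IsCompact K) (hKconv : Convex ℝ K) (hKint : (interior K).Nonempty)
    (A : EuclideanSpace ℝ (Fin n) →ₗ[ℝ] EuclideanSpace ℝ (Fin n)) (hA : Function.Bijective A)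
    (E : Set (EuclideanSpace ℝ (Fin n))) (hE : E = A '' Metric.closedBall 0 1)
    (hvol : volume K / 2 ≤ volume (K ∩ E)) :
    K ⊆ (10 * n : ℝ) • E := by
  intro x hx
  let e := LinearEquiv.ofBijective A hA
  have hEmem (y) : y ∈ E ↔ ‖e.symm y‖ ≤ 1 := by
    rw [hE]
    constructor
    · rintro ⟨z, hz, rfl⟩
      have : e.symm (A z) = z := e.symm_apply_apply z
      simpa [this] using hz
    · exact fun h => ⟨e.symm y, by simpa using h, e.apply_symm_apply y⟩
  rcases n.eq_zero_or_pos with rfl | hn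
  · exact ⟨x, (hEmem x).2 (by simp [Subsingleton.elim x 0]), Subsingleton.elim _ _⟩
  have hn' : (1 : ℝ) ≤ n := by exact_mod_cast hn
  rw [Set.mem_smul_set_iff_inv_smul_mem₀ (by positivity), hEmem, map_smul, norm_smul,
    Real.norm_of_nonneg (by positivity), inv_mul_le_iff₀ (by positivity), mul_one]
  by_contra! hlarge
  have hEc : IsCompact E := hE ▸
    (isCompact_closedBall 0 1).image A.continuous_of_finiteDimensional
  have ht : (0 : ℝ) < 1 / (5 * n) := by positivity
  have ht5 : 1 / (5 * n : ℝ) ≤ 1 / 5 := by gcongr; linarith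
  obtain ⟨q, hq⟩ : ∃ q : ℝ, q = 1 - 1 / (5 * n) := ⟨_, rfl⟩
  have hq0 : 0 < q := by linarith
  have hq1 : q ≤ 1 := by linarith
  have htx : 2 < 1 / (5 * n : ℝ) * ‖e.symm x‖ := by
    rw [one_div, lt_inv_mul_iff₀ (by positivity)]
    linarith
  have hdisj (r : ℝ) (hr0 : 0 ≤ r) (hrq : r ≤ q) :
      Disjoint (K ∩ E) (AffineMap.homothety x r '' (K ∩ E)) := by
    rw [Set.disjoint_left]
    rintro _ ⟨-, hzE⟩ ⟨y, ⟨-, hyE⟩, rfl⟩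
    have h := one_lt_norm_homothety hr0 (hq ▸ hrq) ht htx ((hEmem y).1 hyE)
    have heq : AffineMap.homothety (e.symm x) r (e.symm y) =
        e.symm (AffineMap.homothety x r y) := by
      simp [AffineMap.homothety_apply]
    exact h.not_ge (heq ▸ (hEmem _).1 hzE)
  have hmain := hKconv.volume_add_homothety_le Set.inter_subset_left (hKcompact.inter hEc) hx hq0
    hq1 (hdisj q hq0.le le_rfl) (hdisj (q ^ 2) (by positivity) (by nlinarith))
  have hbern : (4 / 5 : ℝ) ≤ q ^ n := by
    have h := one_add_mul_le_pow (a := -(1 / (5 * n : ℝ))) (by linarith) n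
    rw [← sub_eq_add_neg, ← hq] at h
    have h5 : (n : ℝ) * -(1 / (5 * n : ℝ)) = -(1 / 5) := by field_simp
    linarith
  have hfin : volume K ≠ ⊤ := hKcompact.measure_lt_top.ne
  have hpos : 0 < (volume K).toReal := ENNReal.toReal_pos
    (Measure.measure_pos_of_nonempty_interior _ hKint).ne' hfin
  have hSfin : volume (K ∩ E) ≠ ⊤ := measure_ne_top_of_subset Set.inter_subset_left hfin
  have h1 := ENNReal.toReal_mono hfin hmain
  have h2 := ENNReal.toReal_mono hSfin hvol
  rw [ENNReal.toReal_mul, ENNReal.toReal_ofReal (by positivity)] at h1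
  rw [ENNReal.toReal_div, ENNReal.toReal_ofNat] at h2
  have h3 : 61 / 25 ≤ 1 + q ^ n + (q ^ n) ^ 2 := by nlinarith
  have h4 := mul_le_mul_of_nonneg_right h3 (ENNReal.toReal_nonneg (a := volume (K ∩ E)))
  linarith
end
end

section
/- Fix a dimension n ≥ 1 and an integer T ≥ 10. Let X be a Gaussian random vector in ℝⁿ with law N(0, Θ) for a positive definite matrix Θ. Let f : ℝⁿ → [0,∞) be a measurable function satisfying f(x) = 0 whenever ⟨x, Θ⁻¹x⟩ ≤ 20·n·log T, and f(x) ≤ T·|x| + 2 for all x ∈ ℝⁿ. Then E[f(X)] ≤ (‖Θ‖_op^{1/2} + 1)/T³. -/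
open MeasureTheory ProbabilityTheory Real

noncomputable section

/-- Linear change of variables for the Bochner integral on `ℝⁿ`. -/
lemma integral_eq_abs_det_mul_integral_comp_toEuclideanCLM {n : ℕ} {A : Matrix (Fin n) (Fin n) ℝ}
    (hA : A.det ≠ 0) (g : EuclideanSpace ℝ (Fin n) → ℝ) :
    ∫ x, g x = |A.det| * ∫ z, g (Matrix.toEuclideanCLM (𝕜 := ℝ) A z) := by
  set L := Matrix.toEuclideanCLM (𝕜 := ℝ) A with hL
  have hunit : IsUnit A.det := isUnit_iff_ne_zero.mpr hA
  have hleft (z) : Matrix.toEuclideanCLM (𝕜 := ℝ) A⁻¹ (L z) = z := by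
    rw [hL, ← mul_apply_eq_comp, ← map_mul, Matrix.nonsing_inv_mul _ hunit, map_one]
    rfl
  have hright (z) : L (Matrix.toEuclideanCLM (𝕜 := ℝ) A⁻¹ z) = z := by
    rw [hL, ← mul_apply_eq_comp, ← map_mul, Matrix.mul_nonsing_inv _ hunit, map_one]
    rfl
  have hdet : L.det = A.det := by
    rw [ContinuousLinearMap.det, hL, Matrix.coe_toEuclideanCLM_eq_toEuclideanLin,
      Matrix.toEuclideanLin_eq_toLin_orthonormal, LinearMap.det_toLin]
  have key := integral_image_eq_integral_abs_det_fderiv_smul volume MeasurableSet.univ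
    (fun x _ => (L.hasFDerivAt (x := x)).hasFDerivWithinAt)
    (Function.LeftInverse.injective hleft).injOn g
  rw [Set.image_univ, (Function.RightInverse.surjective hright).range_eq] at key
  simpa only [setIntegral_univ, smul_eq_mul, hdet, integral_const_mul] using key

open scoped MatrixOrder Matrix.Norms.L2Operator in
/-- A positive definite matrix factors as `Θ = A Aᴴ` with `A` invertible. -/
lemma Matrix.PosDef.exists_eq_mul_conjTranspose {n : ℕ} {Θ : Matrix (Fin n) (Fin n) ℝ}
    (hΘ : Θ.PosDef) : ∃ A : Matrix (Fin n) (Fin n) ℝ, A.det ≠ 0 ∧ Θ = A * A.conjTranspose := by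
  obtain ⟨B, hB⟩ := CStarAlgebra.nonneg_iff_eq_star_mul_self.mp hΘ.posSemidef.nonneg
  refine ⟨B.conjTranspose, fun h => hΘ.det_pos.ne' ?_, by simpa [Matrix.star_eq_conjTranspose] using hB⟩
  rw [hB, Matrix.star_eq_conjTranspose, Matrix.det_mul, h, zero_mul]

/-- The quadratic form of `(A Aᴴ)⁻¹` at `A z` is `|z|²`. -/
lemma quadForm_inv_mul_conjTranspose {n : ℕ} {A : Matrix (Fin n) (Fin n) ℝ} (hA : A.det ≠ 0)
    (z : EuclideanSpace ℝ (Fin n)) :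
    ∑ i, ∑ j, Matrix.toEuclideanCLM (𝕜 := ℝ) A z i * (A * A.conjTranspose)⁻¹ i j *
      Matrix.toEuclideanCLM (𝕜 := ℝ) A z j = ‖z‖ ^ 2 := by
  have hunit : IsUnit A.det := isUnit_iff_ne_zero.mpr hA
  have hinv : A.transpose * ((A * A.conjTranspose)⁻¹ * A) = 1 := by
    rw [Matrix.mul_inv_rev, Matrix.mul_assoc, Matrix.nonsing_inv_mul _ hunit, Matrix.mul_one,
      Matrix.conjTranspose_eq_transpose_of_trivial, Matrix.mul_nonsing_inv _ (by simpa using hunit)]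
  have hquad : ∑ i, ∑ j, Matrix.toEuclideanCLM (𝕜 := ℝ) A z i * (A * A.conjTranspose)⁻¹ i j *
      Matrix.toEuclideanCLM (𝕜 := ℝ) A z j =
      (A.mulVec z.ofLp) ⬝ᵥ ((A * A.conjTranspose)⁻¹.mulVec (A.mulVec z.ofLp)) := by
    rw [← Matrix.ofLp_toEuclideanCLM]
    generalize Matrix.toEuclideanCLM (𝕜 := ℝ) A z = x
    simp only [dotProduct, Matrix.mulVec, Finset.mul_sum, mul_assoc]
  rw [hquad, Matrix.mulVec_mulVec, ← Matrix.vecMul_transpose, ← Matrix.dotProduct_mulVec,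
    Matrix.mulVec_mulVec, hinv, Matrix.one_mulVec, EuclideanSpace.real_norm_sq_eq]
  simp [dotProduct, sq]

/-- `‖A‖² = ‖A Aᴴ‖` in operator norm, in square root form. -/
lemma norm_toEuclideanCLM_eq_sqrt {n : ℕ} (A : Matrix (Fin n) (Fin n) ℝ) :
    ‖Matrix.toEuclideanCLM (𝕜 := ℝ) A‖ =
      √‖Matrix.toEuclideanCLM (𝕜 := ℝ) (A * A.conjTranspose)‖ := by
  rw [map_mul, ← Matrix.star_eq_conjTranspose, map_star,
    CStarRing.norm_self_mul_star (x := Matrix.toEuclideanCLM (𝕜 := ℝ) A), Real.sqrt_mul_self (norm_nonneg _)]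

lemma le_two_mul_exp_sq_div_eight (r : ℝ) : r ≤ 2 * exp (r ^ 2 / 8) := by
  refine le_of_sq_le_sq ?_ (by positivity)
  have h := add_one_le_exp (r ^ 2 / 4)
  have h2 : exp (r ^ 2 / 8) ^ 2 = exp (r ^ 2 / 4) := by
    rw [← exp_nat_mul]; ring_nf
  nlinarith

/-- Pointwise Chernoff-type bound for a truncated function of at most linear growth against the
Gaussian weight. -/
lemma exp_mul_le_of_growth {n T : ℕ} (hT : 1 ≤ T) {r s y : ℝ} (hs : 0 ≤ s)
    (hvanish : r ^ 2 ≤ 20 * n * log T → y = 0) (hgrowth : y ≤ T * (s * r) + 2) :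
    exp (-(1 / 2) * r ^ 2) * y ≤
      (2 * T * s + 2) * ((T : ℝ) ^ (5 * n))⁻¹ * exp (-(1 / 8) * r ^ 2) := by
  have hT0 : (0 : ℝ) < T := by exact_mod_cast hT
  rcases le_or_gt (r ^ 2) (20 * n * log T) with h | h
  · rw [hvanish h, mul_zero]; positivity
  have htail : exp (-(1 / 4) * r ^ 2) ≤ ((T : ℝ) ^ (5 * n))⁻¹ := by
    have : ((T : ℝ) ^ (5 * n))⁻¹ = exp (-(5 * n * log T)) := by
      rw [exp_neg, ← exp_log (pow_pos hT0 (5 * n)), log_pow]; push_cast; rfl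
    rw [this, exp_le_exp]; linarith
  have hy : y ≤ (2 * T * s + 2) * exp (r ^ 2 / 8) := by
    have h1 : (1 : ℝ) ≤ exp (r ^ 2 / 8) := one_le_exp (by positivity)
    have h2 := mul_le_mul_of_nonneg_left (le_two_mul_exp_sq_div_eight r)
      (by positivity : 0 ≤ T * s)
    nlinarith
  calc exp (-(1 / 2) * r ^ 2) * y
      ≤ exp (-(1 / 2) * r ^ 2) * ((2 * T * s + 2) * exp (r ^ 2 / 8)) := by gcongr
    _ = (2 * T * s + 2) * exp (-(1 / 4) * r ^ 2) * exp (-(1 / 8) * r ^ 2) := by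
      rw [mul_left_comm, ← exp_add, mul_assoc (2 * T * s + 2), ← exp_add]; ring_nf
    _ ≤ _ := by gcongr

lemma two_div_pow_mul_le {n T : ℕ} (hn : 1 ≤ n) (hT : 10 ≤ T) {s : ℝ} (hs : 0 ≤ s) :
    (2 * T * s + 2) * ((T : ℝ) ^ (5 * n))⁻¹ * 2 ^ n ≤ (s + 1) / (T : ℝ) ^ 3 := by
  have hT10 : (10 : ℝ) ≤ T := by exact_mod_cast hT
  have hT0 : (0 : ℝ) < T := by linarith
  have hT5 : (2 : ℝ) ≤ (T : ℝ) ^ 5 := by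
    linarith [le_self_pow₀ (by linarith : (1 : ℝ) ≤ T) (by norm_num : 5 ≠ 0)]
  have hpow : ((T : ℝ) ^ (5 * n))⁻¹ * 2 ^ n ≤ 2 / (T : ℝ) ^ 5 := by
    rw [pow_mul, ← inv_pow, ← mul_pow, inv_mul_eq_div]
    exact pow_le_of_le_one (by positivity) ((div_le_one (by positivity)).mpr hT5) (by omega)
  calc (2 * T * s + 2) * ((T : ℝ) ^ (5 * n))⁻¹ * 2 ^ n
      ≤ (2 * T * s + 2) * (2 / (T : ℝ) ^ 5) := by rw [mul_assoc]; gcongr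
    _ = (4 * T * s + 4) / (T : ℝ) ^ 2 / (T : ℝ) ^ 3 := by field_simp; ring
    _ ≤ (s + 1) / (T : ℝ) ^ 3 := by
      gcongr
      rw [div_le_iff₀ (by positivity)]
      nlinarith [mul_nonneg hs hT0.le, mul_nonneg (mul_nonneg hs hT0.le) (sub_nonneg.mpr hT10)]

/-- The Gaussian normalisation of `exp (-|z|² / 8)`. -/
lemma integral_exp_neg_sq_norm_div_eight (n : ℕ) :
    ∫ z : EuclideanSpace ℝ (Fin n), exp (-(1 / 8) * ‖z‖ ^ 2) = (2 * π) ^ ((n : ℝ) / 2) * 2 ^ n := by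
  rw [GaussianFourier.integral_rexp_neg_mul_sq_norm (by norm_num), finrank_euclideanSpace_fin,
    show π / (1 / 8) = (2 * π) * 2 ^ 2 by ring, mul_rpow (by positivity) (by positivity),
    ← rpow_natCast_mul (by norm_num)]
  congr 1
  rw [← rpow_natCast]
  congr 1
  push_cast
  ring

/-- **Lemma 7.2.** Gaussian tail estimate: if `X ∼ N(0, Θ)` and `f ≥ 0` vanishes on
`{⟨x, Θ⁻¹x⟩ ≤ 20 n log T}` and satisfies `f(x) ≤ T|x| + 2`, then
`E f(X) ≤ (‖Θ‖_op^{1/2} + 1)/T³`. -/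
theorem gaussian_tail
    (n : ℕ) (hn : 1 ≤ n) (T : ℕ) (hT : 10 ≤ T)
    (Θ : Matrix (Fin n) (Fin n) ℝ) (hΘ : Θ.PosDef)
    (f : EuclideanSpace ℝ (Fin n) → ℝ) (hfmeas : Measurable f) (hf0 : ∀ x, 0 ≤ f x)
    (hvanish : ∀ x : EuclideanSpace ℝ (Fin n),
      (∑ i, ∑ j, x i * Θ⁻¹ i j * x j) ≤ 20 * n * Real.log T → f x = 0)
    (hgrowth : ∀ x, f x ≤ T * ‖x‖ + 2) :
    ∫ x, gaussPdf n 0 Θ x * f x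
      ≤ (Real.sqrt ‖Matrix.toEuclideanCLM (𝕜 := ℝ) Θ‖ + 1) / (T : ℝ) ^ 3 := by
  obtain ⟨A, hA, rfl⟩ := hΘ.exists_eq_mul_conjTranspose
  rw [← norm_toEuclideanCLM_eq_sqrt]
  set L := Matrix.toEuclideanCLM (𝕜 := ℝ) A with hL
  set K := (2 * T * ‖L‖ + 2) * ((T : ℝ) ^ (5 * n))⁻¹
  set c := (2 * π) ^ (-(n : ℝ) / 2) * (A * A.conjTranspose).det ^ (-(1 : ℝ) / 2) with hc
  have hc0 : 0 ≤ c := mul_nonneg (by positivity) (rpow_nonneg hΘ.det_pos.le _)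
  have hpdf (z) : gaussPdf n 0 (A * A.conjTranspose) (L z) = c * exp (-(1 / 2) * ‖z‖ ^ 2) := by
    simp only [gaussPdf, PiLp.zero_apply, sub_zero]
    rw [hL, quadForm_inv_mul_conjTranspose hA]
  have hcdet : |A.det| * c * (2 * π) ^ ((n : ℝ) / 2) = 1 := by
    have hdet : (A * A.conjTranspose).det ^ (-(1 : ℝ) / 2) = |A.det|⁻¹ := by
      rw [Matrix.det_mul, Matrix.conjTranspose_eq_transpose_of_trivial, Matrix.det_transpose,
        neg_div, rpow_neg (mul_self_nonneg _), ← sqrt_eq_rpow, sqrt_mul_self_eq_abs]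
    have hdet0 : |A.det| ≠ 0 := abs_ne_zero.mpr hA
    rw [hc, hdet, neg_div, rpow_neg (by positivity)]
    field_simp
  have hint : Integrable fun z : EuclideanSpace ℝ (Fin n) => exp (-(1 / 8) * ‖z‖ ^ 2) := by
    refine not_imp_comm.mp integral_undef ?_
    rw [integral_exp_neg_sq_norm_div_eight]
    positivity
  have hbound (z) : gaussPdf n 0 (A * A.conjTranspose) (L z) * f (L z) ≤
      c * K * exp (-(1 / 8) * ‖z‖ ^ 2) := by
    rw [hpdf, mul_assoc c, mul_assoc c]
    refine mul_le_mul_of_nonneg_left (exp_mul_le_of_growth (by omega : 1 ≤ T)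
      (norm_nonneg L) (fun h => hvanish _ ?_) ((hgrowth _).trans ?_)) hc0
    · rwa [hL, quadForm_inv_mul_conjTranspose hA]
    · gcongr
      exact L.le_opNorm z
  calc ∫ x, gaussPdf n 0 (A * A.conjTranspose) x * f x
      = |A.det| * ∫ z, gaussPdf n 0 (A * A.conjTranspose) (L z) * f (L z) :=
        integral_eq_abs_det_mul_integral_comp_toEuclideanCLM hA _
    _ ≤ |A.det| * ∫ z : EuclideanSpace ℝ (Fin n), c * K * exp (-(1 / 8) * ‖z‖ ^ 2) := by
        refine mul_le_mul_of_nonneg_left (integral_mono_of_nonneg (.of_forall fun z => ?_)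
          (hint.const_mul _) (.of_forall hbound)) (abs_nonneg _)
        simp only [hpdf, Pi.zero_apply]
        exact mul_nonneg (mul_nonneg hc0 (exp_pos _).le) (hf0 _)
    _ = (|A.det| * c * (2 * π) ^ ((n : ℝ) / 2)) * (K * 2 ^ n) := by
        rw [integral_const_mul, integral_exp_neg_sq_norm_div_eight]
        ring
    _ ≤ (‖L‖ + 1) / (T : ℝ) ^ 3 := by
        rw [hcdet, one_mul]
        exact two_div_pow_mul_le hn hT (norm_nonneg L)
end
end

section
/- Let ε ∈ (0,1) and let f, g be nonnegative measurable functions on ℝ with 0 < ∫ f, such that ∫ (x² + 1)·f(x) dx < ∞ and ε < g(x)/f(x) < 1/ε for all x (in particular f(x) > 0 where relevant). Define E[h] = (∫ x·h(x) dx)/(∫ h(x) dx) and Var[h] = (∫ x²·h(x) dx)/(∫ h(x) dx) − E[h]² for a nonnegative integrable h. Then |E[f] − E[g]| < √(Var[f])/(2ε²) and ε² ≤ Var[g]/Var[f] ≤ 1/ε². -/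
open MeasureTheory Real

noncomputable section

/-- Mean of an (unnormalized) density `h` on `ℝ`. -/
def densMean1 (h : ℝ → ℝ) : ℝ := (∫ x, x * h x) / ∫ x, h x

/-- Variance of an (unnormalized) density `h` on `ℝ`. -/
def densVar1 (h : ℝ → ℝ) : ℝ := (∫ x, x ^ 2 * h x) / (∫ x, h x) - densMean1 h ^ 2

/-- Bias-variance decomposition of the second moment of a density about a point. -/
theorem integral_sub_sq_mul_eq (h : ℝ → ℝ) (h_int : Integrable h)
    (h_int_one : Integrable fun x => x * h x) (h_int_two : Integrable fun x => x ^ 2 * h x)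
    (h_pos : 0 < ∫ x, h x) (a : ℝ) :
    ∫ x, (x - a) ^ 2 * h x = (∫ x, h x) * (densVar1 h + (densMean1 h - a) ^ 2) := by
  have expand : (fun x => (x - a) ^ 2 * h x) =
      fun x => (x ^ 2 * h x - 2 * a * (x * h x)) + a ^ 2 * h x := by
    funext x; ring
  have int_sub : Integrable fun x => x ^ 2 * h x - 2 * a * (x * h x) :=
    h_int_two.sub (h_int_one.const_mul _)
  rw [expand, integral_add int_sub (h_int.const_mul _),
    integral_sub h_int_two (h_int_one.const_mul _), integral_const_mul, integral_const_mul]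
  unfold densVar1 densMean1
  field_simp
  ring

/-- First moment of a density about a point. -/
theorem integral_sub_mul_eq (h : ℝ → ℝ) (h_int : Integrable h)
    (h_int_one : Integrable fun x => x * h x) (h_pos : 0 < ∫ x, h x) (a : ℝ) :
    ∫ x, (x - a) * h x = (∫ x, h x) * (densMean1 h - a) := by
  simp only [sub_mul]
  rw [integral_sub h_int_one (h_int.const_mul _), integral_const_mul]
  unfold densMean1
  field_simp

/-- A density with finite second moment has finite moments of order zero, one and two. -/
theorem integrable_moments_of_integrable_sq_add_one_mul (h : ℝ → ℝ) (h_meas : Measurable h)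
    (h_int : Integrable fun x => (x ^ 2 + 1) * h x) :
    Integrable h ∧ (Integrable fun x => x * h x) ∧ Integrable fun x => x ^ 2 * h x := by
  refine ⟨h_int.mono (by fun_prop) (.of_forall fun x => ?_),
    h_int.mono (by fun_prop) (.of_forall fun x => ?_),
    h_int.mono (by fun_prop) (.of_forall fun x => ?_)⟩ <;>
  simp only [norm_mul, Real.norm_eq_abs]
  · refine le_mul_of_one_le_left (abs_nonneg _) ?_
    rw [abs_of_nonneg (by positivity)]
    nlinarith [sq_nonneg x]
  · refine mul_le_mul_of_nonneg_right ?_ (abs_nonneg _)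
    rw [abs_of_nonneg (by positivity : (0 : ℝ) ≤ x ^ 2 + 1)]
    nlinarith [sq_nonneg (|x| - 1), sq_abs x, abs_nonneg x]
  · gcongr
    exact (lt_add_one _).le

/-- The mean absolute deviation is at most the standard deviation. -/
theorem integral_abs_sub_mean_mul_le (h : ℝ → ℝ) (h_nonneg : ∀ x, 0 ≤ h x)
    (h_int : Integrable h) (h_int_one : Integrable fun x => x * h x)
    (h_int_two : Integrable fun x => x ^ 2 * h x) (h_pos : 0 < ∫ x, h x)
    (h_var : 0 < densVar1 h)
    (h_int_abs : Integrable fun x => |x - densMean1 h| * h x)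
    (h_int_sq : Integrable fun x => (x - densMean1 h) ^ 2 * h x) :
    ∫ x, |x - densMean1 h| * h x ≤ √(densVar1 h) * ∫ x, h x := by
  have sd_pos : 0 < √(densVar1 h) := Real.sqrt_pos.2 h_var
  have sd_sq : √(densVar1 h) ^ 2 = densVar1 h := Real.sq_sqrt h_var.le
  have second_moment := integral_sub_sq_mul_eq h h_int h_int_one h_int_two h_pos (densMean1 h)
  have young : ∫ x, 2 * √(densVar1 h) * (|x - densMean1 h| * h x) ≤
      ∫ x, ((x - densMean1 h) ^ 2 * h x + densVar1 h * h x) := by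
    refine integral_mono (h_int_abs.const_mul _) (h_int_sq.add (h_int.const_mul _)) fun x => ?_
    have key := mul_nonneg (sq_nonneg (|x - densMean1 h| - √(densVar1 h))) (h_nonneg x)
    rw [sub_sq, sq_abs, sd_sq] at key
    simp only
    linarith
  rw [integral_const_mul, integral_add h_int_sq (h_int.const_mul _), integral_const_mul,
    second_moment] at young
  refine le_of_mul_le_mul_left ?_ (mul_pos two_pos sd_pos)
  calc _ ≤ _ := young
    _ = _ := by linear_combination (-2 * ∫ x, h x) * sd_sq

/-- **Lemma 7.3.** Moment comparison for multiplicatively comparable densities: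
if `ε < g/f < 1/ε` pointwise then the means differ by at most `√(Var f)/(2ε²)` and the
variances by a multiplicative factor at most `1/ε²`. -/
theorem moment_comparison
    (ε : ℝ) (hε : ε ∈ Set.Ioo (0 : ℝ) 1)
    (f g : ℝ → ℝ) (hfmeas : Measurable f) (hgmeas : Measurable g)
    (hf0 : ∀ x, 0 ≤ f x) (hg0 : ∀ x, 0 ≤ g x)
    (hfpos : 0 < ∫ x, f x)
    (hfint : Integrable fun x => (x ^ 2 + 1) * f x)
    (hratio : ∀ x, ε < g x / f x ∧ g x / f x < 1 / ε) :
    |densMean1 f - densMean1 g| < Real.sqrt (densVar1 f) / (2 * ε ^ 2) ∧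
      ε ^ 2 ≤ densVar1 g / densVar1 f ∧ densVar1 g / densVar1 f ≤ 1 / ε ^ 2 := by
  obtain ⟨ε_pos, ε_lt⟩ := hε
  have f_pos : ∀ x, 0 < f x := fun x => by
    refine (hf0 x).lt_of_ne fun h => ?_
    have := (hratio x).1
    rw [← h, div_zero] at this
    linarith
  have g_lower : ∀ x, ε * f x ≤ g x := fun x =>
    ((lt_div_iff₀ (f_pos x)).1 (hratio x).1).le
  have g_upper : ∀ x, g x ≤ 1 / ε * f x := fun x =>
    ((div_lt_iff₀ (f_pos x)).1 (hratio x).2).le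
  have gint : Integrable fun x => (x ^ 2 + 1) * g x := by
    refine (hfint.const_mul (1 / ε)).mono' (by fun_prop) (.of_forall fun x => ?_)
    rw [Real.norm_of_nonneg (mul_nonneg (by positivity) (hg0 x)), mul_left_comm]
    exact mul_le_mul_of_nonneg_left (g_upper x) (by positivity)
  obtain ⟨f_int, f_int_one, f_int_two⟩ :=
    integrable_moments_of_integrable_sq_add_one_mul f hfmeas hfint
  obtain ⟨g_int, g_int_one, g_int_two⟩ :=
    integrable_moments_of_integrable_sq_add_one_mul g hgmeas gint
  have mass_lower : ε * ∫ x, f x ≤ ∫ x, g x := by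
    rw [← integral_const_mul]
    exact integral_mono (f_int.const_mul _) g_int g_lower
  have mass_upper : ∫ x, g x ≤ 1 / ε * ∫ x, f x := by
    rw [← integral_const_mul]
    exact integral_mono g_int (f_int.const_mul _) g_upper
  have g_mass_pos : 0 < ∫ x, g x := (mul_pos ε_pos hfpos).trans_le mass_lower
  have int_sub : ∀ h : ℝ → ℝ, Integrable h → (Integrable fun x => x * h x) → ∀ a,
      Integrable fun x => (x - a) * h x := fun h h₀ h₁ a => by
    simp only [sub_mul]
    exact h₁.sub (h₀.const_mul a)
  have int_sub_sq : ∀ h : ℝ → ℝ, Integrable h → (Integrable fun x => x * h x) →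
      (Integrable fun x => x ^ 2 * h x) → ∀ a,
      Integrable fun x => (x - a) ^ 2 * h x := fun h h₀ h₁ h₂ a => by
    refine ((h₂.sub (h₁.const_mul (2 * a))).add (h₀.const_mul (a ^ 2))).congr
      (.of_forall fun x => ?_)
    simp only [Pi.add_apply, Pi.sub_apply]
    ring
  have f_int_sq := int_sub_sq f f_int f_int_one f_int_two
  have g_int_sq := int_sub_sq g g_int g_int_one g_int_two
  have f_second := integral_sub_sq_mul_eq f f_int f_int_one f_int_two hfpos
  have g_second := integral_sub_sq_mul_eq g g_int g_int_one g_int_two g_mass_pos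
  have var_pos : 0 < densVar1 f := by
    have : 0 < ∫ x, (x - densMean1 f) ^ 2 * f x := by
      rw [integral_pos_iff_support_of_nonneg
        (fun x => mul_nonneg (sq_nonneg _) (hf0 x)) (f_int_sq _)]
      have support_eq : (Function.support fun x => (x - densMean1 f) ^ 2 * f x) =
          {densMean1 f}ᶜ := by
        ext x
        simp [(f_pos x).ne', sub_eq_zero]
      rw [support_eq]
      exact isOpen_compl_singleton.measure_pos _ ⟨densMean1 f + 1, by simp⟩
    rw [f_second, sub_self] at this
    have := pos_of_mul_pos_right this hfpos.le
    linarith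
  have sq_upper : ∫ x, (x - densMean1 f) ^ 2 * g x ≤
      1 / ε * ∫ x, (x - densMean1 f) ^ 2 * f x := by
    rw [← integral_const_mul]
    refine integral_mono (g_int_sq _) ((f_int_sq _).const_mul _) fun x => ?_
    simp only [mul_left_comm (1 / ε)]
    exact mul_le_mul_of_nonneg_left (g_upper x) (sq_nonneg _)
  have sq_lower : ε * ∫ x, (x - densMean1 g) ^ 2 * f x ≤
      ∫ x, (x - densMean1 g) ^ 2 * g x := by
    rw [← integral_const_mul]
    refine integral_mono ((f_int_sq _).const_mul _) (g_int_sq _) fun x => ?_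
    simp only [mul_left_comm ε]
    exact mul_le_mul_of_nonneg_left (g_lower x) (sq_nonneg _)
  rw [f_second, g_second] at sq_upper sq_lower
  rw [sub_self] at sq_upper sq_lower
  refine ⟨?_, ?_, ?_⟩
  · have f_int_abs : Integrable fun x => |x - densMean1 f| * f x := by
      refine (int_sub f f_int f_int_one (densMean1 f)).abs.congr (.of_forall fun x => ?_)
      simp only [abs_mul, abs_of_nonneg (hf0 x)]
    have deviation := integral_abs_sub_mean_mul_le f hf0 f_int f_int_one f_int_two hfpos var_pos
      f_int_abs (f_int_sq _)
    have f_first := integral_sub_mul_eq f f_int f_int_one hfpos (densMean1 f)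
    have g_first := integral_sub_mul_eq g g_int g_int_one g_mass_pos (densMean1 f)
    have centered : ∫ x, ((x - densMean1 f) * g x
          - (ε + 1 / ε) / 2 * ((x - densMean1 f) * f x)) =
        (∫ x, g x) * (densMean1 g - densMean1 f) := by
      rw [integral_sub (int_sub g g_int g_int_one _)
        ((int_sub f f_int f_int_one _).const_mul _), integral_const_mul, f_first, g_first]
      ring
    have bound : ‖∫ x, ((x - densMean1 f) * g x
          - (ε + 1 / ε) / 2 * ((x - densMean1 f) * f x))‖ ≤
        ∫ x, (1 / ε - ε) / 2 * (|x - densMean1 f| * f x) := by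
      refine norm_integral_le_of_norm_le (f_int_abs.const_mul _) (.of_forall fun x => ?_)
      have factor : (x - densMean1 f) * g x - (ε + 1 / ε) / 2 * ((x - densMean1 f) * f x) =
          (x - densMean1 f) * (g x - (ε + 1 / ε) / 2 * f x) := by ring
      rw [factor, Real.norm_eq_abs, abs_mul, mul_left_comm]
      refine mul_le_mul_of_nonneg_left (abs_le.2 ⟨?_, ?_⟩) (abs_nonneg _)
      · linarith [g_lower x]
      · linarith [g_upper x]
    rw [centered, integral_const_mul, Real.norm_eq_abs, abs_mul, abs_of_pos g_mass_pos,
      abs_sub_comm] at bound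
    have sd_pos : 0 < √(densVar1 f) := Real.sqrt_pos.2 var_pos
    have one_lt : 1 < 1 / ε := (one_lt_div ε_pos).2 ε_lt
    refine lt_of_mul_lt_mul_left ?_ (mul_pos ε_pos hfpos).le
    calc ε * (∫ x, f x) * |densMean1 f - densMean1 g|
        ≤ (∫ x, g x) * |densMean1 f - densMean1 g| := by gcongr
      _ ≤ (1 / ε - ε) / 2 * ∫ x, |x - densMean1 f| * f x := bound
      _ ≤ (1 / ε - ε) / 2 * (√(densVar1 f) * ∫ x, f x) :=
          mul_le_mul_of_nonneg_left deviation (by linarith)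
      _ < (1 / ε) / 2 * (√(densVar1 f) * ∫ x, f x) := by
          gcongr
          linarith
      _ = ε * (∫ x, f x) * (√(densVar1 f) / (2 * ε ^ 2)) := by
          field_simp
  · rw [le_div_iff₀ var_pos]
    refine le_of_mul_le_mul_left ?_ g_mass_pos
    calc (∫ x, g x) * (ε ^ 2 * densVar1 f)
        ≤ (1 / ε * ∫ x, f x) * (ε ^ 2 * densVar1 f) := by gcongr
      _ = ε * ((∫ x, f x) * densVar1 f) := by field_simp
      _ ≤ ε * ((∫ x, f x) * (densVar1 f + (densMean1 f - densMean1 g) ^ 2)) := by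
          gcongr
          exact le_add_of_nonneg_right (sq_nonneg _)
      _ ≤ (∫ x, g x) * densVar1 g := by simpa using sq_lower
  · rw [div_le_iff₀ var_pos]
    refine le_of_mul_le_mul_left ?_ g_mass_pos
    calc (∫ x, g x) * densVar1 g
        ≤ (∫ x, g x) * (densVar1 g + (densMean1 g - densMean1 f) ^ 2) := by
          gcongr
          exact le_add_of_nonneg_right (sq_nonneg _)
      _ ≤ 1 / ε * ((∫ x, f x) * densVar1 f) := by simpa using sq_upper
      _ = (ε * ∫ x, f x) * (1 / ε ^ 2 * densVar1 f) := by field_simp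
      _ ≤ (∫ x, g x) * (1 / ε ^ 2 * densVar1 f) := by gcongr
end
end

section
/- Let n ≥ 2 and let f be an isotropic log-concave probability density on ℝⁿ. Then for every x ∈ ℝⁿ with |x| ≥ e¹⁵·n·log n, one has f(x) < exp(−|x|/e¹⁵). -/
open MeasureTheory ProbabilityTheory Real

noncomputable section

/-- A density on `ℝⁿ` with total mass `1`, mean `0` and identity covariance, expressed through
its one-dimensional moments. -/
structure IsIsotropicDensity {n : ℕ} (f : EuclideanSpace ℝ (Fin n) → ℝ) : Prop where
  nonneg : ∀ y, 0 ≤ f y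
  integrable : Integrable f
  integral_eq_one : ∫ y, f y = 1
  integrable_mul_inner : ∀ u, Integrable fun y => f y * inner ℝ y u
  integral_mul_inner : ∀ u, ∫ y, f y * inner ℝ y u = 0
  integrable_mul_inner_sq : ∀ u, Integrable fun y => f y * inner ℝ y u ^ 2
  integral_mul_inner_sq : ∀ u, ‖u‖ = 1 → ∫ y, f y * inner ℝ y u ^ 2 = 1

theorem isIsotropicDensity_of_densMean_densCov {n : ℕ} {f : EuclideanSpace ℝ (Fin n) → ℝ}
    (hf0 : ∀ x, 0 ≤ f x) (hf1 : ∫ x, f x = 1)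
    (hmean : densMean n f = 0) (hcov : densCov n f = 1) : IsIsotropicDensity f := by
  have hfi : Integrable f := integrable_of_integral_eq_one hf1
  have hcov' : ∀ i j, ∫ x, f x * (x i * x j) = (1 : Matrix (Fin n) (Fin n) ℝ) i j := by
    intro i j
    have h := congrFun (congrFun hcov i) j
    simpa [densCov, hmean] using h
  have hdiag : ∀ i, Integrable fun x => f x * (x i * x i) := fun i =>
    integrable_of_integral_eq_one (by simpa using hcov' i i)
  have hoff : ∀ i j, Integrable fun x => f x * (x i * x j) := by
    intro i j
    refine ((hdiag i).add (hdiag j)).mono' ?_ (ae_of_all _ fun x => ?_)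
    · exact hfi.aestronglyMeasurable.mul (by fun_prop)
    · rw [Real.norm_eq_abs, abs_mul, abs_of_nonneg (hf0 x), Pi.add_apply, ← mul_add]
      refine mul_le_mul_of_nonneg_left (abs_le.2 ⟨?_, ?_⟩) (hf0 x) <;>
        nlinarith [sq_nonneg (x i + x j), sq_nonneg (x i - x j), sq_nonneg (x i), sq_nonneg (x j)]
  have hexp : ∀ u : EuclideanSpace ℝ (Fin n), (fun y => f y * inner ℝ y u ^ 2) =
      fun y => ∑ i, ∑ j, (u i * u j) * (f y * (y i * y j)) := by
    intro u
    funext y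
    simp only [PiLp.inner_apply, RCLike.inner_apply, conj_trivial]
    rw [sq, Finset.sum_mul_sum, Finset.mul_sum]
    simp only [Finset.mul_sum]
    refine Finset.sum_congr rfl fun i _ => Finset.sum_congr rfl fun j _ => by ring
  have hsq : ∀ u, Integrable fun y => f y * inner ℝ y u ^ 2 := by
    intro u
    rw [hexp]
    exact integrable_finsetSum _ fun i _ => integrable_finsetSum _ fun j _ =>
      (hoff i j).const_mul _
  have hnormsq : Integrable fun y => f y * ‖y‖ ^ 2 := by
    have : (fun y => f y * ‖y‖ ^ 2) = fun y => ∑ i, f y * (y i * y i) := by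
      funext y
      simp only [EuclideanSpace.norm_sq_eq, Finset.mul_sum, Real.norm_eq_abs, sq_abs, ← sq]
    rw [this]
    exact integrable_finsetSum _ fun i _ => hdiag i
  have hsmul : Integrable fun y => f y • y := by
    refine (hfi.add hnormsq).mono' (hfi.aestronglyMeasurable.smul (by fun_prop))
      (ae_of_all _ fun y => ?_)
    rw [norm_smul, Real.norm_eq_abs, abs_of_nonneg (hf0 y), Pi.add_apply]
    nlinarith [mul_nonneg (hf0 y) (sq_nonneg (‖y‖ - 1)), mul_nonneg (hf0 y) (sq_nonneg ‖y‖), hf0 y]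
  refine ⟨hf0, hfi, hf1, fun u => ?_, fun u => ?_, hsq, fun u hu => ?_⟩
  · simpa [real_inner_smul_left] using hsmul.inner_const (𝕜 := ℝ) u
  · have h := integral_inner (𝕜 := ℝ) hsmul u
    have h0 : ∫ y, f y • y = 0 := hmean
    rw [h0, inner_zero_right] at h
    rw [← h]
    refine integral_congr_ae (ae_of_all _ fun y => ?_)
    simp only [real_inner_smul_right, real_inner_comm]
  · rw [hexp, integral_finsetSum _ fun i _ => integrable_finsetSum _ fun j _ =>
      (hoff i j).const_mul _]
    have : ∀ i, ∫ y, ∑ j, (u i * u j) * (f y * (y i * y j)) = u i * u i := by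
      intro i
      rw [integral_finsetSum _ fun j _ => (hoff i j).const_mul _]
      simp_rw [integral_const_mul, hcov', Matrix.one_apply]
      simp
    simp_rw [this]
    have h := EuclideanSpace.norm_sq_eq u
    rw [hu] at h
    simpa [sq] using h.symm

theorem integral_exp_neg_mul_abs {b : ℝ} (hb : 0 < b) : ∫ x : ℝ, exp (-b * |x|) = 2 / b := by
  rw [integral_comp_abs (f := fun x => exp (-b * x)), integral_exp_mul_Ioi (by linarith)]
  field_simp
  simp

theorem integral_prod_exp_neg_mul_abs (n : ℕ) {b : ℝ} (hb : 0 < b) :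
    ∫ y : EuclideanSpace ℝ (Fin n), ∏ i, exp (-b * |y i|) = (2 / b) ^ n := by
  have h := (EuclideanSpace.volume_preserving_symm_measurableEquiv_toLp (Fin n)).integral_comp'
    (fun y : Fin n → ℝ => ∏ i, exp (-b * |y i|))
  have h2 := integral_fintype_prod_volume_eq_pow (ι := Fin n) (fun x : ℝ => exp (-b * |x|))
  rw [integral_exp_neg_mul_abs hb, Fintype.card_fin] at h2
  rw [← h2, ← h]
  rfl

theorem exp_neg_mul_norm_le_prod {n : ℕ} (hn : 0 < n) {b : ℝ} (hb : 0 ≤ b)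
    (y : EuclideanSpace ℝ (Fin n)) :
    exp (-b * ‖y‖) ≤ ∏ i, exp (-(b / n) * |y i|) := by
  rw [← Real.exp_sum, exp_le_exp, ← Finset.mul_sum]
  have hsum : ∑ i, |y i| ≤ n * ‖y‖ := by
    have h := Finset.sum_le_card_nsmul Finset.univ (fun i => |y i|) ‖y‖
      fun i _ => PiLp.norm_apply_le y i
    simpa using h
  have hn' : (0 : ℝ) < n := by exact_mod_cast hn
  have h : b / n * ∑ i, |y i| ≤ b / n * (n * ‖y‖) := mul_le_mul_of_nonneg_left hsum (by positivity)
  have h' : b / n * (n * ‖y‖) = b * ‖y‖ := by field_simp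
  linarith

theorem volume_ball_ge {n : ℕ} (hn : 2 ≤ n) (x : EuclideanSpace ℝ (Fin n)) {r : ℝ} (hr : 0 ≤ r) :
    (r / n) ^ n ≤ volume.real (Metric.ball x r) := by
  have : Nonempty (Fin n) := ⟨⟨0, by omega⟩⟩
  have hn' : (2 : ℝ) ≤ n := by exact_mod_cast hn
  have hΓ0 : 0 < Gamma ((n : ℝ) / 2 + 1) := Gamma_pos_of_pos (by positivity)
  have hΓ : Gamma ((n : ℝ) / 2 + 1) ≤ (n : ℝ) ^ n := by
    calc Gamma ((n : ℝ) / 2 + 1) ≤ Gamma ((n : ℝ) + 1) :=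
          Gamma_strictMonoOn_Ici.monotoneOn (Set.mem_Ici.2 (by linarith))
            (Set.mem_Ici.2 (by linarith)) (by linarith)
      _ = (n.factorial : ℝ) := Gamma_nat_eq_factorial n
      _ ≤ (n : ℝ) ^ n := by exact_mod_cast Nat.factorial_le_pow n
  have hπ : 1 ≤ √π ^ n := one_le_pow₀ (by
    rw [Real.one_le_sqrt]; linarith [Real.pi_gt_three])
  rw [measureReal_def, EuclideanSpace.volume_ball, Fintype.card_fin, ENNReal.toReal_mul,
    ENNReal.toReal_pow, ENNReal.toReal_ofReal hr, ENNReal.toReal_ofReal (by positivity), div_pow,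
    div_eq_mul_inv, ← one_div]
  gcongr

theorem integral_comp_smul_add {n : ℕ} (F : EuclideanSpace ℝ (Fin n) → ℝ) {a : ℝ} (ha : 0 < a)
    (v : EuclideanSpace ℝ (Fin n)) : ∫ y, F (a • y + v) = (a ^ n)⁻¹ * ∫ y, F y := by
  rw [Measure.integral_comp_smul volume (fun y => F (y + v)) a, integral_add_right_eq_self,
    finrank_euclideanSpace_fin, abs_of_pos (by positivity), smul_eq_mul]

theorem IsIsotropicDensity.integrable_indicator_Ioi {n : ℕ} {f : EuclideanSpace ℝ (Fin n) → ℝ}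
    (hf : IsIsotropicDensity f) (M : ℝ) :
    Integrable fun y => (Set.Ioi M).indicator id (f y) := by
  refine hf.integrable.mono' ?_ (ae_of_all _ fun y => ?_)
  · exact ((measurable_id.indicator measurableSet_Ioi).comp_aemeasurable
      hf.integrable.aemeasurable).aestronglyMeasurable
  · exact (norm_indicator_le_norm_self id (f y)).trans_eq (abs_of_nonneg (hf.nonneg y))

/-- Levels that the density exceeds only with small probability exist. -/
theorem IsIsotropicDensity.exists_integral_indicator_le {n : ℕ}
    {f : EuclideanSpace ℝ (Fin n) → ℝ} (hf : IsIsotropicDensity f) :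
    ∃ k : ℕ, ∫ y, (Set.Ioi ((2 : ℝ) ^ k)).indicator id (f y) ≤ 1 / 4 := by
  have hlim : Filter.Tendsto (fun k : ℕ => ∫ y, (Set.Ioi ((2 : ℝ) ^ k)).indicator id (f y))
      Filter.atTop (nhds (∫ _ : EuclideanSpace ℝ (Fin n), (0 : ℝ))) := by
    refine tendsto_integral_of_dominated_convergence f
      (fun k => (hf.integrable_indicator_Ioi _).aestronglyMeasurable) hf.integrable
      (fun k => ae_of_all _ fun y => ?_) (ae_of_all _ fun y => ?_)
    · exact (norm_indicator_le_norm_self id (f y)).trans_eq (abs_of_nonneg (hf.nonneg y))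
    · refine tendsto_const_nhds.congr' ?_
      filter_upwards [(tendsto_pow_atTop_atTop_of_one_lt
        (one_lt_two : (1 : ℝ) < 2)).eventually_ge_atTop (f y)] with k hk
      rw [Set.indicator_of_notMem (by simpa using hk)]
  rw [integral_zero] at hlim
  exact (hlim.eventually_le_const (by norm_num : (0 : ℝ) < 1 / 4)).exists

/-- Contracting the bulk of the density towards a far point `x` moves it to a region of small
probability, so the density at `x` must be exponentially small. -/
theorem IsIsotropicDensity.le_mul_exp_of_quantile {n : ℕ} {f : EuclideanSpace ℝ (Fin n) → ℝ}
    (hf : IsIsotropicDensity f) (hlc : IsLogConcave f) {M : ℝ} (hM : 1 ≤ M)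
    (hq : ∫ y, (Set.Ioi M).indicator id (f y) ≤ 1 / 4)
    {x : EuclideanSpace ℝ (Fin n)} (hx : 20 ≤ ‖x‖) :
    f x ≤ M * 4 ^ n * exp (-(‖x‖ / 3)) := by
  have hM0 : 0 < M := by linarith
  have hR : 0 < ‖x‖ := by linarith
  rcases (hf.nonneg x).eq_or_lt with h0 | hfx
  · rw [← h0]; positivity
  set t : ℝ := 10 / ‖x‖ with ht
  have ht0 : 0 < t := by positivity
  have ht2 : t ≤ 1 / 2 := by rw [ht, div_le_iff₀ hR]; linarith
  set u : EuclideanSpace ℝ (Fin n) := ‖x‖⁻¹ • x with hu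
  have hu1 : ‖u‖ = 1 := by
    rw [hu, norm_smul, norm_inv, norm_norm, inv_mul_cancel₀ hR.ne']
  have hxu : t * inner ℝ x u = 10 := by
    rw [hu, real_inner_smul_right, real_inner_self_eq_norm_sq, ht]
    field_simp
  set F : EuclideanSpace ℝ (Fin n) → ℝ := fun y => f y * inner ℝ y u ^ 2 with hF
  set C : ℝ := 64 * (f x / M) ^ t with hC
  have hC0 : 0 < C := by positivity
  have key : ∀ y, C * (f y - F y / 4 - (Set.Ioi M).indicator id (f y)) ≤
      F ((1 - t) • y + t • x) := by
    intro y
    have hF0 : 0 ≤ F ((1 - t) • y + t • x) := mul_nonneg (hf.nonneg _) (sq_nonneg _)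
    have hind0 : 0 ≤ (Set.Ioi M).indicator id (f y) :=
      Set.indicator_apply_nonneg fun _ => hf.nonneg y
    have hFy0 : 0 ≤ F y := mul_nonneg (hf.nonneg _) (sq_nonneg _)
    by_cases hpos : f y - F y / 4 - (Set.Ioi M).indicator id (f y) ≤ 0
    · exact (mul_nonpos_of_nonneg_of_nonpos hC0.le hpos).trans hF0
    push Not at hpos
    have hyM : f y ≤ M := by
      by_contra! hlt
      rw [Set.indicator_of_mem (Set.mem_Ioi.2 hlt), id] at hpos
      linarith
    have hfy : 0 < f y := by linarith
    have hW : inner ℝ y u ^ 2 < 4 := by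
      have : f y * inner ℝ y u ^ 2 < f y * 4 := by
        change F y < _
        linarith
      exact lt_of_mul_lt_mul_left this hfy.le
    have hW' : -2 < inner ℝ y u := by nlinarith
    have hz : 8 ≤ inner ℝ ((1 - t) • y + t • x) u := by
      rw [inner_add_left, real_inner_smul_left, real_inner_smul_left, hxu]
      nlinarith
    have hlow : (f x / M) ^ t * f y ≤ f ((1 - t) • y + t • x) := by
      refine le_trans ?_ (hlc.2 y x (1 - t) t (by linarith) ht0.le (by ring))
      have h1 : f y ^ (1 - t) = f y / f y ^ t := by
        rw [rpow_sub hfy, rpow_one]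
      rw [h1, div_rpow hfx.le hM0.le, div_mul_eq_mul_div, div_mul_eq_mul_div, mul_comm (f y)]
      have : f y ^ t ≤ M ^ t := rpow_le_rpow hfy.le hyM ht0.le
      have hp : 0 < f y ^ t := by positivity
      gcongr
    calc C * (f y - F y / 4 - (Set.Ioi M).indicator id (f y)) ≤ C * f y := by
          gcongr; linarith
      _ = ((f x / M) ^ t * f y) * 8 ^ 2 := by rw [hC]; ring
      _ ≤ F ((1 - t) • y + t • x) := by
          rw [hF]
          have := hf.nonneg ((1 - t) • y + t • x)
          dsimp only
          gcongr
  have hFi : Integrable F := hf.integrable_mul_inner_sq u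
  have hF1 : ∫ y, F y = 1 := hf.integral_mul_inner_sq u hu1
  have hcomp : ∫ y, F ((1 - t) • y + t • x) = ((1 - t) ^ n)⁻¹ := by
    rw [integral_comp_smul_add F (by linarith), hF1, mul_one]
  have hpos : 0 < (1 - t) ^ n := pow_pos (by linarith) n
  have hcompi : Integrable fun y => F ((1 - t) • y + t • x) :=
    .of_integral_ne_zero (by rw [hcomp]; positivity)
  have hsub : Integrable fun y => f y - F y / 4 := hf.integrable.sub (hFi.div_const 4)
  have hint := integral_mono ((hsub.sub (hf.integrable_indicator_Ioi M)).const_mul C) hcompi key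
  have hsplit : ∫ y, (f y - F y / 4 - (Set.Ioi M).indicator id (f y)) =
      1 - 1 / 4 - ∫ y, (Set.Ioi M).indicator id (f y) := by
    rw [integral_sub hsub (hf.integrable_indicator_Ioi M),
      integral_sub hf.integrable (hFi.div_const 4), hf.integral_eq_one, integral_div, hF1]
  have hhalf : 1 / 2 ≤ ∫ y, (f y - F y / 4 - (Set.Ioi M).indicator id (f y)) := by
    rw [hsplit]; linarith
  rw [hcomp, integral_const_mul] at hint
  have h32 : 32 * (f x / M) ^ t ≤ ((1 - t) ^ n)⁻¹ := by
    refine le_trans ?_ hint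
    calc 32 * (f x / M) ^ t = C * (1 / 2) := by rw [hC]; ring
      _ ≤ _ := mul_le_mul_of_nonneg_left hhalf hC0.le
  have hlog : log 32 + t * log (f x / M) ≤ -(n * log (1 - t)) := by
    have h := log_le_log (by positivity) h32
    rwa [log_mul (by norm_num) (by positivity), log_rpow (by positivity), log_inv, log_pow] at h
  have hlog1 : -log (1 - t) ≤ t * log 4 := by
    have hconc := strictConcaveOn_log_Ioi.concaveOn.2 (Set.mem_Ioi.2 one_pos)
      (Set.mem_Ioi.2 (by norm_num : (0 : ℝ) < 1 / 2)) (by linarith : (0 : ℝ) ≤ 1 - 2 * t)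
      (by linarith : (0 : ℝ) ≤ 2 * t) (by ring)
    simp only [smul_eq_mul, log_one, mul_zero, zero_add] at hconc
    have h4 : log 4 = 2 * log 2 := by
      rw [show (4 : ℝ) = 2 ^ 2 by norm_num, log_pow]; norm_num
    rw [one_div, log_inv, show (1 - 2 * t) * 1 + 2 * t * 2⁻¹ = 1 - t by ring] at hconc
    rw [h4]; linarith
  have hlog32 : 10 / 3 ≤ log 32 := by
    rw [show (32 : ℝ) = 2 ^ 5 by norm_num, log_pow]
    have := Real.log_two_gt_d9
    push_cast
    linarith
  have hmul : t * log (f x / M) ≤ t * (n * log 4 - ‖x‖ / 3) := by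
    have h1 : t * (‖x‖ / 3) = 10 / 3 := by rw [ht]; field_simp
    have h2 : n * -log (1 - t) ≤ n * (t * log 4) := by gcongr
    nlinarith
  have hfin := le_of_mul_le_mul_left hmul ht0
  rw [log_le_iff_le_exp (by positivity), div_le_iff₀ hM0] at hfin
  have hexp : exp (n * log 4 - ‖x‖ / 3) = 4 ^ n * exp (-(‖x‖ / 3)) := by
    rw [sub_eq_add_neg, exp_add, ← log_pow, exp_log (by positivity)]
  rw [hexp] at hfin
  linarith

theorem IsLogConcave.convex_superlevel {E : Type*} [AddCommMonoid E] [Module ℝ E] {g : E → ℝ}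
    (hg : IsLogConcave g) {m : ℝ} (hm : 0 < m) : Convex ℝ {y | m ≤ g y} := by
  intro x hx y hy a b ha hb hab
  refine le_trans ?_ (hg.2 x y a b ha hb hab)
  calc m = m ^ a * m ^ b := by rw [← rpow_add hm, hab, rpow_one]
    _ ≤ g x ^ a * g y ^ b :=
      mul_le_mul (rpow_le_rpow hm.le hx ha) (rpow_le_rpow hm.le hy hb) (by positivity)
        (rpow_nonneg (hg.1 x) a)

/-- If an isotropic density has exponential tails, its superlevel sets are not contained in a
half-space that barely passes the origin. -/
theorem IsIsotropicDensity.not_ae_inner_le {n : ℕ} (hn : 0 < n)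
    {f : EuclideanSpace ℝ (Fin n) → ℝ} (hf : IsIsotropicDensity f) {L : ℝ} (hL : 20 ≤ L)
    (htail : ∀ y, 20 ≤ ‖y‖ → f y ≤ exp (11 / 10 * L - ‖y‖ / 3))
    (hsmall : exp (-(2 / 5 * L)) * ((240 * L + 288) * (24 * n) ^ n) ≤ 1 / 4)
    {u : EuclideanSpace ℝ (Fin n)} (hu : ‖u‖ = 1) :
    ¬ ∀ᵐ y, exp (-(2 * L)) ≤ f y → inner ℝ y u ≤ 1 / (40 * L) := by
  intro hae
  set c : ℝ := 1 / (40 * L) with hc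
  have hc0 : 0 < c := by positivity
  have hLc : 10 * L * c = 1 / 4 := by rw [hc]; field_simp; norm_num
  have hcL : c ≤ 10 * L := by
    have : c ≤ 1 := by rw [hc, div_le_one (by positivity)]; linarith
    linarith
  set D : ℝ := exp (-(2 / 5 * L)) * (240 * L + 288) with hD
  have hD0 : 0 < D := by positivity
  have hb : (0 : ℝ) < 1 / 12 / n := by
    have : (0 : ℝ) < n := by exact_mod_cast hn
    positivity
  have hPint := integral_prod_exp_neg_mul_abs n hb
  have h24 : 2 / (1 / 12 / (n : ℝ)) = 24 * n := by
    have : (0 : ℝ) < n := by exact_mod_cast hn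
    field_simp
    norm_num
  rw [h24] at hPint
  set P : EuclideanSpace ℝ (Fin n) → ℝ := fun y => ∏ i, exp (-(1 / 12 / (n : ℝ)) * |y i|) with hP
  have hPi : Integrable P := .of_integral_ne_zero (by
    rw [hPint]
    have : (0 : ℝ) < n := by exact_mod_cast hn
    positivity)
  have key : ∀ᵐ y, f y * inner ℝ y u ^ 2 ≤
      10 * L * c * f y + (c - 10 * L) * (f y * inner ℝ y u) + D * P y := by
    filter_upwards [hae] with y hy
    have hW : |inner ℝ y u| ≤ ‖y‖ := by
      simpa [hu] using abs_real_inner_le_norm y u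
    obtain ⟨hW1, hW2⟩ := abs_le.1 hW
    have hP0 : 0 ≤ P y := Finset.prod_nonneg fun i _ => (exp_pos _).le
    have hf0 := hf.nonneg y
    set W := inner ℝ y u
    set r := ‖y‖
    have hr : 0 ≤ r := norm_nonneg y
    by_cases hK : exp (-(2 * L)) ≤ f y
    · have hrL : r ≤ 10 * L := by
        by_contra! hlt
        have h := hK.trans (htail y (by change 20 ≤ r; linarith))
        rw [exp_le_exp] at h
        change -(2 * L) ≤ 11 / 10 * L - r / 3 at h
        linarith
      have hWc := hy hK
      have h1 : 0 ≤ (W + 10 * L) * (c - W) := mul_nonneg (by linarith) (by linarith)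
      have h2 := mul_nonneg hf0 h1
      have h3 := mul_nonneg hD0.le hP0
      nlinarith
    · push Not at hK
      have hfle : f y ≤ exp (-(2 / 5 * L)) * exp (-(r / 6)) := by
        rw [← exp_add]
        rcases le_or_gt r (9 * L) with h9 | h9
        · exact hK.le.trans (exp_le_exp.2 (by linarith))
        · refine (htail y (by change 20 ≤ r; linarith)).trans (exp_le_exp.2 ?_)
          change 11 / 10 * L - r / 3 ≤ _
          linarith
      have hq : 20 * L * r + r ^ 2 ≤ (240 * L + 288) * exp (r / 12) := by
        have h1 := quadratic_le_exp_of_nonneg (x := r / 12) (by positivity)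
        nlinarith [mul_nonneg (by linarith : 0 ≤ L) (sq_nonneg r)]
      have hexp : exp (-(r / 6)) * exp (r / 12) ≤ P y := by
        rw [← exp_add]
        refine le_trans (le_of_eq ?_) (exp_neg_mul_norm_le_prod hn (by norm_num) y)
        congr 1
        change _ = -(1 / 12) * r
        ring
      have hDP : f y * (20 * L * r + r ^ 2) ≤ D * P y := by
        calc f y * (20 * L * r + r ^ 2)
            ≤ (exp (-(2 / 5 * L)) * exp (-(r / 6))) * ((240 * L + 288) * exp (r / 12)) :=
              mul_le_mul hfle hq (by positivity) (by positivity)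
          _ = D * (exp (-(r / 6)) * exp (r / 12)) := by rw [hD]; ring
          _ ≤ D * P y := by gcongr
      have hmain : W ^ 2 ≤ 10 * L * c + (c - 10 * L) * W + (20 * L * r + r ^ 2) := by
        have h1 : W ^ 2 ≤ r ^ 2 := sq_le_sq' hW1 hW2
        have h2 : 0 ≤ (10 * L - c) * (r - W) := mul_nonneg (by linarith) (by linarith)
        nlinarith [mul_nonneg hc0.le hr, mul_nonneg (by linarith : 0 ≤ L) hr]
      nlinarith [mul_le_mul_of_nonneg_left hmain hf0]
  have hi1 : Integrable fun y => 10 * L * c * f y := hf.integrable.const_mul _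
  have hi2 : Integrable fun y => (c - 10 * L) * (f y * inner ℝ y u) :=
    (hf.integrable_mul_inner u).const_mul _
  have hi12 : Integrable fun y => 10 * L * c * f y + (c - 10 * L) * (f y * inner ℝ y u) :=
    hi1.add hi2
  have hint := integral_mono_ae (hf.integrable_mul_inner_sq u) (hi12.add (hPi.const_mul D)) key
  simp only [Pi.add_apply] at hint
  rw [hf.integral_mul_inner_sq u hu, integral_add hi12 (hPi.const_mul D), integral_add hi1 hi2,
    integral_const_mul, integral_const_mul, integral_const_mul, hf.integral_eq_one,
    hf.integral_mul_inner, hPint, hLc, hD, mul_assoc] at hint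
  linarith

theorem IsIsotropicDensity.ball_subset_superlevel {n : ℕ} (hn : 0 < n)
    {f : EuclideanSpace ℝ (Fin n) → ℝ} (hf : IsIsotropicDensity f) (hlc : IsLogConcave f)
    {L : ℝ} (hL : 20 ≤ L)
    (htail : ∀ y, 20 ≤ ‖y‖ → f y ≤ exp (11 / 10 * L - ‖y‖ / 3))
    (hsmall : exp (-(2 / 5 * L)) * ((240 * L + 288) * (24 * n) ^ n) ≤ 1 / 4) :
    Metric.ball 0 (1 / (40 * L)) ⊆ {y | exp (-(2 * L)) ≤ f y} := by
  intro p hp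
  by_contra hpK
  set K : Set (EuclideanSpace ℝ (Fin n)) := {y | exp (-(2 * L)) ≤ f y} with hK
  have hconv : Convex ℝ K := hlc.convex_superlevel (exp_pos _)
  have hp' : p ∉ interior K := fun h => hpK (interior_subset h)
  obtain ⟨g, hg⟩ := geometric_hahn_banach_open_point hconv.interior isOpen_interior hp'
  set v := (InnerProductSpace.toDual ℝ (EuclideanSpace ℝ (Fin n))).symm g with hv
  have hgv : ∀ y, g y = inner ℝ y v := by
    intro y
    rw [real_inner_comm, hv, InnerProductSpace.toDual_symm_apply]
  have hint : ∀ᵐ y, y ∈ K → y ∈ interior K := by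
    have h0 : ∀ᵐ y, y ∉ frontier K :=
      measure_eq_zero_iff_ae_notMem.1 (hconv.addHaar_frontier volume)
    filter_upwards [h0] with y hy hyK
    by_contra hyi
    exact hy ⟨subset_closure hyK, hyi⟩
  rcases eq_or_ne v 0 with h0 | h0
  · refine hf.not_ae_inner_le hn hL htail hsmall (u := EuclideanSpace.single ⟨0, hn⟩ 1) (by simp) ?_
    filter_upwards [hint] with y hy hyK
    have := hg y (hy hyK)
    simp [hgv, h0] at this
  · have hv0 : 0 < ‖v‖ := norm_pos_iff.2 h0
    refine hf.not_ae_inner_le hn hL htail hsmall (u := ‖v‖⁻¹ • v) ?_ ?_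
    · rw [norm_smul, norm_inv, norm_norm, inv_mul_cancel₀ hv0.ne']
    filter_upwards [hint] with y hy hyK
    have h1 := hg y (hy hyK)
    rw [hgv, hgv] at h1
    have h2 : inner ℝ p v ≤ ‖p‖ * ‖v‖ := real_inner_le_norm p v
    have h3 : ‖p‖ < 1 / (40 * L) := by simpa using hp
    rw [real_inner_smul_right, inv_mul_le_iff₀ hv0]
    nlinarith

theorem nat_mul_le_mul_log {n : ℕ} (hn : 2 ≤ n) : (n : ℝ) ≤ 3 / 2 * (n * log n) := by
  have hlog : log 2 ≤ log n := log_le_log (by norm_num) (by exact_mod_cast hn)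
  have := Real.log_two_gt_d9
  have hn0 : (0 : ℝ) ≤ n := by positivity
  nlinarith

theorem exp_mul_polynomial_le_quarter {n : ℕ} (hn : 2 ≤ n) {L : ℝ}
    (hL : 1000 * (n * log n) ≤ L) :
    exp (-(2 / 5 * L)) * ((240 * L + 288) * (24 * n) ^ n) ≤ 1 / 4 := by
  have hn2 : (2 : ℝ) ≤ n := by exact_mod_cast hn
  have hnl := nat_mul_le_mul_log hn
  have h1 : 240 * L + 288 ≤ exp (L / 20) * exp (L / 20) := by
    have h := quadratic_le_exp_of_nonneg (x := L / 20) (by linarith)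
    have h' : 34 * (L / 20) ≤ exp (L / 20) := by nlinarith
    nlinarith [mul_self_le_mul_self (by linarith) h']
  have h2 : (24 * (n : ℝ)) ^ n ≤ exp (L / 20) := by
    rw [← exp_log (by positivity : (0 : ℝ) < (24 * (n : ℝ)) ^ n), exp_le_exp, log_pow,
      log_mul (by norm_num) (by positivity)]
    have h24 : log 24 ≤ 23 := by linarith [log_le_sub_one_of_pos (by norm_num : (0 : ℝ) < 24)]
    nlinarith
  have h3 : exp (-(L / 4)) ≤ 1 / 4 := by
    have h := add_one_le_exp (L / 4)
    rw [exp_neg, inv_le_comm₀ (exp_pos _) (by norm_num)]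
    linarith
  calc exp (-(2 / 5 * L)) * ((240 * L + 288) * (24 * n) ^ n)
      ≤ exp (-(2 / 5 * L)) * (exp (L / 20) * exp (L / 20) * exp (L / 20)) := by gcongr
    _ = exp (-(L / 4)) := by
      rw [← exp_add, ← exp_add, ← exp_add]
      congr 1
      ring
    _ ≤ 1 / 4 := h3

theorem one_lt_ball_mass {n : ℕ} (hn : 2 ≤ n) {L : ℝ} (hL : 1000 * (n * log n) ≤ L) :
    1 < (1 / (160 * L) / n) ^ n * (exp (L / 4) / 2) := by
  have hn2 : (2 : ℝ) ≤ n := by exact_mod_cast hn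
  have hn0 : (0 : ℝ) < n := by linarith
  have hnl := nat_mul_le_mul_log hn
  have hL0 : 0 < L := by linarith
  have hlogL : log L ≤ log 100 + log n + L / (100 * n) := by
    have h : log (L / (100 * n)) ≤ L / (100 * n) := by
      linarith [log_le_sub_one_of_pos (by positivity : 0 < L / (100 * n))]
    rw [log_div hL0.ne' (by positivity), log_mul (by norm_num) hn0.ne'] at h
    linarith
  have hmulL : n * (L / (100 * n)) = L / 100 := by field_simp
  have h160 : log 160 ≤ 10 := by
    rw [log_le_iff_le_exp (by norm_num)]
    have h10 : exp 10 = exp 5 * exp 5 := by rw [← exp_add]; norm_num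
    have h5 := quadratic_le_exp_of_nonneg (x := 5) (by norm_num)
    nlinarith
  have h100 : log 100 ≤ 10 := (log_le_log (by norm_num) (by norm_num)).trans h160
  have h2 : log 2 ≤ 1 := by linarith [log_le_sub_one_of_pos (by norm_num : (0 : ℝ) < 2)]
  have hnlogL : n * log L ≤ n * (log 100 + log n + L / (100 * n)) := by gcongr
  rw [← log_pos_iff (by positivity), log_mul (by positivity) (by positivity), log_pow,
    log_div (by positivity) hn0.ne', log_div (by norm_num) (by positivity), log_one,
    log_mul (by norm_num) hL0.ne', log_div (by positivity) (by norm_num), log_exp]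
  have hn160 : n * log 160 ≤ n * 10 := by gcongr
  have hn100 : n * log 100 ≤ n * 10 := by gcongr
  nlinarith

theorem IsLogConcave.exp_div_two_le_of_mem_ball {n : ℕ} {f : EuclideanSpace ℝ (Fin n) → ℝ}
    (hlc : IsLogConcave f) {L r : ℝ}
    (hball : Metric.ball 0 r ⊆ {y | exp (-(2 * L)) ≤ f y})
    {x z : EuclideanSpace ℝ (Fin n)} (hx : exp L / 2 ≤ f x)
    (hz : z ∈ Metric.ball ((3 / 4 : ℝ) • x) (r / 4)) : exp (L / 4) / 2 ≤ f z := by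
  set y := (4 : ℝ) • (z - (3 / 4 : ℝ) • x) with hy
  have hyK : exp (-(2 * L)) ≤ f y := by
    apply hball
    rw [mem_ball_zero_iff, hy, norm_smul]
    rw [mem_ball_iff_norm] at hz
    norm_num
    linarith
  have hzy : (1 / 4 : ℝ) • y + (3 / 4 : ℝ) • x = z := by
    rw [hy, smul_smul]
    norm_num
  have h := hlc.2 y x (1 / 4) (3 / 4) (by norm_num) (by norm_num) (by norm_num)
  rw [hzy] at h
  refine le_trans ?_ h
  have h1 : exp (-(L / 2)) ≤ f y ^ (1 / 4 : ℝ) := by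
    refine le_trans (le_of_eq ?_) (rpow_le_rpow (exp_pos _).le hyK (by norm_num))
    rw [← exp_mul]
    congr 1
    ring
  have h2 : exp (3 / 4 * L) / 2 ≤ f x ^ (3 / 4 : ℝ) := by
    refine le_trans ?_ (rpow_le_rpow (by positivity) hx (by norm_num))
    rw [div_rpow (exp_pos _).le (by norm_num), ← exp_mul, mul_comm L]
    gcongr
    conv_rhs => rw [← rpow_one (2 : ℝ)]
    exact rpow_le_rpow_of_exponent_le (by norm_num) (by norm_num)
  calc exp (L / 4) / 2 = exp (-(L / 2)) * (exp (3 / 4 * L) / 2) := by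
        rw [← mul_div_assoc, ← exp_add]
        congr 2
        ring
    _ ≤ _ := mul_le_mul h1 h2 (by positivity) (rpow_nonneg (hlc.1 y) _)

/-- An isotropic log-concave density exceeds `exp (1000 n log n)` only with small probability. -/
theorem IsIsotropicDensity.exists_quantile_le {n : ℕ} (hn : 2 ≤ n)
    {f : EuclideanSpace ℝ (Fin n) → ℝ} (hf : IsIsotropicDensity f) (hlc : IsLogConcave f) :
    ∃ M : ℝ, 1 ≤ M ∧ log M ≤ 1000 * (n * log n) ∧
      ∫ y, (Set.Ioi M).indicator id (f y) ≤ 1 / 4 := by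
  classical
  have hex := hf.exists_integral_indicator_le
  set k := Nat.find hex with hk
  have hkq := Nat.find_spec hex
  rw [← hk] at hkq
  have hM1 : (1 : ℝ) ≤ 2 ^ k := one_le_pow₀ (by norm_num)
  refine ⟨2 ^ k, hM1, ?_, hkq⟩
  by_contra! hlt
  set L := log ((2 : ℝ) ^ k) with hL
  have hML : exp L = 2 ^ k := exp_log (by positivity)
  have hn2 : (2 : ℝ) ≤ n := by exact_mod_cast hn
  have hnl := nat_mul_le_mul_log hn
  have hk0 : k ≠ 0 := by
    rintro h0
    rw [hL, h0, pow_zero, log_one] at hlt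
    linarith
  have hx0 : ∃ x, exp L / 2 ≤ f x := by
    by_contra! hall
    refine Nat.find_min hex (Nat.sub_one_lt hk0) ?_
    have hzero : (fun y => (Set.Ioi ((2 : ℝ) ^ (k - 1))).indicator id (f y)) = fun _ => 0 := by
      funext y
      refine Set.indicator_of_notMem (fun hy => ?_) _
      have h := hall y
      rw [hML, ← Nat.sub_one_add_one hk0, pow_succ, mul_div_cancel_right₀ _ two_ne_zero] at h
      exact lt_asymm h hy
    rw [hzero, integral_zero]
    norm_num
  obtain ⟨x, hx⟩ := hx0
  have htail : ∀ y, 20 ≤ ‖y‖ → f y ≤ exp (11 / 10 * L - ‖y‖ / 3) := by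
    intro y hy
    refine (hf.le_mul_exp_of_quantile hlc hM1 hkq hy).trans ?_
    have h4 : (4 : ℝ) ^ n ≤ exp (L / 10) := by
      rw [← exp_log (by positivity : (0 : ℝ) < (4 : ℝ) ^ n), exp_le_exp, log_pow]
      have : log 4 ≤ 3 := by linarith [log_le_sub_one_of_pos (by norm_num : (0 : ℝ) < 4)]
      nlinarith
    calc (2 : ℝ) ^ k * 4 ^ n * exp (-(‖y‖ / 3)) ≤ exp L * exp (L / 10) * exp (-(‖y‖ / 3)) := by
          rw [hML]; gcongr
      _ = exp (11 / 10 * L - ‖y‖ / 3) := by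
          rw [← exp_add, ← exp_add]
          congr 1
          ring
  have hball := hf.ball_subset_superlevel (by omega) hlc (by linarith) htail
    (exp_mul_polynomial_le_quarter hn hlt.le)
  set B := Metric.ball ((3 / 4 : ℝ) • x) (1 / (40 * L) / 4) with hB
  have hlow : ∀ z ∈ B, exp (L / 4) / 2 ≤ f z := fun z hz =>
    hlc.exp_div_two_le_of_mem_ball hball hx hz
  have hmass : exp (L / 4) / 2 * volume.real B ≤ ∫ z in B, f z :=
    setIntegral_ge_of_const_le_real measurableSet_ball measure_ball_lt_top.ne hlow
      hf.integrable.integrableOn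
  have hle : ∫ z in B, f z ≤ 1 := by
    rw [← hf.integral_eq_one]
    exact setIntegral_le_integral hf.integrable (ae_of_all _ hf.nonneg)
  have hL0 : 0 < L := by linarith
  have hvol := volume_ball_ge hn ((3 / 4 : ℝ) • x)
    (by positivity : 0 ≤ 1 / (40 * L) / 4)
  rw [← hB, show 1 / (40 * L) / 4 = 1 / (160 * L) by field_simp; norm_num] at hvol
  have hgt := one_lt_ball_mass hn hlt.le
  have hfin := mul_le_mul_of_nonneg_right hvol (by positivity : 0 ≤ exp (L / 4) / 2)
  linarith

/-- **Lemma 7.4.** Pointwise tail bound for isotropic log-concave densities: for `n ≥ 2`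
and `|x| ≥ e¹⁵ n log n` one has `f(x) < exp(-|x|/e¹⁵)`. -/
theorem isotropic_logconcave_tail
    (n : ℕ) (hn : 2 ≤ n)
    (f : EuclideanSpace ℝ (Fin n) → ℝ)
    (hf0 : ∀ x, 0 ≤ f x) (hf1 : ∫ x, f x = 1)
    (hflc : IsLogConcave f)
    (hmean : densMean n f = 0) (hcov : densCov n f = 1) :
    ∀ x : EuclideanSpace ℝ (Fin n),
      Real.exp 15 * n * Real.log n ≤ ‖x‖ → f x < Real.exp (-(‖x‖ / Real.exp 15)) := by
  intro x hx
  have hf := isIsotropicDensity_of_densMean_densCov hf0 hf1 hmean hcov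
  obtain ⟨M, hM1, hMlog, hMq⟩ := hf.exists_quantile_le hn hflc
  have hn2 : (2 : ℝ) ≤ n := by exact_mod_cast hn
  have hnl := nat_mul_le_mul_log hn
  have he : (32768 : ℝ) ≤ exp 15 := by
    have h := pow_le_pow_left₀ (by norm_num)
      (by linarith [add_one_le_exp (1 : ℝ)] : (2 : ℝ) ≤ exp 1) 15
    rw [← exp_nat_mul] at h
    norm_num at h
    exact h
  have hR : 32768 * (n * log n) ≤ ‖x‖ := by
    refine le_trans ?_ hx
    rw [mul_assoc]
    have : 0 ≤ n * log n := by linarith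
    gcongr
  refine (hf.le_mul_exp_of_quantile hflc hM1 hMq (by linarith)).trans_lt ?_
  have hM0 : 0 < M := by linarith
  have h4 : log 4 ≤ 3 := by linarith [log_le_sub_one_of_pos (by norm_num : (0 : ℝ) < 4)]
  have hdiv : ‖x‖ / exp 15 ≤ ‖x‖ / 12 := by gcongr; linarith
  have heq : M * 4 ^ n * exp (-(‖x‖ / 3)) = exp (log M + n * log 4 - ‖x‖ / 3) := by
    rw [sub_eq_add_neg, exp_add, exp_add, exp_log hM0, ← log_pow, exp_log (by positivity)]
  rw [heq, exp_lt_exp]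
  nlinarith
end
end

section
/- Let 0 < ε < 1/2 and let f(x) = (1/Z)·exp(−V(x)) be an ε-approximately log-concave probability density on ℝⁿ, where V : ℝⁿ → [0,∞) satisfies V* := min_{x∈ℝⁿ} V(x) = 0. Then for every x ∈ ℝⁿ: ‖x − μ(f)‖_{Cov(f)^{-1}} ≤ (e¹⁵/ε²)·( V(x) − V* + 1/ε² + 7n(1 + log(n/ε)) ). -/
open MeasureTheory ProbabilityTheory Real

noncomputable section

/-- Contracting towards `x` decreases an approximately log-concave density by at most a factor
controlled by the potential at `x`. -/
theorem ApproxLogConcave.mul_le_comp_contraction {E : Type*} [AddCommMonoid E] [SMul ℝ E]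
    {ε Z : ℝ} (hε : 0 < ε) (hZ : 0 < Z) {V : E → ℝ} (hV0 : ∀ x, 0 ≤ V x)
    (hf : ApproxLogConcave ε fun x => Z⁻¹ * Real.exp (-V x))
    {s : ℝ} (hs0 : 0 ≤ s) (hs1 : s ≤ 1) (x y : E) :
    ε ^ 2 * (ε ^ 2 * Real.exp (-V x)) ^ s * (Z⁻¹ * Real.exp (-V y)) ≤
      Z⁻¹ * Real.exp (-V ((1 - s) • y + s • x)) := by
  obtain ⟨g, ⟨hg0, hg⟩, hfg⟩ := hf
  have hmul : ∀ z, ε * (Z⁻¹ * Real.exp (-V z)) ≤ g z := fun z => by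
    have h := mul_le_mul_of_nonneg_left (hfg z).2 hε.le
    rwa [← mul_assoc ε (1 / ε), mul_one_div_cancel hε.ne', one_mul] at h
  have hgy : 0 < g y := lt_of_lt_of_le (by positivity) (hmul y)
  have hgx : ε ^ 2 * Real.exp (-V x) * g y ≤ g x := by
    refine le_trans ?_ (hmul x)
    have h1 : ε * g y ≤ Z⁻¹ := (hfg y).1.trans <|
      mul_le_of_le_one_right (by positivity) (Real.exp_le_one_iff.2 (by linarith [hV0 y]))
    calc ε ^ 2 * Real.exp (-V x) * g y = ε * Real.exp (-V x) * (ε * g y) := by ring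
      _ ≤ ε * Real.exp (-V x) * Z⁻¹ := by gcongr
      _ = _ := by ring
  have hcontr : (ε ^ 2 * Real.exp (-V x)) ^ s * g y ≤ g ((1 - s) • y + s • x) := by
    refine le_trans ?_ (hg y x (1 - s) s (by linarith) hs0 (by ring))
    calc (ε ^ 2 * Real.exp (-V x)) ^ s * g y
        = g y ^ (1 - s) * (ε ^ 2 * Real.exp (-V x) * g y) ^ s := by
          rw [Real.mul_rpow (by positivity) hgy.le, mul_left_comm, ← Real.rpow_add hgy]
          simp
      _ ≤ _ := by gcongr
  calc ε ^ 2 * (ε ^ 2 * Real.exp (-V x)) ^ s * (Z⁻¹ * Real.exp (-V y))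
      = ε * ((ε ^ 2 * Real.exp (-V x)) ^ s * (ε * (Z⁻¹ * Real.exp (-V y)))) := by ring
    _ ≤ ε * ((ε ^ 2 * Real.exp (-V x)) ^ s * g y) := by gcongr; exact hmul y
    _ ≤ ε * g ((1 - s) • y + s • x) := by gcongr
    _ ≤ _ := (hfg _).1

/-- If a probability density loses at most a factor `κ` under the contraction by `1 - s`
towards `x`, then the second moment of a centred affine function `h` controls `h x`. -/
theorem sq_le_second_moment_of_contraction {E : Type*} [NormedAddCommGroup E]
    [NormedSpace ℝ E] [FiniteDimensional ℝ E] [MeasurableSpace E] [BorelSpace E]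
    (μ : Measure E) [μ.IsAddHaarMeasure] {f h : E → ℝ} {x : E} {κ s : ℝ}
    (hκ : 0 ≤ κ) (hs1 : s < 1)
    (hh : ∀ y, h ((1 - s) • y + s • x) = (1 - s) * h y + s * h x)
    (hf : ∀ y, κ * f y ≤ f ((1 - s) • y + s • x))
    (hf1 : ∫ y, f y ∂μ = 1) (hfh : ∫ y, f y * h y ∂μ = 0)
    (hi0 : Integrable f μ) (hi1 : Integrable (fun y => f y * h y) μ)
    (hi2 : Integrable (fun y => f y * h y ^ 2) μ) (hS : 0 ≤ ∫ y, f y * h y ^ 2 ∂μ) :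
    κ * (1 - s) ^ Module.finrank ℝ E * s ^ 2 * h x ^ 2 ≤ ∫ y, f y * h y ^ 2 ∂μ := by
  have hl : 0 < 1 - s := by linarith
  set F : E → ℝ := fun y => f y * h y ^ 2 with hF
  set S := ∫ y, F y ∂μ with hSdef
  have hiT : Integrable (fun y => F ((1 - s) • y + s • x)) μ :=
    (hi2.comp_add_right (s • x)).comp_smul hl.ne'
  have hT : ∫ y, F ((1 - s) • y + s • x) ∂μ = ((1 - s) ^ Module.finrank ℝ E)⁻¹ * S := by
    rw [Measure.integral_comp_smul μ (fun y => F (y + s • x)) (1 - s),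
      integral_add_right_eq_self F, abs_of_pos (by positivity), smul_eq_mul]
  have hi12 : Integrable (fun y => (1 - s) ^ 2 * F y + (2 * (1 - s) * s * h x) * (f y * h y)) μ :=
    (hi2.const_mul _).add (hi1.const_mul _)
  have hi : Integrable (fun y => (1 - s) ^ 2 * F y + (2 * (1 - s) * s * h x) * (f y * h y)
      + (s * h x) ^ 2 * f y) μ := hi12.add (hi0.const_mul _)
  have hle : κ * ∫ y, ((1 - s) ^ 2 * F y + (2 * (1 - s) * s * h x) * (f y * h y)
      + (s * h x) ^ 2 * f y) ∂μ ≤ ∫ y, F ((1 - s) • y + s • x) ∂μ := by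
    rw [← integral_const_mul]
    refine integral_mono (hi.const_mul κ) hiT fun y => ?_
    simp only [hF, hh]
    calc _ = κ * f y * ((1 - s) * h y + s * h x) ^ 2 := by ring
      _ ≤ _ := mul_le_mul_of_nonneg_right (hf y) (sq_nonneg _)
  rw [integral_add hi12 (hi0.const_mul _),
    integral_add (hi2.const_mul _) (hi1.const_mul _), integral_const_mul, integral_const_mul,
    integral_const_mul, hfh, hf1, hT, ← hSdef] at hle
  have hP : 0 < (1 - s) ^ Module.finrank ℝ E := by positivity
  calc κ * (1 - s) ^ Module.finrank ℝ E * s ^ 2 * h x ^ 2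
      = (1 - s) ^ Module.finrank ℝ E * (κ * (s * h x) ^ 2) := by ring
    _ ≤ (1 - s) ^ Module.finrank ℝ E * (((1 - s) ^ Module.finrank ℝ E)⁻¹ * S) := by
        refine mul_le_mul_of_nonneg_left (le_trans ?_ hle) hP.le
        gcongr
        nlinarith [mul_nonneg (sq_nonneg (1 - s)) hS]
    _ = S := by rw [← mul_assoc, mul_inv_cancel₀ hP.ne', one_mul]

/-- A density whose covariance matrix is positive definite has integrable second moments. -/
theorem integrable_mul_coord_mul_coord {n : ℕ} {p : EuclideanSpace ℝ (Fin n) → ℝ}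
    (hp0 : ∀ x, 0 ≤ p x) (hp : Integrable p) (hcov : (densCov n p).PosDef) (i j : Fin n) :
    Integrable fun x => p x * ((x i - densMean n p i) * (x j - densMean n p j)) := by
  have hdiag : ∀ k, Integrable fun x : EuclideanSpace ℝ (Fin n) =>
      p x * ((x k - densMean n p k) * (x k - densMean n p k)) := fun k => by
    by_contra hk
    have h := hcov.diag_pos (i := k)
    rw [densCov, Matrix.of_apply, integral_undef hk] at h
    exact lt_irrefl _ h
  refine ((hdiag i).add (hdiag j)).mono'
    (hp.aestronglyMeasurable.mul (Continuous.aestronglyMeasurable (by fun_prop)))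
    (Filter.Eventually.of_forall fun x => ?_)
  rw [norm_mul, Real.norm_of_nonneg (hp0 x), Pi.add_apply, ← mul_add]
  refine mul_le_mul_of_nonneg_left ?_ (hp0 x)
  rw [Real.norm_eq_abs, abs_le]
  constructor <;> nlinarith [sq_nonneg (x i - densMean n p i + (x j - densMean n p j)),
    sq_nonneg (x i - densMean n p i - (x j - densMean n p j)),
    sq_nonneg (x i - densMean n p i), sq_nonneg (x j - densMean n p j)]

theorem integrable_mul_coord {n : ℕ} {p : EuclideanSpace ℝ (Fin n) → ℝ}
    (hp0 : ∀ x, 0 ≤ p x) (hp : Integrable p) (hcov : (densCov n p).PosDef) (i : Fin n) :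
    Integrable fun x => p x * (x i - densMean n p i) := by
  refine (hp.add (integrable_mul_coord_mul_coord hp0 hp hcov i i)).mono'
    (hp.aestronglyMeasurable.mul (Continuous.aestronglyMeasurable (by fun_prop)))
    (Filter.Eventually.of_forall fun x => ?_)
  rw [norm_mul, Real.norm_of_nonneg (hp0 x), Pi.add_apply, ← mul_one_add]
  refine mul_le_mul_of_nonneg_left ?_ (hp0 x)
  rw [Real.norm_eq_abs, abs_le]
  constructor <;> nlinarith [sq_nonneg (x i - densMean n p i + 1),
    sq_nonneg (x i - densMean n p i - 1), sq_nonneg (x i - densMean n p i)]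

theorem integral_mul_coord_eq_zero {n : ℕ} {p : EuclideanSpace ℝ (Fin n) → ℝ}
    (hp0 : ∀ x, 0 ≤ p x) (hp : Integrable p) (hp1 : ∫ x, p x = 1)
    (hcov : (densCov n p).PosDef) (i : Fin n) :
    ∫ x, p x * (x i - densMean n p i) = 0 := by
  have hc : ∀ k, Integrable fun x : EuclideanSpace ℝ (Fin n) => p x * x k := fun k => by
    refine ((integrable_mul_coord hp0 hp hcov k).add
      (hp.mul_const (densMean n p k))).congr (Filter.Eventually.of_forall fun x => ?_)
    simp only [Pi.add_apply]
    ring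
  have hmean : densMean n p i = ∫ x, p x * x i := by
    have hv : Integrable fun x : EuclideanSpace ℝ (Fin n) => p x • x := by
      have hsum : Integrable fun x : EuclideanSpace ℝ (Fin n) => ∑ k, ‖p x * x k‖ :=
        integrable_finsetSum _ fun k _ => (hc k).norm
      refine hsum.mono' (hp.aestronglyMeasurable.smul continuous_id.aestronglyMeasurable)
        (Filter.Eventually.of_forall fun x => ?_)
      have hx : p x • x = ∑ k, EuclideanSpace.single k (p x * x k) := by
        ext l
        simp [Pi.single_apply]
      rw [hx]
      exact (norm_sum_le _ _).trans (by simp)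
    have h := (EuclideanSpace.proj (𝕜 := ℝ) i).integral_comp_comm hv
    simpa [densMean] using h.symm
  simp only [mul_sub]
  rw [integral_sub (hc i) (hp.mul_const _), integral_mul_const, hp1, hmean]
  ring

/-- First and second moments of a centred linear functional of a density with positive definite
covariance. -/
theorem moments_centred_linear {n : ℕ} {p : EuclideanSpace ℝ (Fin n) → ℝ}
    (hp0 : ∀ x, 0 ≤ p x) (hp : Integrable p) (hp1 : ∫ x, p x = 1)
    (hcov : (densCov n p).PosDef) (θ : Fin n → ℝ) :
    (Integrable (fun x => p x * ∑ i, θ i * (x i - densMean n p i)) ∧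
      ∫ x, p x * ∑ i, θ i * (x i - densMean n p i) = 0) ∧
    (Integrable (fun x => p x * (∑ i, θ i * (x i - densMean n p i)) ^ 2) ∧
      ∫ x, p x * (∑ i, θ i * (x i - densMean n p i)) ^ 2 =
        ∑ i, ∑ j, θ i * θ j * densCov n p i j) := by
  have e1 : (fun x : EuclideanSpace ℝ (Fin n) => p x * ∑ i, θ i * (x i - densMean n p i)) =
      fun x => ∑ i, θ i * (p x * (x i - densMean n p i)) := by
    funext x
    rw [Finset.mul_sum]
    exact Finset.sum_congr rfl fun i _ => by ring
  have e2 : (fun x : EuclideanSpace ℝ (Fin n) =>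
      p x * (∑ i, θ i * (x i - densMean n p i)) ^ 2) =
      fun x => ∑ i, ∑ j,
        θ i * θ j * (p x * ((x i - densMean n p i) * (x j - densMean n p j))) := by
    funext x
    rw [sq, Finset.sum_mul_sum, Finset.mul_sum]
    refine Finset.sum_congr rfl fun i _ => ?_
    rw [Finset.mul_sum]
    exact Finset.sum_congr rfl fun j _ => by ring
  have i1 := fun i => (integrable_mul_coord hp0 hp hcov i).const_mul (θ i)
  have i2 := fun i j =>
    (integrable_mul_coord_mul_coord hp0 hp hcov i j).const_mul (θ i * θ j)
  rw [e1, e2]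
  refine ⟨⟨integrable_finsetSum _ fun i _ => i1 i, ?_⟩,
    ⟨integrable_finsetSum _ fun i _ => integrable_finsetSum _ fun j _ => i2 i j, ?_⟩⟩
  · rw [integral_finsetSum _ fun i _ => i1 i]
    exact Finset.sum_eq_zero fun i _ => by
      rw [integral_const_mul, integral_mul_coord_eq_zero hp0 hp hp1 hcov, mul_zero]
  · rw [integral_finsetSum _ fun i _ => integrable_finsetSum _ fun j _ => i2 i j]
    refine Finset.sum_congr rfl fun i _ => ?_
    rw [integral_finsetSum _ fun j _ => i2 i j]
    exact Finset.sum_congr rfl fun j _ => by rw [integral_const_mul, densCov, Matrix.of_apply]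

/-- A bound on the Mahalanobis distance that is linear in the potential and the dimension. -/
theorem mahal_le_of_approxLogConcave {n : ℕ} (hn : 1 ≤ n) {ε : ℝ} (hε : 0 < ε) (hε1 : ε ≤ 1)
    {V : EuclideanSpace ℝ (Fin n) → ℝ} {Z : ℝ} (hZ : 0 < Z) (hV0 : ∀ x, 0 ≤ V x)
    (hf1 : ∫ x, Z⁻¹ * Real.exp (-V x) = 1)
    (hflc : ApproxLogConcave ε fun x => Z⁻¹ * Real.exp (-V x))
    (hcov : (densCov n fun x => Z⁻¹ * Real.exp (-V x)).PosDef)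
    (x : EuclideanSpace ℝ (Fin n)) :
    mahal n (densCov n fun y => Z⁻¹ * Real.exp (-V y))⁻¹
        (x - densMean n fun y => Z⁻¹ * Real.exp (-V y))
      ≤ 4 / ε * (V x + n - 2 * Real.log ε) := by
  set p : EuclideanSpace ℝ (Fin n) → ℝ := fun x => Z⁻¹ * Real.exp (-V x) with hpdef
  have hp0 : ∀ x, 0 ≤ p x := fun x => by positivity
  have hp : Integrable p := by
    by_contra h
    rw [integral_undef h] at hf1
    exact zero_ne_one hf1
  set A := densCov n p with hA
  set m := densMean n p with hm
  set L := V x + n - 2 * Real.log ε with hL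
  have hn' : (1 : ℝ) ≤ n := by exact_mod_cast hn
  have hlog : Real.log ε ≤ 0 := Real.log_nonpos hε.le hε1
  have hnL : (n : ℝ) ≤ L := by linarith [hV0 x]
  have hL1 : 1 ≤ L := hn'.trans hnL
  set w : Fin n → ℝ := fun i => x i - m i with hw
  set θ : Fin n → ℝ := Matrix.mulVec A⁻¹ w with hθ
  set h : EuclideanSpace ℝ (Fin n) → ℝ := fun y => ∑ i, θ i * (y i - m i) with hh
  obtain ⟨⟨hi1, hfh⟩, hi2, hS⟩ := moments_centred_linear hp0 hp hf1 hcov θ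
  have hSx : ∑ i, ∑ j, θ i * θ j * A i j = h x := by
    have hAθ : A.mulVec θ = w := by
      rw [hθ, Matrix.mulVec_mulVec, Matrix.mul_nonsing_inv _
        ((Matrix.isUnit_iff_isUnit_det _).1 hcov.isUnit), Matrix.one_mulVec]
    simp only [hh]
    refine Finset.sum_congr rfl fun i _ => ?_
    have : x i - m i = A.mulVec θ i := by rw [hAθ]
    rw [this, Matrix.mulVec, dotProduct, Finset.mul_sum]
    exact Finset.sum_congr rfl fun j _ => by ring
  have hmahal : mahal n A⁻¹ (x - m) = Real.sqrt (h x) := by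
    rw [mahal]
    congr 1
    simp only [hh, hθ, Matrix.mulVec, dotProduct, Finset.sum_mul]
    rw [Finset.sum_comm]
    refine Finset.sum_congr rfl fun i _ => Finset.sum_congr rfl fun j _ => ?_
    have hsymm : A⁻¹ j i = A⁻¹ i j := by simpa using hcov.inv.isHermitian.apply i j
    simp only [hw, PiLp.sub_apply, hsymm]
    ring
  have hSint : ∫ y, p y * h y ^ 2 = h x := hS.trans hSx
  have hx0 : 0 ≤ h x := hSint ▸ integral_nonneg fun y => mul_nonneg (hp0 y) (sq_nonneg _)
  set s : ℝ := 1 / (2 * L) with hs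
  have hs0 : 0 < s := by positivity
  have hsL : s * L = 1 / 2 := by rw [hs]; field_simp
  have hs1 : s ≤ 1 / 2 := by nlinarith
  have haff : ∀ y, h ((1 - s) • y + s • x) = (1 - s) * h y + s * h x := fun y => by
    simp only [hh, Finset.mul_sum, ← Finset.sum_add_distrib]
    refine Finset.sum_congr rfl fun i _ => ?_
    simp only [PiLp.add_apply, PiLp.smul_apply, smul_eq_mul]
    ring
  have key := sq_le_second_moment_of_contraction volume
    (κ := ε ^ 2 * (ε ^ 2 * Real.exp (-V x)) ^ s) (by positivity) (by linarith) haff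
    (fun y => hflc.mul_le_comp_contraction hε hZ hV0 hs0.le (by linarith) x y)
    hf1 hfh hp hi1 hi2 (hSint ▸ hx0)
  rw [hSint, finrank_euclideanSpace_fin] at key
  have hpow : (1 : ℝ) / 2 ≤ (1 - s) ^ n := by
    have hb := one_add_mul_le_pow (a := -s) (by linarith) n
    rw [← sub_eq_add_neg] at hb
    nlinarith
  have hκ : (1 : ℝ) / 2 ≤ (ε ^ 2 * Real.exp (-V x)) ^ s := by
    rw [Real.rpow_def_of_pos (by positivity), Real.log_mul (by positivity) (by positivity),
      Real.log_pow, Real.log_exp]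
    refine le_trans ?_ (Real.add_one_le_exp _)
    push_cast
    nlinarith
  have hkey : ε ^ 2 * (1 / 2) * (1 / 2) * s ^ 2 * h x ^ 2 ≤ h x := by
    refine le_trans ?_ key
    gcongr
  have hle : h x ≤ (4 / ε * L) ^ 2 := by
    rcases hx0.eq_or_lt with h0 | hpos
    · rw [← h0]; positivity
    · have h1 : ε ^ 2 * (1 / 2) * (1 / 2) * s ^ 2 * h x ≤ 1 := by
        refine le_of_mul_le_mul_right ?_ hpos
        linarith
      have h2 : (4 / ε * L) ^ 2 * (ε ^ 2 * (1 / 2) * (1 / 2) * s ^ 2) = 1 := by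
        rw [hs]; field_simp; norm_num
      calc h x = (4 / ε * L) ^ 2 * (ε ^ 2 * (1 / 2) * (1 / 2) * s ^ 2 * h x) := by
            rw [← mul_assoc, h2, one_mul]
        _ ≤ _ := mul_le_of_le_one_right (by positivity) h1
  rw [hmahal]
  exact Real.sqrt_le_iff.2 ⟨by positivity, hle⟩

/-- **Lemma 7.6.** For an `ε`-approximately log-concave density `f = Z⁻¹ exp(-V)` with
`V* = min V = 0`, the Mahalanobis distance of `x` from the mean is bounded by the
potential value: `‖x - μ(f)‖_{Cov(f)⁻¹} ≤ (e¹⁵/ε²)(V(x) - V* + 1/ε² + 7n(1 + log(n/ε)))`. -/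
theorem mahalanobis_bounded_by_potential
    (n : ℕ) (ε : ℝ) (hε : ε ∈ Set.Ioo (0 : ℝ) (1 / 2))
    (V : EuclideanSpace ℝ (Fin n) → ℝ) (Z : ℝ) (hZ : 0 < Z)
    (hV0 : ∀ x, 0 ≤ V x) (hVmin : ⨅ x, V x = 0)
    (hf1 : ∫ x, Z⁻¹ * Real.exp (-V x) = 1)
    (hflc : ApproxLogConcave ε fun x => Z⁻¹ * Real.exp (-V x))
    (hcov : (densCov n fun x => Z⁻¹ * Real.exp (-V x)).PosDef) :
    ∀ x : EuclideanSpace ℝ (Fin n),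
      mahal n (densCov n fun y => Z⁻¹ * Real.exp (-V y))⁻¹
          (x - densMean n fun y => Z⁻¹ * Real.exp (-V y))
        ≤ Real.exp 15 / ε ^ 2
            * (V x - (⨅ y, V y) + 1 / ε ^ 2 + 7 * n * (1 + Real.log (n / ε))) := by
  intro x
  obtain ⟨hε0, hε2⟩ := hε
  have hsq : (1 : ℝ) ≤ 1 / ε ^ 2 := by
    rw [le_div_iff₀ (by positivity)]
    nlinarith
  rw [hVmin, sub_zero]
  rcases Nat.eq_zero_or_pos n with rfl | hn
  · have h0 : 0 ≤ V x + 1 / ε ^ 2 := add_nonneg (hV0 x) (by positivity)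
    simp only [mahal, Finset.univ_eq_empty, Finset.sum_empty, Real.sqrt_zero, Nat.cast_zero,
      mul_zero, zero_mul, add_zero]
    positivity
  · refine (mahal_le_of_approxLogConcave hn hε0 (by linarith) hZ hV0 hf1 hflc hcov x).trans ?_
    have hn' : (1 : ℝ) ≤ n := by exact_mod_cast hn
    have hlog : -(2 * Real.log ε) ≤ 1 / ε ^ 2 := by
      have h := Real.log_le_sub_one_of_pos (x := 1 / ε ^ 2) (by positivity)
      rw [one_div, Real.log_inv, Real.log_pow] at h
      push_cast at h
      rw [one_div]
      linarith
    have hlogn : 0 ≤ Real.log (n / ε) := Real.log_nonneg <| by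
      rw [le_div_iff₀ hε0]
      linarith
    have hlogε : Real.log ε ≤ 0 := Real.log_nonpos hε0.le (by linarith)
    have hexp : (4 : ℝ) ≤ Real.exp 15 := by linarith [Real.add_one_le_exp (15 : ℝ)]
    have hcoef : 4 / ε ≤ Real.exp 15 / ε ^ 2 := by
      gcongr
      nlinarith
    refine mul_le_mul hcoef ?_ (by linarith [hV0 x]) (by positivity)
    nlinarith [mul_nonneg (zero_le_one.trans hn') hlogn]
end
end

section
/- Let 0 < ε < 1/2 and let f be an isotropic ε-approximately log-concave probability density on ℝ. Then for every s ≤ ε/80, one has ∫_{s}^{∞} (x − s)·f(x) dx > ε/80. -/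
open MeasureTheory Real

noncomputable section

/-- Reflecting a log-concave function on the line gives a log-concave function. -/
lemma IsLogConcave.comp_neg {g : ℝ → ℝ} (hg : IsLogConcave g) :
    IsLogConcave fun x => g (-x) := by
  refine ⟨fun x => hg.1 (-x), fun x y a b ha hb hab => ?_⟩
  have h := hg.2 (-x) (-y) a b ha hb hab
  rwa [show a • (-x) + b • (-y) = -(a • x + b • y) by simp only [smul_eq_mul]; ring] at h

/-- A log-concave function that is at least `1` near the origin and at most `exp (-2)` at a point
of `[1, 3/2]` decays exponentially. -/
lemma IsLogConcave.le_exp_neg {g : ℝ → ℝ} (hg : IsLogConcave g) {x₀ y x : ℝ}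
    (hx₀ : |x₀| ≤ 1 / 20) (hgx₀ : 1 ≤ g x₀) (hy : y ∈ Set.Icc (1 : ℝ) (3 / 2))
    (hgy : g y ≤ exp (-2)) (hx : 20 ≤ x) : g x ≤ exp (-x) := by
  obtain ⟨h1, h2⟩ := abs_le.mp hx₀
  obtain ⟨h3, h4⟩ := hy
  by_contra! hlt
  have hd : 0 < x - x₀ := by linarith
  set b := (y - x₀) / (x - x₀) with hb
  have hb0 : 0 < b := div_pos (by linarith) hd
  have hb1 : b ≤ 1 := (div_le_one hd).2 (by linarith)
  have hbd : b * (x - x₀) = y - x₀ := div_mul_cancel₀ _ hd.ne'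
  have key := hg.2 x₀ x (1 - b) b (by linarith) hb0.le (by ring)
  rw [show (1 - b) • x₀ + b • x = y by simp only [smul_eq_mul]; linarith] at key
  have hpow : exp (-x * b) < g x ^ b := by
    rw [exp_mul]
    exact rpow_lt_rpow (exp_pos _).le hlt hb0
  have hone : 1 ≤ g x₀ ^ (1 - b) := one_le_rpow hgx₀ (by linarith)
  have hle : g x ^ b ≤ g x₀ ^ (1 - b) * g x ^ b :=
    le_mul_of_one_le_left (rpow_nonneg (hg.1 x) b) hone
  have hexp := exp_lt_exp.1 (hpow.trans_le (hle.trans (key.trans hgy)))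
  nlinarith

/-- If the first absolute moment of `f ≥ ε * g` is at most `ε / 20`, then `g` is at most `exp (-2)`
somewhere on `[1, 3/2]`. -/
lemma exists_le_exp_neg_two {ε : ℝ} (hε : 0 < ε) {f g : ℝ → ℝ} (hf0 : ∀ x, 0 ≤ f x)
    (hfg : ∀ x, ε * g x ≤ f x) (hint : Integrable fun x => |x| * f x)
    (hm : ∫ x, |x| * f x ≤ ε / 20) :
    ∃ y ∈ Set.Icc (1 : ℝ) (3 / 2), g y ≤ exp (-2) := by
  by_contra! hlt
  have hexp : (1 : ℝ) / 8 < exp (-2) := by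
    rw [exp_neg, ← one_div]
    refine one_div_lt_one_div_of_lt (exp_pos _) ?_
    have h : exp 2 = exp 1 * exp 1 := by rw [← exp_add]; norm_num
    nlinarith [exp_one_lt_d9, exp_pos 1]
  have hmono : ∫ x, (Set.Icc (1 : ℝ) (3 / 2)).indicator (fun _ => ε * (1 / 8)) x
      ≤ ∫ x, |x| * f x := by
    refine integral_mono ((integrable_indicator_iff measurableSet_Icc).2
      (integrableOn_const (by simp))) hint fun x => ?_
    by_cases hx : x ∈ Set.Icc (1 : ℝ) (3 / 2)
    · simp only [Set.indicator_of_mem hx]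
      have h1 : ε * (1 / 8) ≤ ε * g x :=
        mul_le_mul_of_nonneg_left (hexp.trans (hlt x hx)).le hε.le
      exact (h1.trans (hfg x)).trans
        (le_mul_of_one_le_left (hf0 x) (hx.1.trans (le_abs_self x)))
    · simp only [Set.indicator_of_notMem hx]
      exact mul_nonneg (abs_nonneg x) (hf0 x)
  rw [integral_indicator measurableSet_Icc, setIntegral_const] at hmono
  norm_num [Measure.real] at hmono
  linarith

/-- If a density `f ≤ (1 / ε) * g` has first absolute moment at most `ε / 20`, then `g` is at least
`1` somewhere near the origin. -/
lemma exists_one_le_near_zero {ε : ℝ} (hε : ε ∈ Set.Ioo (0 : ℝ) (1 / 2)) {f g : ℝ → ℝ}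
    (hf0 : ∀ x, 0 ≤ f x) (hf1 : ∫ x, f x = 1) (hfg : ∀ x, f x ≤ (1 / ε) * g x)
    (hint : Integrable fun x => |x| * f x) (hm : ∫ x, |x| * f x ≤ ε / 20) :
    ∃ x₀, |x₀| ≤ 1 / 20 ∧ 1 ≤ g x₀ := by
  obtain ⟨hε0, hε1⟩ := hε
  by_contra! hlt
  set I := Set.Icc (-(ε / 10)) (ε / 10)
  have hind : Integrable (I.indicator fun _ : ℝ => 1 / ε) :=
    (integrable_indicator_iff measurableSet_Icc).2 (integrableOn_const (by simp))
  have hmono : ∫ x, f x ≤ ∫ x, (I.indicator (fun _ => 1 / ε) x + (10 / ε) * (|x| * f x)) := by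
    refine integral_mono (.of_integral_ne_zero (by simp [hf1]))
      (hind.add (hint.const_mul _)) fun x => ?_
    by_cases hx : x ∈ I
    · simp only [Set.indicator_of_mem hx]
      have hx' : |x| ≤ 1 / 20 := (abs_le.2 hx).trans (by linarith)
      have h1 : (1 / ε) * g x ≤ (1 / ε) * 1 :=
        mul_le_mul_of_nonneg_left (hlt x hx').le (by positivity)
      have h2 : 0 ≤ (10 / ε) * (|x| * f x) :=
        mul_nonneg (by positivity) (mul_nonneg (abs_nonneg x) (hf0 x))
      linarith [hfg x]
    · simp only [Set.indicator_of_notMem hx, zero_add]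
      have hx' : ε / 10 ≤ |x| := by
        by_contra! h
        exact hx (abs_le.1 h.le)
      have h1 : 1 ≤ (10 / ε) * |x| := by
        rw [div_mul_eq_mul_div, le_div_iff₀ hε0]
        linarith
      rw [← mul_assoc]
      exact le_mul_of_one_le_left (hf0 x) h1
  rw [integral_add hind (hint.const_mul _), integral_const_mul, hf1,
    integral_indicator measurableSet_Icc, setIntegral_const, volume_real_Icc_of_le (by linarith),
    smul_eq_mul] at hmono
  have h1 : (ε / 10 - -(ε / 10)) * (1 / ε) = 1 / 5 := by field_simp; norm_num
  have h2 : 10 / ε * ∫ x, |x| * f x ≤ 10 / ε * (ε / 20) :=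
    mul_le_mul_of_nonneg_left hm (by positivity)
  have h3 : 10 / ε * (ε / 20) = 1 / 2 := by field_simp; norm_num
  linarith

lemma cube_mul_exp_neg_le {x : ℝ} (hx : 20 ≤ x) :
    x ^ 3 / 10 * exp (-x) ≤ (1 / 8) * (1 + x ^ 2)⁻¹ := by
  have hx0 : 0 < x := by linarith
  have hexp := pow_div_factorial_le_exp x hx0.le 12
  rw [exp_neg, ← div_eq_mul_inv, ← div_eq_mul_inv, div_le_div_iff₀ (exp_pos x) (by positivity)]
  have h7 : (20 : ℝ) ^ 7 ≤ x ^ 7 := by gcongr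
  have h12 : (20 : ℝ) ^ 7 * x ^ 5 ≤ x ^ 12 := by
    calc (20 : ℝ) ^ 7 * x ^ 5 ≤ x ^ 7 * x ^ 5 := by gcongr
      _ = x ^ 12 := by ring
  have h5 : x ^ 3 ≤ x ^ 5 := pow_le_pow_right₀ (by linarith) (by norm_num)
  have hfac : ((Nat.factorial 12 : ℕ) : ℝ) = 479001600 := by norm_num [Nat.factorial]
  rw [hfac] at hexp
  have hpos : 0 < x ^ 5 := by positivity
  nlinarith

/-- The first absolute moment of an isotropic `ε`-approximately log-concave density exceeds
`ε / 20`. -/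
lemma lt_integral_abs_mul {ε : ℝ} (hε : ε ∈ Set.Ioo (0 : ℝ) (1 / 2)) {f : ℝ → ℝ}
    (hf0 : ∀ x, 0 ≤ f x) (hf1 : ∫ x, f x = 1) (hvar : ∫ x, x ^ 2 * f x = 1)
    (hint : Integrable fun x => |x| * f x) (hflc : ApproxLogConcave ε f) :
    ε / 20 < ∫ x, |x| * f x := by
  obtain ⟨g, hg, hfg⟩ := hflc
  by_contra! hm
  obtain ⟨x₀, hx₀, hgx₀⟩ := exists_one_le_near_zero hε hf0 hf1 (fun x => (hfg x).2) hint hm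
  have hε0 := hε.1
  have hdecay : ∀ x, 20 ≤ |x| → g x ≤ exp (-|x|) := by
    intro x hx
    rcases abs_cases x with ⟨h, -⟩ | ⟨h, -⟩
    · obtain ⟨y, hy, hgy⟩ := exists_le_exp_neg_two hε0 hf0 (fun x => (hfg x).1) hint hm
      rw [h] at hx ⊢
      exact hg.le_exp_neg hx₀ hgx₀ hy hgy hx
    · have hint' : Integrable fun x => |x| * f (-x) := by simpa using hint.comp_neg
      have hm' : ∫ x, |x| * f (-x) ≤ ε / 20 := by
        rw [← integral_neg_eq_self] at hm
        simpa using hm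
      obtain ⟨y, hy, hgy⟩ := exists_le_exp_neg_two (g := fun x => g (-x)) hε0
        (fun x => hf0 (-x)) (fun x => (hfg (-x)).1) hint' hm'
      rw [h] at hx ⊢
      simpa using hg.comp_neg.le_exp_neg (x₀ := -x₀) (by simpa using hx₀) (by simpa using hgx₀)
        hy hgy hx
  have hmono : ∫ x, x ^ 2 * f x ≤ ∫ x, ((10 / ε) * (|x| * f x) + (1 / 8) * (1 + x ^ 2)⁻¹) := by
    refine integral_mono (.of_integral_ne_zero (by simp [hvar]))
      ((hint.const_mul _).add (integrable_inv_one_add_sq.const_mul _)) fun x => ?_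
    have hfirst : 0 ≤ |x| * f x := mul_nonneg (abs_nonneg x) (hf0 x)
    simp only
    rcases le_total |x| (10 / ε) with hx | hx
    · have h1 : x ^ 2 * f x ≤ (10 / ε) * (|x| * f x) := by
        rw [← sq_abs, sq, mul_assoc]
        exact mul_le_mul_of_nonneg_right hx hfirst
      have h2 : 0 ≤ (1 / 8) * (1 + x ^ 2)⁻¹ := by positivity
      linarith
    · have h20 : 20 ≤ |x| := by
        refine le_trans ?_ hx
        rw [le_div_iff₀ hε0]
        linarith [hε.2]
      have hinv : 1 / ε ≤ |x| / 10 := by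
        rw [show 10 / ε = 10 * (1 / ε) by ring] at hx
        linarith
      have h1 : f x ≤ |x| / 10 * exp (-|x|) :=
        (hfg x).2.trans (mul_le_mul hinv (hdecay x h20) (hg.1 x) (by positivity))
      have h2 := cube_mul_exp_neg_le h20
      have h3 : x ^ 2 * f x ≤ |x| ^ 3 / 10 * exp (-|x|) := by
        calc x ^ 2 * f x ≤ x ^ 2 * (|x| / 10 * exp (-|x|)) := by gcongr
          _ = |x| ^ 3 / 10 * exp (-|x|) := by rw [← sq_abs]; ring
      rw [sq_abs] at h2
      have h4 : 0 ≤ (10 / ε) * (|x| * f x) := mul_nonneg (by positivity) hfirst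
      linarith
  rw [integral_add (hint.const_mul _) (integrable_inv_one_add_sq.const_mul _),
    integral_const_mul, integral_const_mul, integral_univ_inv_one_add_sq, hvar] at hmono
  have h2 : 10 / ε * ∫ x, |x| * f x ≤ 10 / ε * (ε / 20) :=
    mul_le_mul_of_nonneg_left hm (by positivity)
  have h3 : 10 / ε * (ε / 20) = 1 / 2 := by field_simp; norm_num
  linarith [pi_lt_d2]

/-- **Lemma 7.7.** For an isotropic `ε`-approximately log-concave density `f` on `ℝ` and
any `s ≤ ε/80`, the truncated first moment `∫_s^∞ (x - s) f(x) dx` exceeds `ε/80`. -/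
theorem truncated_first_moment
    (ε : ℝ) (hε : ε ∈ Set.Ioo (0 : ℝ) (1 / 2))
    (f : ℝ → ℝ) (hfmeas : Measurable f) (hf0 : ∀ x, 0 ≤ f x)
    (hf1 : ∫ x, f x = 1) (hmean : ∫ x, x * f x = 0) (hvar : ∫ x, x ^ 2 * f x = 1)
    (hflc : ApproxLogConcave ε f) :
    ∀ s : ℝ, s ≤ ε / 80 → ε / 80 < ∫ x in Set.Ioi s, (x - s) * f x := by
  intro s hs
  have hfi : Integrable f := .of_integral_ne_zero (by simp [hf1])
  have hf2 : Integrable fun x => x ^ 2 * f x := .of_integral_ne_zero (by simp [hvar])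
  have habs : Integrable fun x => |x| * f x := by
    refine (hfi.add hf2).mono' (by fun_prop) (.of_forall fun x => ?_)
    rw [norm_mul, norm_eq_abs, abs_abs, norm_of_nonneg (hf0 x)]
    simp only [Pi.add_apply]
    nlinarith [mul_nonneg (sq_nonneg (|x| - 1)) (hf0 x), sq_abs x,
      mul_nonneg (abs_nonneg x) (hf0 x)]
  have hx1 : Integrable fun x => x * f x :=
    habs.mono' (by fun_prop) (.of_forall fun x => by
      rw [norm_mul, norm_eq_abs, norm_of_nonneg (hf0 x)])
  have hlow := lt_integral_abs_mul hε hf0 hf1 hvar habs hflc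
  have hsub : Integrable fun x => (x - s) * f x := by
    simpa only [sub_mul, Pi.sub_def] using hx1.sub (hfi.const_mul s)
  have hfirst : Integrable fun x => (1 / 2) * (|x| * f x) + (1 / 2) * (x * f x) :=
    (habs.const_mul _).add (hx1.const_mul _)
  have hmono : ∫ x, ((1 / 2) * (|x| * f x) + (1 / 2) * (x * f x) - (ε / 80) * f x)
      ≤ ∫ x, (Set.Ioi s).indicator (fun x => (x - s) * f x) x := by
    refine integral_mono (hfirst.sub (hfi.const_mul _))
      (hsub.indicator measurableSet_Ioi) fun x => ?_
    have hcoef : (1 / 2) * (|x| * f x) + (1 / 2) * (x * f x) - (ε / 80) * f x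
        = ((|x| + x) / 2 - ε / 80) * f x := by ring
    simp only [hcoef]
    by_cases hx : x ∈ Set.Ioi s
    · rw [Set.indicator_of_mem hx]
      refine mul_le_mul_of_nonneg_right ?_ (hf0 x)
      have hx' : s < x := hx
      rcases abs_cases x with ⟨h, h0⟩ | ⟨h, h0⟩ <;> rw [h] <;> linarith [hε.1]
    · rw [Set.indicator_of_notMem hx]
      have hx' : x ≤ s := not_lt.1 hx
      refine mul_nonpos_of_nonpos_of_nonneg ?_ (hf0 x)
      rcases abs_cases x with ⟨h, h0⟩ | ⟨h, h0⟩ <;> rw [h] <;> linarith [hε.1]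
  rw [integral_indicator measurableSet_Ioi,
    integral_sub hfirst (hfi.const_mul _),
    integral_add (habs.const_mul _) (hx1.const_mul _), integral_const_mul, integral_const_mul,
    integral_const_mul, hmean, hf1] at hmono
  linarith
end
end
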